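/- arXiv:2505.19072 — 2 statements merged into one kernel-verified Lean document; each statement's English description precedes it below -/
import Mathlib

section
/- Partitions are identified with their Young diagrams (English convention); for partitions $\mu\subseteq\lambda$ the skew shape $\lambda/\mu$ is the set of boxes of $\lambda$ not in $\mu$. For nonempty finite sets $A,B$ of positive integers write $A\le B$ if $\max A\le\min B$. Let $\mathrm{SVRPP}^n(\lambda/\mu)$ be the set of fillings of the boxes of $\lambda/\mu$ by nonempty subsets of $\{1,\dots,n\}$ that weakly increase (in the sense of $\le$) from left to right along each row and from top to bottom down each column. Let $1\le i\le n-1$ and $T\in\mathrm{SVRPP}^n(\lambda/\mu)$. Let $T^{(i)}$ be the filling obtained by intersecting each entry of $T$ with $\{i,i+1\}$ and discarding the boxes whose intersection is empty. A nonempty column of a filling by nonempty subsets of $\{i,i+1\}$ is called $i$-pure if all its entries are $\{i\}$, $(i+1)$-pure if all its entries are $\{i+1\}$, and mixed otherwise. The $i$-signature of $T$ is the word obtained by writing, from left to right, $+$ for each $i$-pure and $-$ for each $(i+1)$-pure column of $T^{(i)}$. Successively cancelling pairs in which a $-$ immediately precedes a $+$ among the uncancelled symbols yields the reduced $i$-signature,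 which has the form $+\cdots+-\cdots-$; each of its signs corresponds to a column of $T^{(i)}$. A descent of a filling $S$ by nonempty subsets of $\{i,i+1\}$ is a column index $k$ such that, for some row $r$, $\max S(r,k)=i+1$ and $\min S(r,k+1)=i$. A descent $k$ is resolved as follows. (M1) If column $k$ is mixed and column $k+1$ is $i$-pure, let $t$ be the topmost row with $i+1\in S(t,k)$ and $E=S(t,k)$. All entries of column $k$ become $\{i\}$; the entries of column $k+1$ become $\{i\}$ above row $t$, $E$ in row $t$, and $\{i+1\}$ below row $t$. (2M) If column $k$ is $(i+1)$-pure and column $k+1$ is mixed, let $t$ be the bottommost row with $i\in S(t,k+1)$ and $E=S(t,k+1)$. The entries of column $k$ become $\{i\}$ above row $t$, $E$ in row $t$, and $\{i+1\}$ below row $t$; all entries of column $k+1$ become $\{i+1\}$. (21) If column $k$ is $(i+1)$-pure and column $k+1$ is $i$-pure, all entries of column $k$ become $\{i\}$ and all entries of column $k+1$ become $\{i+1\}$. If the reduced $i$-signature of $T$ has no $-$, put $e_i(T)=0$. Otherwise replace every $\{i+1\}$ by $\{i\}$ in the column of $T^{(i)}$ corresponding to the leftmost $-$ of the reduced $i$-signature,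 resolve descents (in any order) until none remains, and let $e_i(T)$ be the unique element of $\mathrm{SVRPP}^n(\lambda/\mu)$ obtained from $T$ by replacing $T^{(i)}$ with the result. Similarly, if the reduced $i$-signature of $T$ has no $+$, put $f_i(T)=0$. Otherwise replace every $\{i\}$ by $\{i+1\}$ in the column corresponding to the rightmost $+$ of the reduced $i$-signature, resolve descents until none remains, and let $f_i(T)$ be the unique element of $\mathrm{SVRPP}^n(\lambda/\mu)$ obtained from $T$ by replacing $T^{(i)}$ with the result. Put $e_i(0)=f_i(0)=0$. Set $\varepsilon_i(T)=\max\{k\ge 0: e_i^k(T)\ne 0\}$ and $\varphi_i(T)=\max\{k\ge 0: f_i^k(T)\ne 0\}$. Then (the operators being well defined) $\varepsilon_i(T)$ equals the number of $-$ signs in the reduced $i$-signature of $T$, and $\varphi_i(T)$ equals the number of $+$ signs in the reduced $i$-signature of $T$. -/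
namespace SetValuedRPP

/-- A filling of boxes `(r, c)` (row `r`, column `c`, both counted from `0`, rows going
downwards) by finite sets; a box that does not belong to the shape carries `∅`. -/
abbrev Filling : Type := ℕ → ℕ → Finset ℕ

/-- The box in row `r` and column `c` lies in the skew shape `lam/mu`. -/
def InSkew (lam mu : YoungDiagram) (r c : ℕ) : Prop :=
  (r, c) ∈ lam ∧ (r, c) ∉ mu

/-- `A ≤ B`; for nonempty sets this is `max A ≤ min B`. -/
def SetLE (A B : Finset ℕ) : Prop :=
  ∀ a ∈ A, ∀ b ∈ B, a ≤ b

/-- Set-valued reverse plane partitions of shape `lam/mu` with entries in `{1, …, n}`. -/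
@[ext]
structure SVRPP (n : ℕ) (lam mu : YoungDiagram) where
  entry : Filling
  eq_empty : ∀ r c, ¬ InSkew lam mu r c → entry r c = ∅
  nonempty : ∀ r c, InSkew lam mu r c → (entry r c).Nonempty
  subset : ∀ r c, entry r c ⊆ Finset.Icc 1 n
  row_le : ∀ r c, InSkew lam mu r c → InSkew lam mu r (c + 1) →
    SetLE (entry r c) (entry r (c + 1))
  col_le : ∀ r c, InSkew lam mu r c → InSkew lam mu (r + 1) c →
    SetLE (entry r c) (entry (r + 1) c)

/-! ### Fillings by nonempty subsets of two letters `a`, `a + 1` -/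

/-- Column `c` of `S` contains the letter `x`. -/
def ColHas (S : Filling) (c x : ℕ) : Prop := ∃ r, x ∈ S r c

/-- Column `c` is nonempty and all its boxes contain `{a}`. -/
def PureLow (a : ℕ) (S : Filling) (c : ℕ) : Prop :=
  ColHas S c a ∧ ¬ ColHas S c (a + 1)

/-- Column `c` is nonempty and all its boxes contain `{a + 1}`. -/
def PureHigh (a : ℕ) (S : Filling) (c : ℕ) : Prop :=
  ColHas S c (a + 1) ∧ ¬ ColHas S c a

/-- Column `c` is mixed. -/
def Mixed (a : ℕ) (S : Filling) (c : ℕ) : Prop :=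
  ColHas S c a ∧ ColHas S c (a + 1)

/-- `k` is a descent: some row has a box with maximum `a + 1` in column `k` and a box with
minimum `a` in column `k + 1`. -/
def Descent (a : ℕ) (S : Filling) (k : ℕ) : Prop :=
  ∃ r, a + 1 ∈ S r k ∧ a ∈ S r (k + 1)

/-- Every box of column `c` gets the entry `{x}`; the other columns are kept. -/
def setCol (c x : ℕ) (S : Filling) : Filling :=
  fun r j => if j = c then (S r j).image (fun _ => x) else S r j

/-- The boxes of column `c` get the entry `{a}` above row `t`, the entry `E` in row `t` and
the entry `{a + 1}` below row `t`; the other columns are kept. -/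
def mixCol (a c t : ℕ) (E : Finset ℕ) (S : Filling) : Filling :=
  fun r j =>
    if j = c then
      if S r j = ∅ then ∅
      else if r < t then {a}
      else if r = t then E
      else {a + 1}
    else S r j

/-- The topmost row in which column `c` contains the letter `a + 1`. -/
noncomputable def topHigh (a : ℕ) (S : Filling) (c : ℕ) : ℕ := sInf {r | a + 1 ∈ S r c}

/-- The bottommost row in which column `c` contains the letter `a`. -/
noncomputable def botLow (a : ℕ) (S : Filling) (c : ℕ) : ℕ := sSup {r | a ∈ S r c}

/-- One descent resolution, at a descent `k`.
* (M1): column `k` is mixed, with transition row `t` (its first row containing `a + 1`) and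
  transition entry `{a + 1}` or `{a, a + 1}`, and column `k + 1` is `a`-pure; column `k`
  becomes `a`-pure, and column `k + 1` mixed with the same transition row and entry.
* (2M): column `k` is `(a + 1)`-pure, and column `k + 1` is mixed, with transition row `t`
  (its last row containing `a`) and transition entry `{a}` or `{a, a + 1}`; column `k`
  becomes mixed with the same transition row and entry, and column `k + 1` `(a + 1)`-pure.
* (21): column `k` is `(a + 1)`-pure and column `k + 1` is `a`-pure; column `k` becomes
  `a`-pure and column `k + 1` becomes `(a + 1)`-pure. -/
inductive ResStep (a : ℕ) (S : Filling) : Filling → Prop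
  | m1 (k : ℕ) (hd : Descent a S k) (hk : Mixed a S k) (hk' : PureLow a S (k + 1)) :
      ResStep a S
        (setCol k a (mixCol a (k + 1) (topHigh a S k) (S (topHigh a S k) k) S))
  | twoM (k : ℕ) (hd : Descent a S k) (hk : PureHigh a S k) (hk' : Mixed a S (k + 1)) :
      ResStep a S
        (setCol (k + 1) (a + 1)
          (mixCol a k (botLow a S (k + 1)) (S (botLow a S (k + 1)) (k + 1)) S))
  | twoOne (k : ℕ) (hd : Descent a S k) (hk : PureHigh a S k) (hk' : PureLow a S (k + 1)) :
      ResStep a S (setCol k a (setCol (k + 1) (a + 1) S))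

/-- `N` is an outcome of the descent-resolution algorithm applied to `S`: it is reached by
resolving descents one after the other, in any order, until none remains. -/
def ResolvesTo (a : ℕ) (S N : Filling) : Prop :=
  Relation.ReflTransGen (ResStep a) S N ∧ ∀ k, ¬ Descent a N k

/-! ### Signatures -/

inductive Sign
  | plus
  | minus

/-- The restriction of a filling to the letters `i` and `i + 1`. -/
def restrictTwo (i : ℕ) (T : Filling) : Filling :=
  fun r c => (T r c).filter (fun x => x = i ∨ x = i + 1)

/-- The filling `T` with its `{i, i + 1}`-part replaced by `N`. -/
def replaceTwo (i : ℕ) (T N : Filling) : Filling :=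
  fun r c => (T r c).filter (fun x => ¬ (x = i ∨ x = i + 1)) ∪ N r c

/-- Put a letter in front of a reduced word, cancelling a `−` against a `+` that it
immediately precedes. -/
def consCancel : Sign × ℕ → List (Sign × ℕ) → List (Sign × ℕ)
  | (Sign.minus, _), (Sign.plus, _) :: w => w
  | x, w => x :: w

/-- Successively cancel all pairs in which a `−` immediately precedes a `+`. -/
def cancelPairs (w : List (Sign × ℕ)) : List (Sign × ℕ) := w.foldr consCancel []

noncomputable section

open scoped Classical

variable {n : ℕ} {lam mu : YoungDiagram}

/-- The `i`-signature of `T`, read from left to right; each sign is recorded together with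
the column that carries it. (All columns of `lam/mu` have an index below the length of the
first row of `lam`.) -/
def signature (i : ℕ) (T : SVRPP n lam mu) : List (Sign × ℕ) :=
  (List.range (lam.rowLen 0)).filterMap fun c =>
    if PureLow i (restrictTwo i T.entry) c then some (Sign.plus, c)
    else if PureHigh i (restrictTwo i T.entry) c then some (Sign.minus, c)
    else none

/-- The reduced `i`-signature of `T`. -/
def reducedSignature (i : ℕ) (T : SVRPP n lam mu) : List (Sign × ℕ) :=
  cancelPairs (signature i T)

/-- The columns carrying the `−` signs of the reduced `i`-signature, from left to right. -/
def minusCols (i : ℕ) (T : SVRPP n lam mu) : List ℕ :=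
  (reducedSignature i T).filterMap fun
    | (Sign.minus, c) => some c
    | (Sign.plus, _) => none

/-- The columns carrying the `+` signs of the reduced `i`-signature, from left to right. -/
def plusCols (i : ℕ) (T : SVRPP n lam mu) : List ℕ :=
  (reducedSignature i T).filterMap fun
    | (Sign.plus, c) => some c
    | (Sign.minus, _) => none

/-! ### Crystal operators; `none` plays the role of `0` -/

/-- The unique set-valued reverse plane partition obtained from `T` by replacing its
`{i, i + 1}`-part by an outcome of the descent-resolution algorithm applied to `S`. (If there
were no such object, or several, the value would be `none`; that this never happens for the
fillings `S` used below is not assumed anywhere.) -/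
def resolve (i : ℕ) (T : SVRPP n lam mu) (S : Filling) : Option (SVRPP n lam mu) :=
  if h : ∃! T' : SVRPP n lam mu,
      ∃ N, ResolvesTo i S N ∧ T'.entry = replaceTwo i T.entry N
  then some h.choose else none

/-- The operator `e_i`: it is `0` if the reduced `i`-signature has no `−`; otherwise every
`{i + 1}` in the column of the leftmost uncancelled `−` becomes `{i}`, and the descents are
resolved. -/
def e (i : ℕ) (T : SVRPP n lam mu) : Option (SVRPP n lam mu) :=
  (minusCols i T).head?.bind fun A => resolve i T (setCol A i (restrictTwo i T.entry))

/-- The operator `f_i`: it is `0` if the reduced `i`-signature has no `+`; otherwise every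
`{i}` in the column of the rightmost uncancelled `+` becomes `{i + 1}`, and the descents are
resolved. -/
def f (i : ℕ) (T : SVRPP n lam mu) : Option (SVRPP n lam mu) :=
  (plusCols i T).getLast?.bind fun A => resolve i T (setCol A (i + 1) (restrictTwo i T.entry))

/-- The power `e_i^k(T)`, with `e_i(0) = 0`. -/
def ePow (i k : ℕ) (T : SVRPP n lam mu) : Option (SVRPP n lam mu) :=
  (fun o => o.bind (e i))^[k] (some T)

/-- The power `f_i^k(T)`, with `f_i(0) = 0`. -/
def fPow (i k : ℕ) (T : SVRPP n lam mu) : Option (SVRPP n lam mu) :=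
  (fun o => o.bind (f i))^[k] (some T)

end

end SetValuedRPP

namespace SetValuedRPP

/-! ### Counting the signs of a reduced word -/

/-- The effect on the numbers of `+` and `−` signs of putting a sign in front of a reduced
word. -/
def countStep : Sign → ℕ × ℕ → ℕ × ℕ
  | Sign.plus, q => (q.1 + 1, q.2)
  | Sign.minus, (0, m) => (0, m + 1)
  | Sign.minus, (p + 1, m) => (p, m)

/-- The numbers of `+` and `−` signs of the reduction of a sign word. -/
def reducedCounts (w : List Sign) : ℕ × ℕ := w.foldr countStep (0, 0)

@[simp] theorem reducedCounts_nil : reducedCounts [] = (0, 0) := rfl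

@[simp] theorem reducedCounts_cons (x : Sign) (w : List Sign) :
    reducedCounts (x :: w) = countStep x (reducedCounts w) := rfl

/-- The columns of the `−` signs of a word. -/
def minusPart (w : List (Sign × ℕ)) : List ℕ :=
  w.filterMap fun
    | (Sign.minus, c) => some c
    | (Sign.plus, _) => none

/-- The columns of the `+` signs of a word. -/
def plusPart (w : List (Sign × ℕ)) : List ℕ :=
  w.filterMap fun
    | (Sign.plus, c) => some c
    | (Sign.minus, _) => none

@[simp] theorem minusPart_nil : minusPart [] = [] := rfl
@[simp] theorem plusPart_nil : plusPart [] = [] := rfl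
@[simp] theorem minusPart_cons_minus (c : ℕ) (w) :
    minusPart ((Sign.minus, c) :: w) = c :: minusPart w := rfl
@[simp] theorem minusPart_cons_plus (c : ℕ) (w) :
    minusPart ((Sign.plus, c) :: w) = minusPart w := rfl
@[simp] theorem plusPart_cons_plus (c : ℕ) (w) :
    plusPart ((Sign.plus, c) :: w) = c :: plusPart w := rfl
@[simp] theorem plusPart_cons_minus (c : ℕ) (w) :
    plusPart ((Sign.minus, c) :: w) = plusPart w := rfl

theorem cancelPairs_cons (x : Sign × ℕ) (w : List (Sign × ℕ)) :
    cancelPairs (x :: w) = consCancel x (cancelPairs w) := rfl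

/-- In a reduced word no `+` comes after a `−`. -/
theorem plusPart_eq_nil_of_cancelPairs_eq_cons_minus {w : List (Sign × ℕ)} :
    ∀ {c : ℕ} {w' : List (Sign × ℕ)}, cancelPairs w = (Sign.minus, c) :: w' →
      plusPart w' = [] := by
  suffices h : ∀ u v c, cancelPairs w = u ++ (Sign.minus, c) :: v → plusPart v = [] from
    fun {c w'} h' => h [] w' c h'
  induction w with
  | nil => intro u v c h; simp [cancelPairs] at h
  | cons x w ih =>
    obtain ⟨s, b⟩ := x
    intro u v c h
    rw [cancelPairs_cons] at h
    cases s with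
    | plus =>
      cases u with
      | nil => simp [consCancel] at h
      | cons y u => exact ih u v c (by simpa [consCancel] using (List.cons.inj h).2)
    | minus =>
      rcases hw : cancelPairs w with _ | ⟨⟨s', d⟩, w'⟩
      · rw [hw] at h
        cases u with
        | nil =>
          simp only [consCancel, List.nil_append, List.cons.injEq] at h
          rw [← h.2]
          rfl
        | cons y u => simp [consCancel] at h
      · cases s' with
        | plus =>
          rw [hw] at h
          exact ih ((Sign.plus, d) :: u) v c (by rw [hw]; simpa [consCancel] using h)
        | minus =>
          rw [hw] at h
          cases u with
          | nil =>
            simp only [consCancel, List.nil_append, List.cons.injEq] at h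
            rw [← h.2]
            simpa using ih [] w' d hw
          | cons y u =>
            exact ih u v c (by rw [hw]; simpa [consCancel] using (List.cons.inj h).2)

theorem reducedCounts_eq (w : List (Sign × ℕ)) :
    reducedCounts (w.map Prod.fst)
      = ((plusPart (cancelPairs w)).length, (minusPart (cancelPairs w)).length) := by
  induction w with
  | nil => rfl
  | cons x w ih =>
    obtain ⟨s, b⟩ := x
    rw [List.map_cons, reducedCounts_cons, ih, cancelPairs_cons]
    cases s with
    | plus => simp [consCancel, countStep]
    | minus =>
      rcases hw : cancelPairs w with _ | ⟨⟨s', d⟩, w'⟩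
      · simp [consCancel, countStep]
      · cases s' with
        | plus => simp [consCancel, countStep]
        | minus =>
          simp [consCancel, countStep, plusPart_eq_nil_of_cancelPairs_eq_cons_minus hw]

/-- Changing the leftmost uncancelled `−` into a `+`; it is not immediately preceded by a
`−`. -/
theorem exists_split_of_head_minusPart {w : List (Sign × ℕ)} {A : ℕ}
    (h : (minusPart (cancelPairs w)).head? = some A) :
    ∃ u v p m, w = u ++ (Sign.minus, A) :: v ∧ (∀ b, u.getLast? ≠ some (Sign.minus, b)) ∧
      reducedCounts (w.map Prod.fst) = (p, m + 1) ∧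
      reducedCounts (u.map Prod.fst ++ Sign.plus :: v.map Prod.fst) = (p + 1, m) := by
  induction w with
  | nil => simp [cancelPairs] at h
  | cons x w ih =>
    obtain ⟨s, c⟩ := x
    rw [cancelPairs_cons] at h
    cases s with
    | plus =>
      obtain ⟨u, v, p, m, rfl, h1, h2, h3⟩ := ih (by simpa [consCancel] using h)
      refine ⟨(Sign.plus, c) :: u, v, p + 1, m, rfl, ?_, ?_, ?_⟩
      · intro b
        cases u with
        | nil => simp
        | cons y u => simpa using h1 b
      · rw [List.map_cons, reducedCounts_cons, h2]; rfl
      · rw [List.map_cons, List.cons_append, reducedCounts_cons, h3]; rfl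
    | minus =>
      have hc := reducedCounts_eq w
      rcases hw : cancelPairs w with _ | ⟨⟨s', d⟩, w'⟩
      · rw [hw] at h hc
        simp only [consCancel, minusPart_cons_minus, List.head?_cons, Option.some.injEq] at h
        subst h
        refine ⟨[], w, 0, 0, rfl, by simp, ?_, ?_⟩ <;> simp [hc, countStep]
      · cases s' with
        | plus =>
          rw [hw] at h hc
          obtain ⟨u, v, p, m, rfl, h1, h2, h3⟩ := ih (by rw [hw]; simpa [consCancel] using h)
          rw [h2] at hc
          obtain ⟨q, rfl⟩ : ∃ q, p = q + 1 := ⟨_, (Prod.ext_iff.1 hc).1.trans (by simp; rfl)⟩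
          refine ⟨(Sign.minus, c) :: u, v, q, m, rfl, ?_, ?_, ?_⟩
          · intro b
            cases u with
            | nil =>
              simp only [List.map_nil, List.nil_append, List.map_cons, reducedCounts_cons,
                countStep, Prod.mk.injEq] at h2 h3
              obtain ⟨h4, h5⟩ := h3
              have h6 : reducedCounts (v.map Prod.fst) = (q + 1, m) :=
                Prod.ext (by simpa using h4) h5
              rw [h6] at h2
              simp at h2
            | cons y u => simpa using h1 b
          · rw [List.map_cons, reducedCounts_cons, h2]; rfl
          · rw [List.map_cons, List.cons_append, reducedCounts_cons, h3]; rfl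
        | minus =>
          have h0 := plusPart_eq_nil_of_cancelPairs_eq_cons_minus hw
          rw [hw] at h hc
          simp only [consCancel, minusPart_cons_minus, List.head?_cons, Option.some.injEq] at h
          subst h
          refine ⟨[], w, 0, (minusPart ((Sign.minus, d) :: w')).length, rfl, by simp, ?_, ?_⟩
          · rw [List.map_cons, reducedCounts_cons, hc]
            simp only [plusPart_cons_minus, h0, List.length_nil, countStep]
          · simp [hc, h0, countStep]

/-- Changing the rightmost uncancelled `+` into a `−`; it is not immediately followed by a
`+`. -/
theorem exists_split_of_getLast_plusPart {w : List (Sign × ℕ)} {A : ℕ}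
    (h : (plusPart (cancelPairs w)).getLast? = some A) :
    ∃ u v p m, w = u ++ (Sign.plus, A) :: v ∧ (∀ b, v.head? ≠ some (Sign.plus, b)) ∧
      reducedCounts (w.map Prod.fst) = (p + 1, m) ∧
      reducedCounts (u.map Prod.fst ++ Sign.minus :: v.map Prod.fst) = (p, m + 1) := by
  induction w with
  | nil => simp [cancelPairs] at h
  | cons x w ih =>
    obtain ⟨s, c⟩ := x
    rw [cancelPairs_cons] at h
    have hc := reducedCounts_eq w
    cases s with
    | plus =>
      simp only [consCancel, plusPart_cons_plus] at h
      rcases hp : plusPart (cancelPairs w) with _ | ⟨d, l⟩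
      · rw [hp] at h hc
        simp only [List.getLast?_singleton, Option.some.injEq] at h
        subst h
        refine ⟨[], w, 0, (minusPart (cancelPairs w)).length, rfl, ?_, ?_, ?_⟩
        · intro b hb
          obtain ⟨w', rfl⟩ : ∃ w', w = (Sign.plus, b) :: w' := by
            cases w with
            | nil => simp at hb
            | cons y w => exact ⟨w, by simpa using hb⟩
          simp [countStep] at hc
        · rw [List.map_cons, reducedCounts_cons, hc]; rfl
        · simp [hc, countStep]
      · rw [hp] at h
        obtain ⟨u, v, p, m, rfl, h1, h2, h3⟩ := ih (by rw [hp]; simpa using h)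
        refine ⟨(Sign.plus, c) :: u, v, p + 1, m, rfl, h1, ?_, ?_⟩
        · rw [List.map_cons, reducedCounts_cons, h2]; rfl
        · rw [List.map_cons, List.cons_append, reducedCounts_cons, h3]; rfl
    | minus =>
      rcases hw : cancelPairs w with _ | ⟨⟨s', d⟩, w'⟩
      · rw [hw] at h
        simp [consCancel] at h
      · cases s' with
        | plus =>
          rw [hw] at h hc
          simp only [consCancel] at h
          rcases hp : plusPart w' with _ | ⟨b, l⟩
          · simp [hp] at h
          obtain ⟨u, v, p, m, rfl, h1, h2, h3⟩ := ih (by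
            rw [hw, plusPart_cons_plus, hp]
            rw [hp] at h
            simpa using h)
          rw [h2] at hc
          obtain ⟨q, rfl⟩ : ∃ q, p = q + 1 := ⟨l.length, by simpa [hp] using (Prod.ext_iff.1 hc).1⟩
          refine ⟨(Sign.minus, c) :: u, v, q, m, rfl, h1, ?_, ?_⟩
          · rw [List.map_cons, reducedCounts_cons, h2]; rfl
          · rw [List.map_cons, List.cons_append, reducedCounts_cons, h3]; rfl
        | minus =>
          rw [hw] at h
          simp [consCancel, plusPart_eq_nil_of_cancelPairs_eq_cons_minus hw] at h

end SetValuedRPP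

namespace SetValuedRPP

/-! ### Two-letter fillings of a convex region -/

/-- `D` contains every box between two of its boxes. -/
def ConvexRegion (D : ℕ → ℕ → Prop) : Prop :=
  ∀ ⦃r s t c d e : ℕ⦄, D r c → D t e → r ≤ s → s ≤ t → c ≤ d → d ≤ e → D s d

/-- `S` fills the boxes of `D` by nonempty subsets of `{a, a + 1}`, weakly increasing down
the columns. -/
structure IsTwoLetter (a : ℕ) (D : ℕ → ℕ → Prop) (S : Filling) : Prop where
  nonempty_iff : ∀ r c, (S r c).Nonempty ↔ D r c
  letter : ∀ r c, ∀ x ∈ S r c, x = a ∨ x = a + 1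
  col : ∀ r s c, r < s → a + 1 ∈ S r c → a ∉ S s c

namespace IsTwoLetter

variable {a : ℕ} {D : ℕ → ℕ → Prop} {S : Filling}

theorem region (h : IsTwoLetter a D S) {r c x : ℕ} (hx : x ∈ S r c) : D r c :=
  (h.nonempty_iff r c).1 ⟨x, hx⟩

theorem mem_or (h : IsTwoLetter a D S) {r c : ℕ} (hD : D r c) : a ∈ S r c ∨ a + 1 ∈ S r c := by
  obtain ⟨x, hx⟩ := (h.nonempty_iff r c).2 hD
  rcases h.letter r c x hx with rfl | rfl
  · exact Or.inl hx
  · exact Or.inr hx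

theorem eq_empty_iff (h : IsTwoLetter a D S) {r c : ℕ} : S r c = ∅ ↔ ¬ D r c := by
  rw [← h.nonempty_iff, Finset.not_nonempty_iff_eq_empty]

end IsTwoLetter

noncomputable section

open scoped Classical

/-- The sign carried by column `c`, if it is pure. -/
def colSign (a : ℕ) (S : Filling) (c : ℕ) : Option Sign :=
  if PureLow a S c then some Sign.plus
  else if PureHigh a S c then some Sign.minus
  else none

theorem colSign_of_pureLow {a c : ℕ} {S : Filling} (h : PureLow a S c) :
    colSign a S c = some Sign.plus := if_pos h

theorem colSign_of_pureHigh {a c : ℕ} {S : Filling} (h : PureHigh a S c) :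
    colSign a S c = some Sign.minus := by
  rw [colSign, if_neg (fun h' => h'.2 h.1), if_pos h]

theorem colSign_of_mixed {a c : ℕ} {S : Filling} (h : Mixed a S c) : colSign a S c = none := by
  rw [colSign, if_neg (fun h' => h'.2 h.2), if_neg (fun h' => h'.2 h.1)]

theorem colSign_congr {a c : ℕ} {S S' : Filling} (h : ∀ r, S r c = S' r c) :
    colSign a S c = colSign a S' c := by
  have h' : ∀ x, ColHas S c x ↔ ColHas S' c x := fun x => by simp only [ColHas, h]
  have h₁ : PureLow a S c ↔ PureLow a S' c := by simp only [PureLow, h']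
  have h₂ : PureHigh a S c ↔ PureHigh a S' c := by simp only [PureHigh, h']
  rw [colSign, colSign, if_congr h₁ rfl (if_congr h₂ rfl rfl)]

/-- The sign word of the columns `0, …, L - 1`. -/
def signWord (a L : ℕ) (S : Filling) : List Sign := (List.range L).filterMap (colSign a S)

theorem range_eq_append_cons_cons {k L : ℕ} (h : k + 1 < L) :
    ∃ l₁ l₂ : List ℕ, List.range L = l₁ ++ k :: (k + 1) :: l₂ ∧
      (∀ c ∈ l₁, c < k) ∧ ∀ c ∈ l₂, k + 1 < c := by
  obtain ⟨m, rfl⟩ : ∃ m, L = k + 1 + 1 + m := ⟨L - (k + 2), by omega⟩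
  refine ⟨List.range k, (List.range m).map (k + 1 + 1 + ·), ?_, by simp, ?_⟩
  · rw [List.range_add, List.range_succ, List.range_succ]; simp
  · intro c hc
    obtain ⟨x, -, rfl⟩ := List.mem_map.1 hc
    omega

/-- The sign word does not change when a sign moves to an adjacent column without a sign. -/
theorem signWord_eq_of_swap {a L k : ℕ} {S S' : Filling} (hk : k + 1 < L)
    (hS : ∀ c, c ≠ k → c ≠ k + 1 → colSign a S' c = colSign a S c)
    (h : colSign a S' k = colSign a S (k + 1) ∧ colSign a S' (k + 1) = colSign a S k)
    (h0 : colSign a S k = none ∨ colSign a S (k + 1) = none) :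
    signWord a L S' = signWord a L S := by
  obtain ⟨l₁, l₂, hl, h₁, h₂⟩ := range_eq_append_cons_cons hk
  have e₁ : l₁.filterMap (colSign a S') = l₁.filterMap (colSign a S) :=
    List.filterMap_congr fun c hc => hS c (by have := h₁ c hc; omega) (by have := h₁ c hc; omega)
  have e₂ : l₂.filterMap (colSign a S') = l₂.filterMap (colSign a S) :=
    List.filterMap_congr fun c hc => hS c (by have := h₂ c hc; omega) (by have := h₂ c hc; omega)
  rw [signWord, signWord, hl, List.filterMap_append, List.filterMap_append, e₁,
    List.filterMap_cons, List.filterMap_cons, List.filterMap_cons, List.filterMap_cons, e₂,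
    h.1, h.2]
  rcases h0 with h0 | h0 <;> rw [h0]

/-! ### The columns changed by a resolution -/

theorem mem_setCol_self {c y r x : ℕ} {S : Filling} :
    x ∈ setCol c y S r c ↔ (S r c).Nonempty ∧ x = y := by
  simp only [setCol, if_true, Finset.mem_image, Finset.Nonempty]
  constructor
  · rintro ⟨z, hz, rfl⟩; exact ⟨⟨z, hz⟩, rfl⟩
  · rintro ⟨⟨z, hz⟩, rfl⟩; exact ⟨z, hz, rfl⟩

theorem setCol_of_ne {c y r d : ℕ} {S : Filling} (h : d ≠ c) : setCol c y S r d = S r d :=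
  if_neg h

theorem mem_mixCol_self {a c t r x : ℕ} {E : Finset ℕ} {S : Filling} :
    x ∈ mixCol a c t E S r c ↔
      (S r c).Nonempty ∧ (r < t ∧ x = a ∨ r = t ∧ x ∈ E ∨ t < r ∧ x = a + 1) := by
  rw [Finset.nonempty_iff_ne_empty]
  simp only [mixCol, if_true]
  by_cases hs : S r c = ∅
  · simp [hs]
  · rw [if_neg hs]
    rcases lt_trichotomy r t with h1 | rfl | h1
    · simp [h1, hs, h1.ne, h1.not_gt]
    · simp [hs]
    · simp [h1, hs, h1.ne', h1.not_gt]

theorem mixCol_of_ne {a c t r d : ℕ} {E : Finset ℕ} {S : Filling} (h : d ≠ c) :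
    mixCol a c t E S r d = S r d :=
  if_neg h

/-! ### A column changed from `{a + 1}` to `{a}` moves left -/

/-- The fillings met when descents are resolved after an `(a + 1)`-pure column of `S₀` has
been made `a`-pure: the new `a`-pure column is now column `j`, and only `j - 1` can be a
descent. -/
structure LowState (a L : ℕ) (D : ℕ → ℕ → Prop) (S₀ : Filling) (W : List Sign) (j : ℕ)
    (S : Filling) : Prop where
  two : IsTwoLetter a D S
  old : ∀ c, c < j → ∀ r, S r c = S₀ r c
  pure : PureLow a S j
  prev : ∀ c, c < j → PureHigh a S₀ c → ∃ d, c < d ∧ d < j ∧ PureLow a S₀ d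
  desc : ∀ k, Descent a S k → k + 1 = j
  next : ∀ r, D r j → a ∈ S r (j + 1) → a ∈ S₀ r j
  word : signWord a L S = W

theorem LowState.not_pureHigh {a L : ℕ} {D : ℕ → ℕ → Prop} {S₀ S : Filling} {W : List Sign}
    {k : ℕ} (h : LowState a L D S₀ W (k + 1) S) : ¬ PureHigh a S k := by
  intro hk
  simp only [PureHigh, ColHas, h.old k (Nat.lt_succ_self k)] at hk
  obtain ⟨d, h1, h2, -⟩ := h.prev k (Nat.lt_succ_self k) hk
  omega

theorem LowState.mixed {a L : ℕ} {D : ℕ → ℕ → Prop} {S₀ S : Filling} {W : List Sign}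
    {k : ℕ} (h : LowState a L D S₀ W (k + 1) S) (hd : Descent a S k) : Mixed a S k := by
  obtain ⟨r, hr, -⟩ := hd
  by_contra hm
  exact h.not_pureHigh ⟨⟨r, hr⟩, fun h' => hm ⟨h', r, hr⟩⟩

/-- The result of the resolution (M1). -/
abbrev moveLow (a k : ℕ) (S : Filling) : Filling :=
  setCol k a (mixCol a (k + 1) (topHigh a S k) (S (topHigh a S k) k) S)

theorem moveLow_of_ne {a k r c : ℕ} {S : Filling} (h : c ≠ k) (h' : c ≠ k + 1) :
    moveLow a k S r c = S r c := by
  rw [moveLow, setCol_of_ne h, mixCol_of_ne h']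

theorem LowState.step {a L : ℕ} {D : ℕ → ℕ → Prop} {S₀ S : Filling} {W : List Sign}
    {k : ℕ} (hD : ConvexRegion D) (hL : ∀ r c, D r c → c < L)
    (h₀ : ∀ k, ¬ Descent a S₀ k) (h : LowState a L D S₀ W (k + 1) S) (hd : Descent a S k) :
    LowState a L D S₀ W k (moveLow a k S) := by
  have hm := h.mixed hd
  obtain ⟨r, hr, hr'⟩ := hd
  have hT := h.two
  have ht : a + 1 ∈ S (topHigh a S k) k := Nat.sInf_mem (s := {r | a + 1 ∈ S r k}) ⟨r, hr⟩
  have htop : ∀ s, a + 1 ∈ S s k → topHigh a S k ≤ s := fun s hs => Nat.sInf_le hs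
  obtain ⟨t, htdef⟩ : ∃ t, topHigh a S k = t := ⟨_, rfl⟩
  rw [htdef] at ht htop
  have htr := htop r hr
  have hDt : D t (k + 1) :=
    hD (hT.region ht) (hT.region hr') le_rfl htr (Nat.le_succ k) le_rfl
  have hlow : ∀ s, D s k → s < t → a ∈ S s k := fun s hs hst =>
    (hT.mem_or hs).resolve_right fun h' => absurd (htop s h') (by omega)
  have hhigh : ∀ s, D s k → t ≤ s → a + 1 ∈ S s k := by
    intro s hs hst
    rcases hst.eq_or_lt with rfl | hst
    · exact ht
    · exact (hT.mem_or hs).resolve_left (hT.col t s k hst ht)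
  have memLeft : ∀ s x, x ∈ moveLow a k S s k ↔ D s k ∧ x = a := by
    intro s x
    rw [mem_setCol_self, mixCol_of_ne (by omega), hT.nonempty_iff]
  have memRight : ∀ s x, x ∈ moveLow a k S s (k + 1) ↔
      D s (k + 1) ∧ (s < t ∧ x = a ∨ s = t ∧ x ∈ S t k ∨ t < s ∧ x = a + 1) := by
    intro s x
    rw [moveLow, setCol_of_ne (by omega), mem_mixCol_self, hT.nonempty_iff, htdef]
  have lowR : ∀ s, a ∈ moveLow a k S s (k + 1) → s ≤ t := by
    intro s hs
    rcases ((memRight s a).1 hs).2 with h1 | h1 | h1 <;> omega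
  have highR : ∀ s, a + 1 ∈ moveLow a k S s (k + 1) → t ≤ s := by
    intro s hs
    rcases ((memRight s (a + 1)).1 hs).2 with h1 | h1 | h1 <;> omega
  have hne : ∀ s c, c ≠ k → c ≠ k + 1 → moveLow a k S s c = S s c :=
    fun s c => moveLow_of_ne
  have hpure : PureLow a (moveLow a k S) k := by
    refine ⟨⟨t, (memLeft t a).2 ⟨hT.region ht, rfl⟩⟩, ?_⟩
    rintro ⟨s, hs⟩
    have := ((memLeft s _).1 hs).2
    omega
  have hmixed : Mixed a (moveLow a k S) (k + 1) := by
    refine ⟨?_, t, (memRight t _).2 ⟨hDt, Or.inr (Or.inl ⟨rfl, ht⟩)⟩⟩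
    obtain ⟨s, hs⟩ := hm.1
    rcases lt_trichotomy s t with h1 | rfl | h1
    · exact ⟨s, (memRight s a).2 ⟨hD (hT.region hs) hDt le_rfl h1.le (Nat.le_succ k) le_rfl,
        Or.inl ⟨h1, rfl⟩⟩⟩
    · exact ⟨s, (memRight s a).2 ⟨hDt, Or.inr (Or.inl ⟨rfl, hs⟩)⟩⟩
    · exact absurd hs (hT.col t s k h1 ht)
  refine ⟨⟨?_, ?_, ?_⟩, ?_, hpure, ?_, ?_, ?_, ?_⟩
  · intro s c
    by_cases hc : c = k
    · subst hc
      simp only [Finset.Nonempty, memLeft]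
      simp
    by_cases hc' : c = k + 1
    · subst hc'
      simp only [Finset.Nonempty, memRight]
      constructor
      · rintro ⟨x, hx, -⟩; exact hx
      · intro hs
        rcases lt_trichotomy s t with h1 | h1 | h1
        · exact ⟨a, hs, Or.inl ⟨h1, rfl⟩⟩
        · exact ⟨a + 1, hs, Or.inr (Or.inl ⟨h1, ht⟩)⟩
        · exact ⟨a + 1, hs, Or.inr (Or.inr ⟨h1, rfl⟩)⟩
    · rw [hne s c hc hc']; exact hT.nonempty_iff s c
  · intro s c x hx
    by_cases hc : c = k
    · subst hc; exact Or.inl ((memLeft s x).1 hx).2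
    by_cases hc' : c = k + 1
    · subst hc'
      rcases ((memRight s x).1 hx).2 with h1 | h1 | h1
      · exact Or.inl h1.2
      · exact hT.letter _ _ x h1.2
      · exact Or.inr h1.2
    · rw [hne s c hc hc'] at hx; exact hT.letter s c x hx
  · intro s s' c hss h1 h2
    by_cases hc : c = k
    · subst hc; exact hpure.2 ⟨s, h1⟩
    by_cases hc' : c = k + 1
    · subst hc'
      have := lowR s' h2
      have := highR s h1
      omega
    · rw [hne _ c hc hc'] at h1 h2; exact hT.col s s' c hss h1 h2
  · intro c hc s
    rw [hne s c (by omega) (by omega)]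
    exact h.old c (by omega) s
  · intro c hc hh
    obtain ⟨d, h1, h2, h3⟩ := h.prev c (by omega) hh
    refine ⟨d, h1, ?_, h3⟩
    rcases Nat.lt_succ_iff_lt_or_eq.1 h2 with h2 | rfl
    · exact h2
    · obtain ⟨s, hs⟩ := hm.2
      rw [h.old d (by omega)] at hs
      exact absurd ⟨s, hs⟩ h3.2
  · rintro m ⟨s, h1, h2⟩
    by_cases hmk : m = k
    · subst hmk; exact absurd ⟨s, h1⟩ hpure.2
    by_cases hmk' : m = k + 1
    · subst hmk'
      rw [hne _ _ (by omega) (by omega)] at h2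
      have h3 := ((memRight s _).1 h1).1
      have h4 := highR s h1
      have h5 := h.next s h3 h2
      have h6 := hhigh s (hD (hT.region ht) h3 h4 le_rfl le_rfl (Nat.le_succ k)) h4
      rw [h.old k (Nat.lt_succ_self k)] at h6
      exact absurd ⟨s, h6, h5⟩ (h₀ k)
    by_cases hmk'' : m + 1 = k
    · exact hmk''
    · rw [hne _ _ hmk hmk'] at h1
      rw [hne _ _ hmk'' (by omega)] at h2
      have := h.desc m ⟨s, h1, h2⟩
      omega
  · intro s hs h1
    rw [← h.old k (Nat.lt_succ_self k)]
    rcases ((memRight s a).1 h1).2 with h2 | h2 | h2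
    · exact hlow s hs h2.1
    · rw [h2.1]; exact h2.2
    · omega
  · rw [← h.word]
    refine signWord_eq_of_swap (hL t (k + 1) hDt)
      (fun c hc hc' => colSign_congr fun s => hne s c hc hc') ⟨?_, ?_⟩
      (Or.inl (colSign_of_mixed hm))
    · rw [colSign_of_pureLow hpure, colSign_of_pureLow h.pure]
    · rw [colSign_of_mixed hm, colSign_of_mixed hmixed]

/-- The descent-resolution algorithm stops, with a unique outcome. -/
theorem LowState.exists_resolvesTo {a L : ℕ} {D : ℕ → ℕ → Prop} {S₀ : Filling}
    {W : List Sign} (hD : ConvexRegion D) (hL : ∀ r c, D r c → c < L)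
    (h₀ : ∀ k, ¬ Descent a S₀ k) {j : ℕ} {S : Filling} (h : LowState a L D S₀ W j S) :
    ∃ N, ResolvesTo a S N ∧ (∀ N', ResolvesTo a S N' → N' = N) ∧ IsTwoLetter a D N ∧
      signWord a L N = W := by
  induction j generalizing S with
  | zero =>
    have hS : ∀ k, ¬ Descent a S k := fun k hk => Nat.succ_ne_zero k (h.desc k hk)
    refine ⟨S, ⟨.refl, hS⟩, ?_, h.two, h.word⟩
    rintro N' ⟨h1, -⟩
    rcases h1.cases_head with h1 | ⟨X, h1, -⟩
    · exact h1.symm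
    · cases h1 with
      | m1 k hd _ _ => exact absurd hd (hS k)
      | twoM k hd _ _ => exact absurd hd (hS k)
      | twoOne k hd _ _ => exact absurd hd (hS k)
  | succ k ih =>
    have hstep : ∀ X, ResStep a S X → Descent a S k ∧ X = moveLow a k S := by
      intro X hX
      cases hX with
      | m1 m hd _ _ =>
        obtain rfl : m = k := Nat.succ_injective (h.desc m hd)
        exact ⟨hd, rfl⟩
      | twoM m hd _ hm =>
        obtain rfl : m = k := Nat.succ_injective (h.desc m hd)
        exact absurd hm.2 h.pure.2
      | twoOne m hd hm _ =>
        obtain rfl : m = k := Nat.succ_injective (h.desc m hd)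
        exact absurd hm h.not_pureHigh
    by_cases hd : Descent a S k
    · obtain ⟨N, h1, h2, h3⟩ := ih (h.step hD hL h₀ hd)
      refine ⟨N, ⟨.head (.m1 k hd (h.mixed hd) h.pure) h1.1, h1.2⟩, ?_, h3⟩
      rintro N' ⟨h4, h5⟩
      rcases h4.cases_head with rfl | ⟨X, h4, h6⟩
      · exact absurd hd (h5 k)
      · obtain ⟨-, rfl⟩ := hstep X h4
        exact h2 N' ⟨h6, h5⟩
    · refine ⟨S, ⟨.refl, ?_⟩, ?_, h.two, h.word⟩
      · intro m hm
        obtain rfl : m = k := Nat.succ_injective (h.desc m hm)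
        exact hd hm
      · rintro N' ⟨h1, -⟩
        rcases h1.cases_head with h1 | ⟨X, h1, -⟩
        · exact h1.symm
        · exact absurd (hstep X h1).1 hd

theorem LowState.init {a L : ℕ} {D : ℕ → ℕ → Prop} {S₀ : Filling} {A : ℕ}
    (hT : IsTwoLetter a D S₀) (h₀ : ∀ k, ¬ Descent a S₀ k) (hA : PureHigh a S₀ A)
    (hprev : ∀ c, c < A → PureHigh a S₀ c → ∃ d, c < d ∧ d < A ∧ PureLow a S₀ d) :
    LowState a L D S₀ (signWord a L (setCol A a S₀)) A (setCol A a S₀) := by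
  have hA' : PureLow a (setCol A a S₀) A := by
    obtain ⟨r, hr⟩ := hA.1
    refine ⟨⟨r, mem_setCol_self.2 ⟨⟨_, hr⟩, rfl⟩⟩, ?_⟩
    rintro ⟨s, hs⟩
    have := (mem_setCol_self.1 hs).2
    omega
  refine ⟨⟨?_, ?_, ?_⟩, ?_, hA', hprev, ?_, ?_, rfl⟩
  · intro r c
    by_cases hc : c = A
    · subst hc
      simp only [Finset.Nonempty, mem_setCol_self, exists_and_left, exists_eq, and_true]
      exact hT.nonempty_iff r c
    · rw [setCol_of_ne hc]; exact hT.nonempty_iff r c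
  · intro r c x hx
    by_cases hc : c = A
    · subst hc; exact Or.inl (mem_setCol_self.1 hx).2
    · rw [setCol_of_ne hc] at hx; exact hT.letter r c x hx
  · intro r s c hrs h1 h2
    by_cases hc : c = A
    · subst hc; exact hA'.2 ⟨r, h1⟩
    · rw [setCol_of_ne hc] at h1 h2; exact hT.col r s c hrs h1 h2
  · intro c hc r
    rw [setCol_of_ne hc.ne]
  · rintro k ⟨r, h1, h2⟩
    by_contra hk
    by_cases hkA : k = A
    · subst hkA; exact hA'.2 ⟨r, h1⟩
    · rw [setCol_of_ne hkA] at h1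
      rw [setCol_of_ne hk] at h2
      exact h₀ k ⟨r, h1, h2⟩
  · intro r hr h1
    rw [setCol_of_ne (by omega)] at h1
    refine (hT.mem_or hr).resolve_right fun h2 => h₀ A ⟨r, h2, h1⟩

/-! ### A column changed from `{a}` to `{a + 1}` moves right -/

/-- The fillings met when descents are resolved after an `a`-pure column of `S₀` has been
made `(a + 1)`-pure: the new `(a + 1)`-pure column is now column `j`, and only `j` can be a
descent. -/
structure HighState (a L : ℕ) (D : ℕ → ℕ → Prop) (S₀ : Filling) (W : List Sign) (j : ℕ)
    (S : Filling) : Prop where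
  two : IsTwoLetter a D S
  old : ∀ c, j < c → ∀ r, S r c = S₀ r c
  pure : PureHigh a S j
  next : ∀ c, j < c → PureLow a S₀ c → ∃ d, j < d ∧ d < c ∧ PureHigh a S₀ d
  desc : ∀ k, Descent a S k → k = j
  prev : ∀ r c, c + 1 = j → D r j → a + 1 ∈ S r c → a + 1 ∈ S₀ r j
  word : signWord a L S = W

theorem HighState.not_pureLow {a L : ℕ} {D : ℕ → ℕ → Prop} {S₀ S : Filling} {W : List Sign}
    {k : ℕ} (h : HighState a L D S₀ W k S) : ¬ PureLow a S (k + 1) := by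
  intro hk
  simp only [PureLow, ColHas, h.old (k + 1) (Nat.lt_succ_self k)] at hk
  obtain ⟨d, h1, h2, -⟩ := h.next (k + 1) (Nat.lt_succ_self k) hk
  omega

theorem HighState.mixed {a L : ℕ} {D : ℕ → ℕ → Prop} {S₀ S : Filling} {W : List Sign}
    {k : ℕ} (h : HighState a L D S₀ W k S) (hd : Descent a S k) : Mixed a S (k + 1) := by
  obtain ⟨r, -, hr⟩ := hd
  by_contra hm
  exact h.not_pureLow ⟨⟨r, hr⟩, fun h' => hm ⟨⟨r, hr⟩, h'⟩⟩

/-- The result of the resolution (2M). -/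
abbrev moveHigh (a k : ℕ) (S : Filling) : Filling :=
  setCol (k + 1) (a + 1) (mixCol a k (botLow a S (k + 1)) (S (botLow a S (k + 1)) (k + 1)) S)

theorem moveHigh_of_ne {a k r c : ℕ} {S : Filling} (h : c ≠ k) (h' : c ≠ k + 1) :
    moveHigh a k S r c = S r c := by
  rw [moveHigh, setCol_of_ne h', mixCol_of_ne h]

theorem HighState.step {a L R : ℕ} {D : ℕ → ℕ → Prop} {S₀ S : Filling} {W : List Sign}
    {k : ℕ} (hD : ConvexRegion D) (hL : ∀ r c, D r c → c < L) (hR : ∀ r c, D r c → r < R)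
    (h₀ : ∀ k, ¬ Descent a S₀ k) (h : HighState a L D S₀ W k S) (hd : Descent a S k) :
    HighState a L D S₀ W (k + 1) (moveHigh a k S) := by
  have hm := h.mixed hd
  obtain ⟨r, hr, hr'⟩ := hd
  have hT := h.two
  have hbdd : BddAbove {r | a ∈ S r (k + 1)} := ⟨R, fun s hs => (hR s _ (hT.region hs)).le⟩
  have ht : a ∈ S (botLow a S (k + 1)) (k + 1) :=
    Nat.sSup_mem (s := {r | a ∈ S r (k + 1)}) ⟨r, hr'⟩ hbdd
  have hbot : ∀ s, a ∈ S s (k + 1) → s ≤ botLow a S (k + 1) := fun s hs => le_csSup hbdd hs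
  obtain ⟨t, htdef⟩ : ∃ t, botLow a S (k + 1) = t := ⟨_, rfl⟩
  rw [htdef] at ht hbot
  have htr := hbot r hr'
  have hDt : D t k :=
    hD (hT.region hr) (hT.region ht) htr le_rfl le_rfl (Nat.le_succ k)
  have hhigh : ∀ s, D s (k + 1) → t < s → a + 1 ∈ S s (k + 1) := fun s hs hst =>
    (hT.mem_or hs).resolve_left fun h' => absurd (hbot s h') (by omega)
  have hlow : ∀ s, D s (k + 1) → s ≤ t → a ∈ S s (k + 1) := by
    intro s hs hst
    rcases hst.eq_or_lt with rfl | hst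
    · exact ht
    · exact (hT.mem_or hs).resolve_right fun h' => hT.col s t (k + 1) hst h' ht
  have memRight : ∀ s x, x ∈ moveHigh a k S s (k + 1) ↔ D s (k + 1) ∧ x = a + 1 := by
    intro s x
    rw [mem_setCol_self, mixCol_of_ne (by omega), hT.nonempty_iff]
  have memLeft : ∀ s x, x ∈ moveHigh a k S s k ↔
      D s k ∧ (s < t ∧ x = a ∨ s = t ∧ x ∈ S t (k + 1) ∨ t < s ∧ x = a + 1) := by
    intro s x
    rw [moveHigh, setCol_of_ne (by omega), mem_mixCol_self, hT.nonempty_iff, htdef]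
  have lowL : ∀ s, a ∈ moveHigh a k S s k → s ≤ t := by
    intro s hs
    rcases ((memLeft s a).1 hs).2 with h1 | h1 | h1 <;> omega
  have highL : ∀ s, a + 1 ∈ moveHigh a k S s k → t ≤ s := by
    intro s hs
    rcases ((memLeft s (a + 1)).1 hs).2 with h1 | h1 | h1 <;> omega
  have hne : ∀ s c, c ≠ k → c ≠ k + 1 → moveHigh a k S s c = S s c :=
    fun s c => moveHigh_of_ne
  have hpure : PureHigh a (moveHigh a k S) (k + 1) := by
    refine ⟨⟨t, (memRight t _).2 ⟨hT.region ht, rfl⟩⟩, ?_⟩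
    rintro ⟨s, hs⟩
    have := ((memRight s _).1 hs).2
    omega
  have hmixed : Mixed a (moveHigh a k S) k := by
    refine ⟨⟨t, (memLeft t _).2 ⟨hDt, Or.inr (Or.inl ⟨rfl, ht⟩)⟩⟩, ?_⟩
    obtain ⟨s, hs⟩ := hm.2
    rcases lt_trichotomy s t with h1 | rfl | h1
    · exact absurd ht (hT.col s t (k + 1) h1 hs)
    · exact ⟨s, (memLeft s _).2 ⟨hDt, Or.inr (Or.inl ⟨rfl, hs⟩)⟩⟩
    · exact ⟨s, (memLeft s _).2 ⟨hD hDt (hT.region hs) h1.le le_rfl le_rfl (Nat.le_succ k),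
        Or.inr (Or.inr ⟨h1, rfl⟩)⟩⟩
  refine ⟨⟨?_, ?_, ?_⟩, ?_, hpure, ?_, ?_, ?_, ?_⟩
  · intro s c
    by_cases hc' : c = k + 1
    · subst hc'
      simp only [Finset.Nonempty, memRight]
      simp
    by_cases hc : c = k
    · subst hc
      simp only [Finset.Nonempty, memLeft]
      constructor
      · rintro ⟨x, hx, -⟩; exact hx
      · intro hs
        rcases lt_trichotomy s t with h1 | h1 | h1
        · exact ⟨a, hs, Or.inl ⟨h1, rfl⟩⟩
        · exact ⟨a, hs, Or.inr (Or.inl ⟨h1, ht⟩)⟩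
        · exact ⟨a + 1, hs, Or.inr (Or.inr ⟨h1, rfl⟩)⟩
    · rw [hne s c hc hc']; exact hT.nonempty_iff s c
  · intro s c x hx
    by_cases hc' : c = k + 1
    · subst hc'; exact Or.inr ((memRight s x).1 hx).2
    by_cases hc : c = k
    · subst hc
      rcases ((memLeft s x).1 hx).2 with h1 | h1 | h1
      · exact Or.inl h1.2
      · exact hT.letter _ _ x h1.2
      · exact Or.inr h1.2
    · rw [hne s c hc hc'] at hx; exact hT.letter s c x hx
  · intro s s' c hss h1 h2
    by_cases hc' : c = k + 1
    · subst hc'; exact hpure.2 ⟨s', h2⟩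
    by_cases hc : c = k
    · subst hc
      have := lowL s' h2
      have := highL s h1
      omega
    · rw [hne _ c hc hc'] at h1 h2; exact hT.col s s' c hss h1 h2
  · intro c hc s
    rw [hne s c (by omega) (by omega)]
    exact h.old c (by omega) s
  · intro c hc hh
    obtain ⟨d, h1, h2, h3⟩ := h.next c (by omega) hh
    refine ⟨d, ?_, h2, h3⟩
    rcases (Nat.succ_le_of_lt h1).lt_or_eq with h1 | rfl
    · exact h1
    · obtain ⟨s, hs⟩ := hm.1
      rw [h.old (k + 1) (by omega)] at hs
      exact absurd ⟨s, hs⟩ h3.2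
  · rintro m ⟨s, h1, h2⟩
    by_cases hmk : m = k
    · subst hmk; exact absurd ⟨s, h2⟩ hpure.2
    by_cases hmk' : m + 1 = k
    · rw [hne _ _ (by omega) (by omega)] at h1
      rw [hmk'] at h2
      have h3 := ((memLeft s _).1 h2).1
      have h4 := lowL s h2
      have h5 := h.prev s m hmk' h3 h1
      have h6 := hlow s (hD h3 (hT.region ht) le_rfl h4 (Nat.le_succ k) le_rfl) h4
      rw [h.old (k + 1) (Nat.lt_succ_self k)] at h6
      exact absurd ⟨s, h5, h6⟩ (h₀ k)
    by_cases hmk'' : m = k + 1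
    · exact hmk''
    · rw [hne _ _ hmk hmk''] at h1
      rw [hne _ _ hmk' (by omega)] at h2
      have := h.desc m ⟨s, h1, h2⟩
      omega
  · intro s c hc hs h1
    obtain rfl : c = k := Nat.succ_injective hc
    rw [← h.old (c + 1) (Nat.lt_succ_self c)]
    rcases ((memLeft s (a + 1)).1 h1).2 with h2 | h2 | h2
    · omega
    · rw [h2.1]; exact h2.2
    · exact hhigh s hs h2.1
  · rw [← h.word]
    refine signWord_eq_of_swap (hL t (k + 1) (hT.region ht))
      (fun c hc hc' => colSign_congr fun s => hne s c hc hc') ⟨?_, ?_⟩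
      (Or.inr (colSign_of_mixed hm))
    · rw [colSign_of_mixed hm, colSign_of_mixed hmixed]
    · rw [colSign_of_pureHigh hpure, colSign_of_pureHigh h.pure]

/-- The descent-resolution algorithm stops, with a unique outcome. -/
theorem HighState.exists_resolvesTo {a L R : ℕ} {D : ℕ → ℕ → Prop} {S₀ : Filling}
    {W : List Sign} (hD : ConvexRegion D) (hL : ∀ r c, D r c → c < L)
    (hR : ∀ r c, D r c → r < R) (h₀ : ∀ k, ¬ Descent a S₀ k) {j : ℕ} {S : Filling}
    (h : HighState a L D S₀ W j S) :
    ∃ N, ResolvesTo a S N ∧ (∀ N', ResolvesTo a S N' → N' = N) ∧ IsTwoLetter a D N ∧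
      signWord a L N = W := by
  obtain ⟨b, hb⟩ : ∃ b, L - j = b := ⟨_, rfl⟩
  induction b generalizing j S with
  | zero =>
    obtain ⟨r, hr⟩ := h.pure.1
    have := hL r j (h.two.region hr)
    omega
  | succ b ih =>
    have hstep : ∀ X, ResStep a S X → Descent a S j ∧ X = moveHigh a j S := by
      intro X hX
      cases hX with
      | m1 m hd hm _ =>
        obtain rfl := h.desc m hd
        exact absurd hm.1 h.pure.2
      | twoM m hd _ _ =>
        obtain rfl := h.desc m hd
        exact ⟨hd, rfl⟩
      | twoOne m hd _ hm =>
        obtain rfl := h.desc m hd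
        exact absurd hm h.not_pureLow
    by_cases hd : Descent a S j
    · obtain ⟨N, h1, h2, h3⟩ := ih (h.step hD hL hR h₀ hd) (by omega)
      refine ⟨N, ⟨.head (.twoM j hd h.pure (h.mixed hd)) h1.1, h1.2⟩, ?_, h3⟩
      rintro N' ⟨h4, h5⟩
      rcases h4.cases_head with rfl | ⟨X, h4, h6⟩
      · exact absurd hd (h5 j)
      · obtain ⟨-, rfl⟩ := hstep X h4
        exact h2 N' ⟨h6, h5⟩
    · refine ⟨S, ⟨.refl, ?_⟩, ?_, h.two, h.word⟩
      · intro m hm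
        obtain rfl := h.desc m hm
        exact hd hm
      · rintro N' ⟨h1, -⟩
        rcases h1.cases_head with h1 | ⟨X, h1, -⟩
        · exact h1.symm
        · exact absurd (hstep X h1).1 hd

theorem HighState.init {a L : ℕ} {D : ℕ → ℕ → Prop} {S₀ : Filling} {A : ℕ}
    (hT : IsTwoLetter a D S₀) (h₀ : ∀ k, ¬ Descent a S₀ k) (hA : PureLow a S₀ A)
    (hnext : ∀ c, A < c → PureLow a S₀ c → ∃ d, A < d ∧ d < c ∧ PureHigh a S₀ d) :
    HighState a L D S₀ (signWord a L (setCol A (a + 1) S₀)) A (setCol A (a + 1) S₀) := by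
  have hA' : PureHigh a (setCol A (a + 1) S₀) A := by
    obtain ⟨r, hr⟩ := hA.1
    refine ⟨⟨r, mem_setCol_self.2 ⟨⟨_, hr⟩, rfl⟩⟩, ?_⟩
    rintro ⟨s, hs⟩
    have := (mem_setCol_self.1 hs).2
    omega
  refine ⟨⟨?_, ?_, ?_⟩, ?_, hA', hnext, ?_, ?_, rfl⟩
  · intro r c
    by_cases hc : c = A
    · subst hc
      simp only [Finset.Nonempty, mem_setCol_self, exists_and_left, exists_eq, and_true]
      exact hT.nonempty_iff r c
    · rw [setCol_of_ne hc]; exact hT.nonempty_iff r c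
  · intro r c x hx
    by_cases hc : c = A
    · subst hc; exact Or.inr (mem_setCol_self.1 hx).2
    · rw [setCol_of_ne hc] at hx; exact hT.letter r c x hx
  · intro r s c hrs h1 h2
    by_cases hc : c = A
    · subst hc; exact hA'.2 ⟨s, h2⟩
    · rw [setCol_of_ne hc] at h1 h2; exact hT.col r s c hrs h1 h2
  · intro c hc r
    rw [setCol_of_ne hc.ne']
  · rintro k ⟨r, h1, h2⟩
    by_contra hk
    by_cases hkA : k + 1 = A
    · subst hkA; exact hA'.2 ⟨r, h2⟩
    · rw [setCol_of_ne hk] at h1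
      rw [setCol_of_ne hkA] at h2
      exact h₀ k ⟨r, h1, h2⟩
  · rintro r c rfl hr h1
    rw [setCol_of_ne (by omega)] at h1
    refine (hT.mem_or hr).resolve_left fun h2 => h₀ c ⟨r, h1, h2⟩

end

end SetValuedRPP

namespace SetValuedRPP

noncomputable section

open scoped Classical

variable {n : ℕ} {lam mu : YoungDiagram}

/-! ### The two-letter part of a set-valued reverse plane partition -/

theorem InSkew.convex : ConvexRegion (InSkew lam mu) := by
  intro r s t c d e h h' h1 h2 h3 h4
  exact ⟨lam.up_left_mem h2 h4 h'.1, fun hm => h.2 (mu.up_left_mem h1 h3 hm)⟩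

theorem SetLE.trans {A B C : Finset ℕ} (hB : B.Nonempty) (h : SetLE A B) (h' : SetLE B C) :
    SetLE A C := by
  obtain ⟨b, hb⟩ := hB
  exact fun a ha c hc => (h a ha b hb).trans (h' b hb c hc)

namespace SVRPP

variable (T : SVRPP n lam mu)

theorem inSkew_of_mem {r c x : ℕ} (h : x ∈ T.entry r c) : InSkew lam mu r c := by
  by_contra h'
  rw [T.eq_empty r c h'] at h
  exact Finset.notMem_empty x h

theorem setLE_row {r c d : ℕ} (hc : InSkew lam mu r c) (hcd : c < d)
    (hd : InSkew lam mu r d) : SetLE (T.entry r c) (T.entry r d) := by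
  induction d, hcd using Nat.le_induction with
  | base => exact T.row_le r c hc hd
  | succ d hcd ih =>
    have hm : InSkew lam mu r d :=
      InSkew.convex hc hd le_rfl le_rfl (Nat.le_of_succ_le hcd) (Nat.le_succ d)
    exact (ih hm).trans (T.nonempty r d hm) (T.row_le r d hm hd)

theorem setLE_col {r s c : ℕ} (hr : InSkew lam mu r c) (hrs : r < s)
    (hs : InSkew lam mu s c) : SetLE (T.entry r c) (T.entry s c) := by
  induction s, hrs using Nat.le_induction with
  | base => exact T.col_le r c hr hs
  | succ s hrs ih =>
    have hm : InSkew lam mu s c :=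
      InSkew.convex hr hs (Nat.le_of_succ_le hrs) (Nat.le_succ s) le_rfl le_rfl
    exact (ih hm).trans (T.nonempty s c hm) (T.col_le s c hm hs)

theorem setLE_of_le {r s c d : ℕ} (h : InSkew lam mu r c) (h' : InSkew lam mu s d)
    (hrs : r ≤ s) (hcd : c ≤ d) (hne : r ≠ s ∨ c ≠ d) :
    SetLE (T.entry r c) (T.entry s d) := by
  rcases hrs.eq_or_lt with rfl | hrs
  · exact T.setLE_row h (by omega) h'
  rcases hcd.eq_or_lt with rfl | hcd
  · exact T.setLE_col h hrs h'
  have hm : InSkew lam mu r d := InSkew.convex h h' le_rfl hrs.le hcd.le le_rfl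
  exact (T.setLE_row h hcd hm).trans (T.nonempty r d hm) (T.setLE_col hm hrs h')

/-- The boxes of `T` containing `i` or `i + 1`. -/
def twoRegion (i r c : ℕ) : Prop := (restrictTwo i T.entry r c).Nonempty

theorem mem_restrictTwo {i r c x : ℕ} {S : Filling} :
    x ∈ restrictTwo i S r c ↔ x ∈ S r c ∧ (x = i ∨ x = i + 1) := Finset.mem_filter

theorem twoRegion_inSkew {i r c : ℕ} (h : T.twoRegion i r c) : InSkew lam mu r c := by
  obtain ⟨x, hx⟩ := h
  exact T.inSkew_of_mem (mem_restrictTwo.1 hx).1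

theorem twoRegion_convex (i : ℕ) : ConvexRegion (T.twoRegion i) := by
  intro r s t c d e h h' h1 h2 h3 h4
  by_cases hrc : r ≠ s ∨ c ≠ d
  · by_cases hte : s ≠ t ∨ d ≠ e
    · have hm := InSkew.convex (T.twoRegion_inSkew h) (T.twoRegion_inSkew h') h1 h2 h3 h4
      obtain ⟨y, hy⟩ := T.nonempty s d hm
      obtain ⟨x, hx⟩ := id h
      obtain ⟨z, hz⟩ := id h'
      rw [mem_restrictTwo] at hx hz
      have h5 := T.setLE_of_le (T.twoRegion_inSkew h) hm h1 h3 hrc x hx.1 y hy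
      have h6 := T.setLE_of_le hm (T.twoRegion_inSkew h') h2 h4 hte y hy z hz.1
      exact ⟨y, mem_restrictTwo.2 ⟨hy, by omega⟩⟩
    · push Not at hte
      obtain ⟨rfl, rfl⟩ := hte
      exact h'
  · push Not at hrc
    obtain ⟨rfl, rfl⟩ := hrc
    exact h

theorem isTwoLetter_restrictTwo (i : ℕ) :
    IsTwoLetter i (T.twoRegion i) (restrictTwo i T.entry) where
  nonempty_iff _ _ := Iff.rfl
  letter _ _ _ hx := (mem_restrictTwo.1 hx).2
  col r s c hrs h h' := by
    have h1 := (mem_restrictTwo.1 h).1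
    have h2 := (mem_restrictTwo.1 h').1
    have := T.setLE_col (T.inSkew_of_mem h1) hrs (T.inSkew_of_mem h2) _ h1 _ h2
    omega

theorem not_descent_restrictTwo (i k : ℕ) : ¬ Descent i (restrictTwo i T.entry) k := by
  rintro ⟨r, h, h'⟩
  have h1 := (mem_restrictTwo.1 h).1
  have h2 := (mem_restrictTwo.1 h').1
  have := T.row_le r k (T.inSkew_of_mem h1) (T.inSkew_of_mem h2) _ h1 _ h2
  omega

theorem twoRegion_col_lt {i r c : ℕ} (h : T.twoRegion i r c) : c < lam.rowLen 0 :=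
  YoungDiagram.mem_iff_lt_rowLen.1
    (lam.up_left_mem (Nat.zero_le r) le_rfl (T.twoRegion_inSkew h).1)

theorem twoRegion_row_lt {i r c : ℕ} (h : T.twoRegion i r c) : r < lam.colLen 0 :=
  YoungDiagram.mem_iff_lt_colLen.1
    (lam.up_left_mem le_rfl (Nat.zero_le c) (T.twoRegion_inSkew h).1)

/-- Replacing the two-letter part of an entry keeps the order between two entries. -/
theorem setLE_replaceTwo {i r c s d : ℕ} {N : Filling} (hN : IsTwoLetter i (T.twoRegion i) N)
    (h : SetLE (T.entry r c) (T.entry s d)) (hrs : i + 1 ∈ N r c → i ∉ N s d) :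
    SetLE (replaceTwo i T.entry N r c) (replaceTwo i T.entry N s d) := by
  intro x hx y hy
  simp only [replaceTwo, Finset.mem_union, Finset.mem_filter] at hx hy
  rcases hx with ⟨hx, hx'⟩ | hx <;> rcases hy with ⟨hy, hy'⟩ | hy
  · exact h x hx y hy
  · obtain ⟨z, hz⟩ := hN.region hy
    rw [mem_restrictTwo] at hz
    have := h x hx z hz.1
    have := hN.letter _ _ y hy
    omega
  · obtain ⟨z, hz⟩ := hN.region hx
    rw [mem_restrictTwo] at hz
    have := h z hz.1 y hy
    have := hN.letter _ _ x hx
    omega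
  · rcases hN.letter _ _ x hx with rfl | rfl <;> rcases hN.letter _ _ y hy with rfl | rfl
    · exact le_rfl
    · exact Nat.le_succ _
    · exact absurd hy (hrs hx)
    · exact le_rfl

theorem exists_entry_eq_replaceTwo {i : ℕ} (hi : 1 ≤ i) (hin : i < n) {N : Filling}
    (hN : IsTwoLetter i (T.twoRegion i) N) (hd : ∀ k, ¬ Descent i N k) :
    ∃ T' : SVRPP n lam mu, T'.entry = replaceTwo i T.entry N := by
  refine ⟨⟨replaceTwo i T.entry N, ?_, ?_, ?_, ?_, ?_⟩, rfl⟩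
  · intro r c h
    rw [replaceTwo, T.eq_empty r c h, hN.eq_empty_iff.2 fun h' => h (T.twoRegion_inSkew h')]
    rfl
  · intro r c h
    obtain ⟨x, hx⟩ := T.nonempty r c h
    by_cases hx' : x = i ∨ x = i + 1
    · exact ((hN.nonempty_iff r c).2 ⟨x, mem_restrictTwo.2 ⟨hx, hx'⟩⟩).mono
        Finset.subset_union_right
    · exact ⟨x, Finset.mem_union_left _ (Finset.mem_filter.2 ⟨hx, hx'⟩)⟩
  · intro r c x hx
    rcases Finset.mem_union.1 hx with hx | hx
    · exact T.subset r c (Finset.mem_filter.1 hx).1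
    · have := hN.letter r c x hx
      rw [Finset.mem_Icc]
      omega
  · intro r c h h'
    exact T.setLE_replaceTwo hN (T.row_le r c h h') fun h1 h2 => hd c ⟨r, h1, h2⟩
  · intro r c h h'
    exact T.setLE_replaceTwo hN (T.col_le r c h h') (hN.col r (r + 1) c (Nat.lt_succ_self r))

theorem restrictTwo_replaceTwo {i : ℕ} {D : ℕ → ℕ → Prop} {S N : Filling}
    (hN : IsTwoLetter i D N) : restrictTwo i (replaceTwo i S N) = N := by
  funext r c
  ext x
  have := hN.letter r c x
  simp only [mem_restrictTwo, replaceTwo, Finset.mem_union, Finset.mem_filter]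
  tauto

theorem exists_resolve_eq_some {i : ℕ} (hi : 1 ≤ i) (hin : i < n) {S N : Filling}
    (h : ResolvesTo i S N) (huniq : ∀ N', ResolvesTo i S N' → N' = N)
    (hN : IsTwoLetter i (T.twoRegion i) N) :
    ∃ T', resolve i T S = some T' ∧ restrictTwo i T'.entry = N := by
  obtain ⟨T', hT'⟩ := T.exists_entry_eq_replaceTwo hi hin hN h.2
  have hex : ∃! T' : SVRPP n lam mu,
      ∃ N, ResolvesTo i S N ∧ T'.entry = replaceTwo i T.entry N := by
    refine ⟨T', ⟨N, h, hT'⟩, ?_⟩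
    rintro T'' ⟨N', h1, h2⟩
    rw [huniq N' h1] at h2
    exact SVRPP.ext (h2.trans hT'.symm)
  obtain ⟨N', h1, h2⟩ := hex.choose_spec.1
  refine ⟨hex.choose, by rw [resolve, dif_pos hex], ?_⟩
  rw [h2, huniq N' h1, restrictTwo_replaceTwo hN]

end SVRPP

/-! ### Signatures and sign words -/

/-- The sign of a column of `S`, together with the column. -/
def colSignAt (i : ℕ) (S : Filling) (c : ℕ) : Option (Sign × ℕ) :=
  if PureLow i S c then some (Sign.plus, c)
  else if PureHigh i S c then some (Sign.minus, c)
  else none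

theorem signature_eq (i : ℕ) (T : SVRPP n lam mu) :
    signature i T
      = (List.range (lam.rowLen 0)).filterMap (colSignAt i (restrictTwo i T.entry)) := rfl

theorem colSignAt_eq_plus {i c d : ℕ} {S : Filling}
    (h : colSignAt i S c = some (Sign.plus, d)) : PureLow i S c ∧ c = d := by
  unfold colSignAt at h
  split_ifs at h <;> simp_all

theorem colSignAt_eq_minus {i c d : ℕ} {S : Filling}
    (h : colSignAt i S c = some (Sign.minus, d)) : PureHigh i S c ∧ c = d := by
  unfold colSignAt at h
  split_ifs at h <;> simp_all

theorem colSignAt_of_pureLow {i c : ℕ} {S : Filling} (h : PureLow i S c) :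
    colSignAt i S c = some (Sign.plus, c) := if_pos h

theorem colSignAt_of_pureHigh {i c : ℕ} {S : Filling} (h : PureHigh i S c) :
    colSignAt i S c = some (Sign.minus, c) := by
  rw [colSignAt, if_neg (fun h' => h'.2 h.1), if_pos h]

theorem map_fst_filterMap_colSignAt (i : ℕ) (S : Filling) (l : List ℕ) :
    (l.filterMap (colSignAt i S)).map Prod.fst = l.filterMap (colSign i S) := by
  rw [List.map_filterMap]
  refine List.filterMap_congr fun c _ => ?_
  unfold colSignAt colSign
  split_ifs <;> rfl

theorem reducedCounts_signWord (i : ℕ) (T : SVRPP n lam mu) :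
    reducedCounts (signWord i (lam.rowLen 0) (restrictTwo i T.entry))
      = ((plusCols i T).length, (minusCols i T).length) := by
  rw [signWord, ← map_fst_filterMap_colSignAt, ← signature_eq, reducedCounts_eq]
  rfl

theorem exists_split_of_filterMap_range {α : Type*} {g : ℕ → Option α} {L : ℕ} {u v : List α}
    {x : α} (h : (List.range L).filterMap g = u ++ x :: v) :
    ∃ A l₁ l₂, List.range L = l₁ ++ A :: l₂ ∧ g A = some x ∧ l₁.filterMap g = u ∧
      l₂.filterMap g = v := by
  obtain ⟨l₁, l₂, h1, h2, h3⟩ := List.filterMap_eq_append_iff.1 h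
  obtain ⟨l₃, A, l₄, h4, h5, h6, h7⟩ := List.filterMap_eq_cons_iff.1 h3
  refine ⟨A, l₁ ++ l₃, l₄, by rw [h1, h4, List.append_assoc], h6, ?_, h7⟩
  rw [List.filterMap_append, h2, List.filterMap_eq_nil_iff.2 h5, List.append_nil]

theorem lt_of_range_eq_append {L A : ℕ} {l₁ l₂ : List ℕ} (h : List.range L = l₁ ++ A :: l₂) :
    (∀ c ∈ l₁, c < A) ∧ (∀ c ∈ l₂, A < c) ∧ l₁.Pairwise (· < ·) ∧ l₂.Pairwise (· < ·) := by
  have hp := List.pairwise_lt_range (n := L)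
  rw [h, List.pairwise_append, List.pairwise_cons] at hp
  exact ⟨fun c hc => hp.2.2 c hc A List.mem_cons_self, hp.2.1.1, hp.1, hp.2.1.2⟩

theorem signWord_setCol {i L A x : ℕ} {s : Sign} {l₁ l₂ : List ℕ} {S : Filling}
    (h : List.range L = l₁ ++ A :: l₂) (hs : colSign i (setCol A x S) A = some s) :
    signWord i L (setCol A x S)
      = (l₁.filterMap (colSignAt i S)).map Prod.fst
        ++ s :: (l₂.filterMap (colSignAt i S)).map Prod.fst := by
  obtain ⟨h1, h2, -, -⟩ := lt_of_range_eq_append h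
  have e₁ : l₁.filterMap (colSign i (setCol A x S)) = l₁.filterMap (colSign i S) :=
    List.filterMap_congr fun c hc => colSign_congr fun _ => setCol_of_ne (h1 c hc).ne
  have e₂ : l₂.filterMap (colSign i (setCol A x S)) = l₂.filterMap (colSign i S) :=
    List.filterMap_congr fun c hc => colSign_congr fun _ => setCol_of_ne (h2 c hc).ne'
  rw [map_fst_filterMap_colSignAt, map_fst_filterMap_colSignAt, signWord, h,
    List.filterMap_append, e₁, List.filterMap_cons, hs, e₂]

/-! ### The effect of the crystal operators on the reduced signature -/

theorem exists_e_eq_some {i : ℕ} (hi : 1 ≤ i) (hin : i < n) (T : SVRPP n lam mu) {m : ℕ}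
    (hm : (minusCols i T).length = m + 1) :
    ∃ T', e i T = some T' ∧ (minusCols i T').length = m := by
  obtain ⟨A, hA⟩ : ∃ A, (minusCols i T).head? = some A := by
    cases h : minusCols i T with
    | nil => simp [h] at hm
    | cons A l => exact ⟨A, rfl⟩
  set S := restrictTwo i T.entry
  obtain ⟨u, v, p, q, h1, h2, h3, h4⟩ := exists_split_of_head_minusPart (w := signature i T) hA
  obtain ⟨B, l₁, l₂, h5, h6, h7, h8⟩ :=
    exists_split_of_filterMap_range ((signature_eq i T).symm.trans h1)
  obtain ⟨hpure, rfl⟩ := colSignAt_eq_minus h6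
  obtain ⟨hl₁, hl₂, hl₃, -⟩ := lt_of_range_eq_append h5
  have hprev : ∀ c, c < B → PureHigh i S c → ∃ d, c < d ∧ d < B ∧ PureLow i S d := by
    intro c hc hc'
    by_contra! hno
    have hcl : c ∈ l₁ := by
      have hB : B ∈ List.range (lam.rowLen 0) := by simp [h5]
      have hcL : c ∈ List.range (lam.rowLen 0) :=
        List.mem_range.2 (hc.trans (List.mem_range.1 hB))
      rw [h5, List.mem_append, List.mem_cons] at hcL
      rcases hcL with h | h | h
      · exact h
      · omega
      · have := hl₂ c h; omega
    obtain ⟨k₁, k₂, rfl⟩ := List.append_of_mem hcl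
    rw [List.filterMap_append, List.filterMap_cons, colSignAt_of_pureHigh hc'] at h7
    obtain ⟨y, hy⟩ : ∃ y, u.getLast? = some y := by
      rw [← h7, List.getLast?_append_of_ne_nil _ (by simp)]
      exact ⟨_, List.getLast?_eq_some_getLast (by simp)⟩
    have hy' : y ∈ (Sign.minus, c) :: k₂.filterMap (colSignAt i S) := by
      rw [← h7, List.getLast?_append_of_ne_nil _ (by simp)] at hy
      exact List.mem_of_getLast? hy
    obtain ⟨_ | _, b⟩ := y
    · simp only [List.mem_cons, Prod.mk.injEq, reduceCtorEq, false_and, false_or,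
        List.mem_filterMap] at hy'
      obtain ⟨d, hd, hd'⟩ := hy'
      rw [List.pairwise_append, List.pairwise_cons] at hl₃
      exact hno d (hl₃.2.1.1 d hd) (hl₁ d (by simp [hd])) (colSignAt_eq_plus hd').1
    · exact h2 b hy
  have hst := LowState.init (L := lam.rowLen 0) (T.isTwoLetter_restrictTwo i)
    (T.not_descent_restrictTwo i) hpure hprev
  have hword := signWord_setCol h5 (colSign_of_pureLow hst.pure)
  obtain ⟨N, n1, n2, n3, n4⟩ := hst.exists_resolvesTo (T.twoRegion_convex i)
    (fun _ _ => T.twoRegion_col_lt) (T.not_descent_restrictTwo i)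
  obtain ⟨T', t1, t2⟩ := T.exists_resolve_eq_some hi hin n1 n2 n3
  refine ⟨T', by rw [e, hA]; exact t1, ?_⟩
  have c1 := reducedCounts_signWord i T'
  rw [t2, n4, hword, h7, h8, h4, Prod.mk.injEq] at c1
  have c2 := reducedCounts_signWord i T
  rw [signWord, ← map_fst_filterMap_colSignAt, ← signature_eq, h3, Prod.mk.injEq] at c2
  omega

theorem exists_f_eq_some {i : ℕ} (hi : 1 ≤ i) (hin : i < n) (T : SVRPP n lam mu) {m : ℕ}
    (hm : (plusCols i T).length = m + 1) :
    ∃ T', f i T = some T' ∧ (plusCols i T').length = m := by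
  obtain ⟨A, hA⟩ : ∃ A, (plusCols i T).getLast? = some A :=
    ⟨_, List.getLast?_eq_some_getLast (List.ne_nil_of_length_eq_add_one hm)⟩
  set S := restrictTwo i T.entry
  obtain ⟨u, v, p, q, h1, h2, h3, h4⟩ := exists_split_of_getLast_plusPart (w := signature i T) hA
  obtain ⟨B, l₁, l₂, h5, h6, h7, h8⟩ :=
    exists_split_of_filterMap_range ((signature_eq i T).symm.trans h1)
  obtain ⟨hpure, rfl⟩ := colSignAt_eq_plus h6
  obtain ⟨hl₁, hl₂, -, hl₃⟩ := lt_of_range_eq_append h5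
  have hnext : ∀ c, B < c → PureLow i S c → ∃ d, B < d ∧ d < c ∧ PureHigh i S d := by
    intro c hc hc'
    by_contra! hno
    have hcl : c ∈ l₂ := by
      obtain ⟨r, hr⟩ := hc'.1
      have hcL : c ∈ List.range (lam.rowLen 0) :=
        List.mem_range.2 (T.twoRegion_col_lt (i := i) (r := r) ⟨_, hr⟩)
      rw [h5, List.mem_append, List.mem_cons] at hcL
      rcases hcL with h | h | h
      · have := hl₁ c h; omega
      · omega
      · exact h
    obtain ⟨k₁, k₂, rfl⟩ := List.append_of_mem hcl
    rw [List.filterMap_append, List.filterMap_cons, colSignAt_of_pureLow hc'] at h8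
    rcases hk : k₁.filterMap (colSignAt i S) with _ | ⟨⟨_ | _, b⟩, l⟩
    · rw [hk] at h8
      exact h2 c (by rw [← h8]; rfl)
    · rw [hk] at h8
      exact h2 b (by rw [← h8]; rfl)
    · have hb : (Sign.minus, b) ∈ k₁.filterMap (colSignAt i S) := by simp [hk]
      obtain ⟨d, hd, hd'⟩ := List.mem_filterMap.1 hb
      rw [List.pairwise_append] at hl₃
      exact hno d (hl₂ d (by simp [hd])) (hl₃.2.2 d hd c List.mem_cons_self)
        (colSignAt_eq_minus hd').1
  have hst := HighState.init (L := lam.rowLen 0) (T.isTwoLetter_restrictTwo i)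
    (T.not_descent_restrictTwo i) hpure hnext
  have hword := signWord_setCol h5 (colSign_of_pureHigh hst.pure)
  obtain ⟨N, n1, n2, n3, n4⟩ := hst.exists_resolvesTo (T.twoRegion_convex i)
    (fun _ _ => T.twoRegion_col_lt) (fun _ _ => T.twoRegion_row_lt)
    (T.not_descent_restrictTwo i)
  obtain ⟨T', t1, t2⟩ := T.exists_resolve_eq_some hi hin n1 n2 n3
  refine ⟨T', by rw [f, hA]; exact t1, ?_⟩
  have c1 := reducedCounts_signWord i T'
  rw [t2, n4, hword, h7, h8, h4, Prod.mk.injEq] at c1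
  have c2 := reducedCounts_signWord i T
  rw [signWord, ← map_fst_filterMap_colSignAt, ← signature_eq, h3, Prod.mk.injEq] at c2
  omega

/-- A partial map lowering `len` by one wherever `len` is positive, and undefined elsewhere,
can be iterated exactly `len x` times at `x`. -/
theorem isGreatest_iterate_bind {X : Type*} (g : X → Option X) (len : X → ℕ)
    (h0 : ∀ x, len x = 0 → g x = none)
    (h1 : ∀ x m, len x = m + 1 → ∃ y, g x = some y ∧ len y = m) (x : X) :
    IsGreatest {k : ℕ | (fun o : Option X => o.bind g)^[k] (some x) ≠ none} (len x) := by
  have hnone : ∀ k, (fun o : Option X => o.bind g)^[k] none = none :=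
    fun k => Function.iterate_fixed rfl k
  have key : ∀ k x, (fun o : Option X => o.bind g)^[k] (some x) ≠ none ↔ k ≤ len x := by
    intro k
    induction k with
    | zero => simp
    | succ k ih =>
      intro x
      rw [Function.iterate_succ_apply, Option.bind_some]
      rcases hx : len x with _ | m
      · simp [h0 x hx, hnone]
      · obtain ⟨y, hy, rfl⟩ := h1 x m hx
        rw [hy, ih y, Nat.succ_le_succ_iff]
  exact ⟨(key _ x).2 le_rfl, fun k hk => (key k x).1 hk⟩

end

end SetValuedRPP

/-- `ε_i(T) = max {k : e_i^k(T) ≠ 0}` is the number of `−` signs, and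
`φ_i(T) = max {k : f_i^k(T) ≠ 0}` is the number of `+` signs, in the reduced `i`-signature
of `T`. -/
theorem string_lengths_eq_signature_counts
    (lam mu : YoungDiagram) (hsub : mu ≤ lam) (n : ℕ) (i : ℕ) (hi : 1 ≤ i) (hin : i < n)
    (T : SetValuedRPP.SVRPP n lam mu) :
    IsGreatest {k : ℕ | SetValuedRPP.ePow i k T ≠ none}
        (SetValuedRPP.minusCols i T).length ∧
      IsGreatest {k : ℕ | SetValuedRPP.fPow i k T ≠ none}
        (SetValuedRPP.plusCols i T).length := by
  constructor
  · refine SetValuedRPP.isGreatest_iterate_bind (SetValuedRPP.e i)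
      (fun T => (SetValuedRPP.minusCols i T).length) (fun T hT => ?_)
      (fun T _ => SetValuedRPP.exists_e_eq_some hi hin T) T
    rw [SetValuedRPP.e, List.eq_nil_of_length_eq_zero hT]
    rfl
  · refine SetValuedRPP.isGreatest_iterate_bind (SetValuedRPP.f i)
      (fun T => (SetValuedRPP.plusCols i T).length) (fun T hT => ?_)
      (fun T _ => SetValuedRPP.exists_f_eq_some hi hin T) T
    rw [SetValuedRPP.f, List.eq_nil_of_length_eq_zero hT]
    rfl
end

section
/- Partitions are identified with their Young diagrams; for partitions $\mu\subseteq\lambda$, the skew shape $\lambda/\mu$ consists of the boxes of $\lambda$ not in $\mu$. For nonempty finite sets $A,B$ of positive integers write $A\le B$ if $\max A\le\min B$. For $n\ge 1$ let $\mathrm{SVRPP}^n(\lambda/\mu)$ be the set of fillings $T$ of the boxes of $\lambda/\mu$ with nonempty subsets of $\{1,\dots,n\}$ that weakly increase along rows and down columns (set-valued reverse plane partitions). Let $\mathrm{wt}(T)\in\mathbb Z^n$ be the vector whose $j$-th coordinate is the number of columns of $T$ having a box whose set contains $j$. *Descent resolution.* Let $1\le i\le n-1$, and consider fillings $S$ of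 a skew shape with nonempty subsets of $\{i,i+1\}$ that weakly increase down columns. A nonempty column of $S$ is $i$-pure if all its boxes contain $\{i\}$, $(i+1)$-pure if all its boxes contain $\{i+1\}$, and mixed otherwise. An index $k$ is a descent of $S$ if, in some row, $i+1$ lies in the set in column $k$ and $i$ lies in the set in column $k+1$. A resolution step at a descent $k$ changes columns $k$ and $k+1$ as follows. (M1) If column $k$ is mixed and column $k+1$ is $i$-pure, let $r$ be the smallest row in which column $k$ contains $i+1$, and $E$ the set there; column $k$ becomes $i$-pure, and column $k+1$ receives $\{i\}$ above row $r$, $E$ in row $r$, and $\{i+1\}$ below row $r$. (2M) If column $k$ is $(i+1)$-pure and column $k+1$ is mixed, let $r$ be the largest row in which column $k+1$ contains $i$, and $E$ the set there; column $k+1$ becomes $(i+1)$-pure, and column $k$ receives $\{i\}$ above row $r$, $E$ in row $r$, and $\{i+1\}$ below row $r$. (21) If column $k$ is $(i+1)$-pure and column $k+1$ is $i$-pure, column $k$ becomes $i$-pure and column $k+1$ becomes $(i+1)$-pure. The algorithm performs such steps, in any order, until no descent remains. *Operators.* For $T\in\mathrm{SVRPP}^n(\lambda/\mu)$ let $T^{(i)}$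 be its restriction to the letters $i,i+1$ (each box keeps its intersection with $\{i,i+1\}$; boxes with empty intersection are discarded). The $i$-signature of $T$ has a $+$ for each $i$-pure and a $-$ for each $(i+1)$-pure column of $T^{(i)}$, from left to right; successively cancelling pairs in which a $-$ immediately precedes a $+$ gives the reduced $i$-signature $+\cdots+-\cdots-$. If it has no $-$, then $e_i(T)=0$; otherwise $e_i(T)$ is obtained from $T$ by replacing, in $T^{(i)}$, every $\{i+1\}$ in the column of the leftmost uncancelled $-$ by $\{i\}$, and then replacing $T^{(i)}$ in $T$ by the outcome of the descent-resolution algorithm. If it has no $+$, then $f_i(T)=0$; otherwise $f_i(T)$ is obtained in the same way by replacing every $\{i\}$ in the column of the rightmost uncancelled $+$ by $\{i+1\}$. *Theorem.* For every skew shape $\lambda/\mu$ and every $n\ge1$, the outcome of the algorithm in the definitions of $e_i$ and $f_i$ exists and is unique, and $\mathrm{SVRPP}^n(\lambda/\mu)$ with the maps $\mathrm{wt},e_i,f_i$ is a seminormal $\mathfrak{gl}_n$-crystal. That is, for all $T,T'\in\mathrm{SVRPP}^n(\lambda/\mu)$ and $1\le i\le n-1$: (a) $e_i(T),f_i(T)\in\mathrm{SVRPP}^n(\lambda/\mu)\sqcup\{0\}$;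 (b) $e_i(T)=T'$ if and only if $f_i(T')=T$, and in this case $\mathrm{wt}(T')=\mathrm{wt}(T)+\mathbf e_i-\mathbf e_{i+1}$, where $\mathbf e_1,\dots,\mathbf e_n$ is the standard basis of $\mathbb Z^n$; (c) the string lengths $\varepsilon_i(T)=\max\{k\ge0: e_i^k(T)\ne0\}$ and $\varphi_i(T)=\max\{k\ge0: f_i^k(T)\ne0\}$ are finite, and $\varphi_i(T)-\varepsilon_i(T)=\mathrm{wt}(T)_i-\mathrm{wt}(T)_{i+1}$. -/
/-! ### Kashiwara `gl_n`-crystals -/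

/-- `opIter g k x = g^k(x)` for a partial map `g`, where `none` plays the role of `0`. -/
def opIter {X : Type*} (g : X → Option X) : ℕ → X → Option X
  | 0, x => some x
  | k + 1, x => (opIter g k x).bind g

/-- `L` is the string length `max {k ≥ 0 : g^k(x) ≠ 0}`; in particular this maximum is finite. -/
def IsStringLength {X : Type*} (g : X → Option X) (x : X) (L : ℕ) : Prop :=
  IsGreatest {k : ℕ | opIter g k x ≠ none} L

/-- The set `B` with the weight map `wt : B → ℤ^n` (coordinates `1, …, n`) and the operators
`e i, f i : B → B ⊔ {0}`, `1 ≤ i ≤ n - 1`, is a `gl_n`-crystal. -/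
structure IsGLCrystal (n : ℕ) {X : Type*} (B : Set X) (wt : X → Set.Icc 1 n → ℤ)
    (e f : ℕ → X → Option X) : Prop where
  e_mem : ∀ i, 1 ≤ i → i < n → ∀ b ∈ B, ∀ c, e i b = some c → c ∈ B
  f_mem : ∀ i, 1 ≤ i → i < n → ∀ b ∈ B, ∀ c, f i b = some c → c ∈ B
  e_iff_f : ∀ i, 1 ≤ i → i < n → ∀ b ∈ B, ∀ c ∈ B, (e i b = some c ↔ f i c = some b)
  wt_e : ∀ i, ∀ h1 : 1 ≤ i, ∀ h2 : i < n, ∀ b ∈ B, ∀ c ∈ B, e i b = some c →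
    wt c = wt b + Pi.single (⟨i, h1, h2.le⟩ : Set.Icc 1 n) 1
      - Pi.single (⟨i + 1, Nat.le_add_left 1 i, h2⟩ : Set.Icc 1 n) 1

/-- A `gl_n`-crystal is seminormal if all string lengths are finite and
`φ_i(b) - ε_i(b) = wt(b)_i - wt(b)_{i+1}`. -/
structure IsSeminormalGLCrystal (n : ℕ) {X : Type*} (B : Set X) (wt : X → Set.Icc 1 n → ℤ)
    (e f : ℕ → X → Option X) : Prop extends IsGLCrystal n B wt e f where
  string : ∀ i, ∀ h1 : 1 ≤ i, ∀ h2 : i < n, ∀ b ∈ B, ∃ eps phi : ℕ,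
    IsStringLength (e i) b eps ∧ IsStringLength (f i) b phi ∧
    (phi : ℤ) - (eps : ℤ) = wt b (⟨i, h1, h2.le⟩ : Set.Icc 1 n)
      - wt b (⟨i + 1, Nat.le_add_left 1 i, h2⟩ : Set.Icc 1 n)

/-! ### Set-valued reverse plane partitions -/

/-- A filling of the quadrant: `T r c` is the set in row `r`, column `c` (0-indexed); the empty
set means that there is no box. -/
abbrev Filling : Type := ℕ → ℕ → Finset ℕ

/-- Box `(r, c)` lies in the skew shape `lam/mu`. -/
def InSkew (lam mu : YoungDiagram) (r c : ℕ) : Prop :=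
  (r, c) ∈ lam ∧ (r, c) ∉ mu

/-- `A ≤ B`, that is, `max A ≤ min B` (for nonempty sets). -/
def SetLE (A B : Finset ℕ) : Prop :=
  ∀ a ∈ A, ∀ b ∈ B, a ≤ b

/-- `T ∈ SVRPP^n(lam/mu)`. -/
structure IsSVRPP (n : ℕ) (lam mu : YoungDiagram) (T : Filling) : Prop where
  outside : ∀ r c, ¬ InSkew lam mu r c → T r c = ∅
  nonempty : ∀ r c, InSkew lam mu r c → (T r c).Nonempty
  letters : ∀ r c, T r c ⊆ Finset.Icc 1 n
  row : ∀ r c, InSkew lam mu r c → InSkew lam mu r (c + 1) → SetLE (T r c) (T r (c + 1))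
  col : ∀ r c, InSkew lam mu r c → InSkew lam mu (r + 1) c → SetLE (T r c) (T (r + 1) c)

/-- The number of columns of `T` containing a set that contains `x`. -/
noncomputable def ircont (T : Filling) (x : ℕ) : ℕ :=
  Set.ncard {c : ℕ | ∃ r, x ∈ T r c}

/-- The weight `(ircont(T)_1, …, ircont(T)_n) ∈ ℤ^n`. -/
noncomputable def wtSVRPP (n : ℕ) (T : Filling) : Set.Icc 1 n → ℤ :=
  fun x => (ircont T x : ℤ)

/-! ### Descent resolution on fillings with letters `a` and `a + 1` -/

/-- Column `c` has at least one box. -/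
def ColNonempty (S : Filling) (c : ℕ) : Prop := ∃ r, (S r c).Nonempty

/-- Column `c` is `x`-pure: it has boxes, and all of them are filled with `{x}`. -/
def ColPure (x : ℕ) (S : Filling) (c : ℕ) : Prop :=
  ColNonempty S c ∧ ∀ r, (S r c).Nonempty → S r c = {x}

/-- Column `c` is mixed: it has boxes, and it is neither `a`-pure nor `(a+1)`-pure. -/
def ColMixed (a : ℕ) (S : Filling) (c : ℕ) : Prop :=
  ColNonempty S c ∧ ¬ ColPure a S c ∧ ¬ ColPure (a + 1) S c

/-- `k` is a descent of `S`: in some row, the box in column `k` has maximum `a + 1` and the box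
in column `k + 1` has minimum `a`. -/
def Descent (a : ℕ) (S : Filling) (k : ℕ) : Prop :=
  ∃ r, a + 1 ∈ S r k ∧ a ∈ S r (k + 1)

/-- The smallest row in which column `c` contains the letter `a + 1`. -/
noncomputable def firstHigh (a : ℕ) (S : Filling) (c : ℕ) : ℕ :=
  sInf {r : ℕ | a + 1 ∈ S r c}

/-- The largest row in which column `c` contains the letter `a`. -/
noncomputable def lastLow (a : ℕ) (S : Filling) (c : ℕ) : ℕ :=
  sSup {r : ℕ | a ∈ S r c}

/-- Refill all boxes of column `c` with `{x}`. -/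
def fillPure (x c : ℕ) (S : Filling) : Filling := fun r j =>
  if j = c then (S r j).image (fun _ => x) else S r j

/-- Refill column `c`: `{a}` above row `t`, the set `E` in row `t`, `{a+1}` below row `t`. -/
def fillMixed (a c t : ℕ) (E : Finset ℕ) (S : Filling) : Filling := fun r j =>
  if j = c ∧ (S r j).Nonempty then
    (if r < t then {a} else if r = t then E else {a + 1})
  else S r j

/-- (M1): column `k` becomes `a`-pure; column `k + 1` becomes mixed, with the transition row and
the transition entry (`{a+1}` or `{a,a+1}`) that column `k` had. -/
noncomputable def resM1 (a : ℕ) (S : Filling) (k : ℕ) : Filling :=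
  fillPure a k (fillMixed a (k + 1) (firstHigh a S k) (S (firstHigh a S k) k) S)

/-- (2M): column `k + 1` becomes `(a+1)`-pure; column `k` becomes mixed, with the transition row
and the transition entry (`{a}` or `{a,a+1}`) that column `k + 1` had. -/
noncomputable def res2M (a : ℕ) (S : Filling) (k : ℕ) : Filling :=
  fillPure (a + 1) (k + 1)
    (fillMixed a k (lastLow a S (k + 1)) (S (lastLow a S (k + 1)) (k + 1)) S)

/-- (21): column `k` becomes `a`-pure and column `k + 1` becomes `(a+1)`-pure. -/
def res21 (a : ℕ) (S : Filling) (k : ℕ) : Filling :=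
  fillPure a k (fillPure (a + 1) (k + 1) S)

/-- One descent-resolution step. -/
inductive ResStep (a : ℕ) (S : Filling) : Filling → Prop
  | m1 (k : ℕ) : Descent a S k → ColMixed a S k → ColPure a S (k + 1) →
      ResStep a S (resM1 a S k)
  | twoM (k : ℕ) : Descent a S k → ColPure (a + 1) S k → ColMixed a S (k + 1) →
      ResStep a S (res2M a S k)
  | twoOne (k : ℕ) : Descent a S k → ColPure (a + 1) S k → ColPure a S (k + 1) →
      ResStep a S (res21 a S k)

/-- `N` is a possible outcome of the descent-resolution algorithm applied to `S`: it is reached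
by finitely many steps, and it has no descent. -/
def IsNormOf (a : ℕ) (S N : Filling) : Prop :=
  Relation.ReflTransGen (ResStep a) S N ∧ ∀ k, ¬ Descent a N k

open Classical in
/-- The outcome `norm(S)` of the descent-resolution algorithm (`S` itself if there is none). -/
noncomputable def norm12 (a : ℕ) (S : Filling) : Filling :=
  if h : ∃ N, IsNormOf a S N then h.choose else S

/-! ### Signatures and the operators `e_i`, `f_i` -/

/-- The restriction `T^{(i)}` of `T` to the letters `i, i+1`. -/
def restrictTwo (i : ℕ) (T : Filling) : Filling := fun r c => T r c ∩ {i, i + 1}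

/-- `T` with `T^{(i)}` replaced by `S`. -/
def replaceTwo (i : ℕ) (T S : Filling) : Filling := fun r c => (T r c \ {i, i + 1}) ∪ S r c

inductive Sgn : Type
  | plus
  | minus

open Classical in
/-- The sign over column `c` of `T^{(i)}`, if any. -/
noncomputable def colSign (i : ℕ) (T : Filling) (c : ℕ) : Option Sgn :=
  if ColPure i (restrictTwo i T) c then some Sgn.plus
  else if ColPure (i + 1) (restrictTwo i T) c then some Sgn.minus
  else none

/-- The `i`-signature of a filling `T` with at most `m` columns, from left to right; each sign is
recorded together with its column. -/
noncomputable def signature (m i : ℕ) (T : Filling) : List (Sgn × ℕ) :=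
  (List.range m).filterMap fun c => (colSign i T c).map fun s => (s, c)

/-- Put a sign in front of a reduced word; a `-` in front of a `+` cancels with it. -/
def consCancel : Sgn × ℕ → List (Sgn × ℕ) → List (Sgn × ℕ)
  | (Sgn.minus, _), (Sgn.plus, _) :: w => w
  | x, w => x :: w

/-- The reduced word `+⋯+-⋯-` obtained by successively cancelling `-` immediately followed
by `+`. -/
def reduceWord (w : List (Sgn × ℕ)) : List (Sgn × ℕ) := w.foldr consCancel []

/-- The column of the leftmost `-` of a word. -/
def leftmostMinus : List (Sgn × ℕ) → Option ℕ
  | [] => none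
  | (Sgn.minus, c) :: _ => some c
  | (Sgn.plus, _) :: w => leftmostMinus w

/-- The column of the rightmost `+` of a word. -/
def rightmostPlus : List (Sgn × ℕ) → Option ℕ
  | [] => none
  | (Sgn.minus, _) :: w => rightmostPlus w
  | (Sgn.plus, c) :: w =>
    match rightmostPlus w with
    | some c' => some c'
    | none => some c

/-- The column on which `e_i` acts, for a filling `T` of a shape contained in `lam`. -/
noncomputable def eColumn (lam : YoungDiagram) (i : ℕ) (T : Filling) : Option ℕ :=
  leftmostMinus (reduceWord (signature (lam.rowLen 0) i T))

/-- The column on which `f_i` acts, for a filling `T` of a shape contained in `lam`. -/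
noncomputable def fColumn (lam : YoungDiagram) (i : ℕ) (T : Filling) : Option ℕ :=
  rightmostPlus (reduceWord (signature (lam.rowLen 0) i T))

/-- `T^{(i)}` with the entries of column `A` all replaced by `{i}`. -/
def eStart (i : ℕ) (T : Filling) (A : ℕ) : Filling := fillPure i A (restrictTwo i T)

/-- `T^{(i)}` with the entries of column `A` all replaced by `{i+1}`. -/
def fStart (i : ℕ) (T : Filling) (A : ℕ) : Filling := fillPure (i + 1) A (restrictTwo i T)

/-- The raising operator `e_i` (`none` plays the role of `0`). -/
noncomputable def eOp (lam : YoungDiagram) (i : ℕ) (T : Filling) : Option Filling :=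
  (eColumn lam i T).map fun A => replaceTwo i T (norm12 i (eStart i T A))

/-- The lowering operator `f_i` (`none` plays the role of `0`). -/
noncomputable def fOp (lam : YoungDiagram) (i : ℕ) (T : Filling) : Option Filling :=
  (fColumn lam i T).map fun A => replaceTwo i T (norm12 i (fStart i T A))

/-! ### Reduced sign words -/

/-- All signs of the word are `+`. -/
def AllPlus (w : List (Sgn × ℕ)) : Prop := ∀ x ∈ w, x.1 = Sgn.plus

/-- All signs of the word are `-`. -/
def AllMinus (w : List (Sgn × ℕ)) : Prop := ∀ x ∈ w, x.1 = Sgn.minus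

/-- The number of `+` in a word. -/
def plusCount : List (Sgn × ℕ) → ℕ
  | [] => 0
  | (Sgn.plus, _) :: w => plusCount w + 1
  | (Sgn.minus, _) :: w => plusCount w

/-- The number of `-` in a word. -/
def minusCount : List (Sgn × ℕ) → ℕ
  | [] => 0
  | (Sgn.plus, _) :: w => minusCount w
  | (Sgn.minus, _) :: w => minusCount w + 1

theorem plusCount_append (u v : List (Sgn × ℕ)) :
    plusCount (u ++ v) = plusCount u + plusCount v := by
  induction u with
  | nil => simp [plusCount]
  | cons x u ih => rcases x with ⟨_ | _, c⟩ <;> (simp [plusCount, ih]; try omega)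

theorem minusCount_append (u v : List (Sgn × ℕ)) :
    minusCount (u ++ v) = minusCount u + minusCount v := by
  induction u with
  | nil => simp [minusCount]
  | cons x u ih => rcases x with ⟨_ | _, c⟩ <;> (simp [minusCount, ih]; try omega)

theorem reduceWord_cons (x : Sgn × ℕ) (w : List (Sgn × ℕ)) :
    reduceWord (x :: w) = consCancel x (reduceWord w) := rfl

theorem consCancel_plus (c : ℕ) (w : List (Sgn × ℕ)) :
    consCancel (Sgn.plus, c) w = (Sgn.plus, c) :: w := by
  simp [consCancel]

theorem consCancel_of_allMinus (x : Sgn × ℕ) {w : List (Sgn × ℕ)} (hw : AllMinus w) :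
    consCancel x w = x :: w := by
  rcases x with ⟨_ | _, c⟩
  · exact consCancel_plus c w
  · rcases w with _ | ⟨⟨_ | _, d⟩, w⟩
    · rfl
    · simpa using hw _ List.mem_cons_self
    · rfl

theorem reduceWord_append_left (u v : List (Sgn × ℕ)) :
    reduceWord (u ++ v) = reduceWord (reduceWord u ++ v) := by
  induction u with
  | nil => rfl
  | cons x u ih =>
    rw [List.cons_append, reduceWord_cons, ih, reduceWord_cons]
    rcases x with ⟨_ | _, c⟩
    · rw [consCancel_plus, consCancel_plus]
      simp [reduceWord_cons, consCancel_plus]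
    · rcases h : reduceWord u with _ | ⟨⟨_ | _, d⟩, w⟩
      · rfl
      · simp [consCancel, reduceWord_cons]
      · rfl

theorem reduceWord_append_of_allPlus {u : List (Sgn × ℕ)} (v : List (Sgn × ℕ))
    (hu : AllPlus (reduceWord u)) : reduceWord (u ++ v) = reduceWord u ++ reduceWord v := by
  rw [reduceWord_append_left]
  generalize reduceWord u = w at hu
  induction w with
  | nil => rfl
  | cons x w ih =>
    rcases x with ⟨_ | _, c⟩
    · rw [List.cons_append, reduceWord_cons, consCancel_plus,
        ih fun y hy => hu y (List.mem_cons_of_mem _ hy), List.cons_append]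
    · simpa using hu _ List.mem_cons_self

theorem reduceWord_split {u v : List (Sgn × ℕ)} (x : Sgn × ℕ) (hu : AllPlus (reduceWord u))
    (hv : AllMinus (reduceWord v)) :
    reduceWord (u ++ x :: v) = reduceWord u ++ x :: reduceWord v := by
  rw [reduceWord_append_of_allPlus _ hu, reduceWord_cons, consCancel_of_allMinus x hv]

/-- A `-` at the end of a word is never cancelled. -/
theorem not_allPlus_reduceWord_concat (u : List (Sgn × ℕ)) (c : ℕ) :
    ¬ AllPlus (reduceWord (u ++ [(Sgn.minus, c)])) := by
  have key : (Sgn.minus, c) ∈ reduceWord (u ++ [(Sgn.minus, c)]) := by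
    induction u with
    | nil => simp [reduceWord, consCancel]
    | cons x u ih =>
      rw [List.cons_append, reduceWord_cons]
      generalize reduceWord (u ++ [(Sgn.minus, c)]) = w at ih
      rcases x with ⟨_ | _, d⟩ <;> rcases w with _ | ⟨⟨_ | _, e⟩, w⟩ <;>
        simp_all [consCancel]
  intro h
  simpa using h _ key

/-- A `+` at the beginning of a word is never cancelled. -/
theorem not_allMinus_reduceWord_cons (w : List (Sgn × ℕ)) (c : ℕ) :
    ¬ AllMinus (reduceWord ((Sgn.plus, c) :: w)) := by
  intro h
  rw [reduceWord_cons, consCancel_plus] at h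
  simpa using h _ List.mem_cons_self

theorem leftmostMinus_append {u : List (Sgn × ℕ)} (hu : AllPlus u) (c : ℕ)
    (v : List (Sgn × ℕ)) : leftmostMinus (u ++ (Sgn.minus, c) :: v) = some c := by
  induction u with
  | nil => rfl
  | cons x u ih =>
    rcases x with ⟨_ | _, d⟩
    · exact ih fun y hy => hu y (List.mem_cons_of_mem _ hy)
    · simpa using hu _ List.mem_cons_self

theorem rightmostPlus_eq_none_iff (w : List (Sgn × ℕ)) : rightmostPlus w = none ↔ AllMinus w := by
  induction w with
  | nil => simp [rightmostPlus, AllMinus]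
  | cons x w ih =>
    rcases x with ⟨_ | _, d⟩
    · simp only [rightmostPlus, AllMinus, List.mem_cons, forall_eq_or_imp]
      cases rightmostPlus w <;> simp
    · simpa [rightmostPlus, AllMinus] using ih

theorem rightmostPlus_append (u : List (Sgn × ℕ)) (c : ℕ) {v : List (Sgn × ℕ)}
    (hv : AllMinus v) : rightmostPlus (u ++ (Sgn.plus, c) :: v) = some c := by
  induction u with
  | nil => simp [rightmostPlus, (rightmostPlus_eq_none_iff v).2 hv]
  | cons x u ih =>
    rcases x with ⟨_ | _, d⟩
    · simp [rightmostPlus, ih]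
    · simpa [rightmostPlus] using ih

theorem exists_reduceWord_eq_append (w : List (Sgn × ℕ)) :
    ∃ p q, AllPlus p ∧ AllMinus q ∧ reduceWord w = p ++ q := by
  induction w with
  | nil => exact ⟨[], [], by simp [AllPlus], by simp [AllMinus], rfl⟩
  | cons x w ih =>
    obtain ⟨p, q, hp, hq, e⟩ := ih
    rw [reduceWord_cons, e]
    rcases x with ⟨_ | _, d⟩
    · refine ⟨(Sgn.plus, d) :: p, q, ?_, hq, by rw [consCancel_plus]; rfl⟩
      intro y hy
      rcases List.mem_cons.1 hy with rfl | hy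
      exacts [rfl, hp y hy]
    · rcases p with _ | ⟨⟨_ | _, f⟩, p⟩
      · refine ⟨[], (Sgn.minus, d) :: q, hp, ?_, consCancel_of_allMinus _ hq⟩
        intro y hy
        rcases List.mem_cons.1 hy with rfl | hy
        exacts [rfl, hq y hy]
      · exact ⟨p, q, fun y hy => hp y (List.mem_cons_of_mem _ hy), hq, rfl⟩
      · simpa using hp _ List.mem_cons_self

/-- A reduced word that does not begin with `+` consists of `-` only. -/
theorem allMinus_reduceWord (w : List (Sgn × ℕ))
    (h : ∀ c u, reduceWord w ≠ (Sgn.plus, c) :: u) : AllMinus (reduceWord w) := by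
  obtain ⟨p, q, hp, hq, e⟩ := exists_reduceWord_eq_append w
  rcases p with _ | ⟨⟨_ | _, f⟩, p⟩
  · rw [e]; exact hq
  · exact absurd e (h _ _)
  · simpa using hp _ List.mem_cons_self

theorem exists_split_of_leftmostMinus (w : List (Sgn × ℕ)) (A : ℕ)
    (h : leftmostMinus (reduceWord w) = some A) :
    ∃ u v, w = u ++ (Sgn.minus, A) :: v ∧ AllPlus (reduceWord u) ∧
      AllMinus (reduceWord v) := by
  induction w with
  | nil => simp [reduceWord, leftmostMinus] at h
  | cons x w ih =>
    rw [reduceWord_cons] at h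
    rcases x with ⟨_ | _, d⟩
    · rw [consCancel_plus] at h
      obtain ⟨u, v, rfl, hu, hv⟩ := ih h
      refine ⟨(Sgn.plus, d) :: u, v, rfl, ?_, hv⟩
      rw [reduceWord_cons, consCancel_plus]
      intro y hy
      rcases List.mem_cons.1 hy with rfl | hy
      exacts [rfl, hu y hy]
    · by_cases hw : ∃ c z, reduceWord w = (Sgn.plus, c) :: z
      · obtain ⟨c, z, e⟩ := hw
        rw [e] at h
        obtain ⟨u, v, rfl, hu, hv⟩ := ih (by rw [e]; exact h)
        refine ⟨(Sgn.minus, d) :: u, v, rfl, ?_, hv⟩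
        rw [reduceWord_split _ hu hv] at e
        rw [reduceWord_cons]
        rcases hr : reduceWord u with _ | ⟨⟨_ | _, f⟩, p⟩
        · simp [hr] at e
        · rw [hr] at hu
          exact fun y hy => hu y (List.mem_cons_of_mem _ hy)
        · rw [hr] at hu
          simpa using hu _ List.mem_cons_self
      · push Not at hw
        have hm := allMinus_reduceWord w hw
        rw [consCancel_of_allMinus _ hm] at h
        obtain rfl : d = A := by simpa [leftmostMinus] using h
        exact ⟨[], w, rfl, by simp [reduceWord, AllPlus], hm⟩

theorem exists_split_of_rightmostPlus (w : List (Sgn × ℕ)) (A : ℕ)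
    (h : rightmostPlus (reduceWord w) = some A) :
    ∃ u v, w = u ++ (Sgn.plus, A) :: v ∧ AllPlus (reduceWord u) ∧
      AllMinus (reduceWord v) := by
  induction w with
  | nil => simp [reduceWord, rightmostPlus] at h
  | cons x w ih =>
    rw [reduceWord_cons] at h
    rcases x with ⟨_ | _, d⟩
    · rw [consCancel_plus] at h
      cases hr : rightmostPlus (reduceWord w) with
      | none =>
        obtain rfl : d = A := by simpa [rightmostPlus, hr] using h
        exact ⟨[], w, rfl, by simp [reduceWord, AllPlus], (rightmostPlus_eq_none_iff _).1 hr⟩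
      | some c =>
        obtain rfl : c = A := by simpa [rightmostPlus, hr] using h
        obtain ⟨u, v, rfl, hu, hv⟩ := ih hr
        refine ⟨(Sgn.plus, d) :: u, v, rfl, ?_, hv⟩
        rw [reduceWord_cons, consCancel_plus]
        intro y hy
        rcases List.mem_cons.1 hy with rfl | hy
        exacts [rfl, hu y hy]
    · by_cases hw : ∃ c z, reduceWord w = (Sgn.plus, c) :: z
      · obtain ⟨c, z, e⟩ := hw
        rw [e] at h
        have h' : rightmostPlus z = some A := h
        obtain ⟨u, v, rfl, hu, hv⟩ := ih (by rw [e]; simp [rightmostPlus, h'])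
        refine ⟨(Sgn.minus, d) :: u, v, rfl, ?_, hv⟩
        rw [reduceWord_split _ hu hv] at e
        rw [reduceWord_cons]
        rcases hr : reduceWord u with _ | ⟨⟨_ | _, f⟩, p⟩
        · rw [hr] at e
          obtain ⟨-, rfl⟩ := List.cons_eq_cons.1 e
          rw [(rightmostPlus_eq_none_iff _).2 hv] at h'
          cases h'
        · rw [hr] at hu
          exact fun y hy => hu y (List.mem_cons_of_mem _ hy)
        · rw [hr] at hu
          simpa using hu _ List.mem_cons_self
      · push Not at hw
        have hm := allMinus_reduceWord w hw
        rw [consCancel_of_allMinus _ hm] at h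
        have h' : rightmostPlus (reduceWord w) = some A := h
        rw [(rightmostPlus_eq_none_iff _).2 hm] at h'
        cases h'

theorem leftmostMinus_eq_none_iff (w : List (Sgn × ℕ)) :
    leftmostMinus w = none ↔ minusCount w = 0 := by
  induction w with
  | nil => simp [leftmostMinus, minusCount]
  | cons x w ih => rcases x with ⟨_ | _, d⟩ <;> simp [leftmostMinus, minusCount, ih]

theorem rightmostPlus_eq_none_iff_plusCount (w : List (Sgn × ℕ)) :
    rightmostPlus w = none ↔ plusCount w = 0 := by
  rw [rightmostPlus_eq_none_iff]
  induction w with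
  | nil => simp [AllMinus, plusCount]
  | cons x w ih =>
    rcases x with ⟨_ | _, d⟩
    · simp [AllMinus, plusCount]
    · simpa [AllMinus, plusCount] using ih

theorem plusCount_sub_minusCount_reduceWord (w : List (Sgn × ℕ)) :
    (plusCount (reduceWord w) : ℤ) - minusCount (reduceWord w) = plusCount w - minusCount w := by
  induction w with
  | nil => rfl
  | cons x w ih =>
    rw [reduceWord_cons]
    generalize reduceWord w = v at ih
    rcases x with ⟨_ | _, d⟩ <;> rcases v with _ | ⟨⟨_ | _, e⟩, v⟩ <;>
      simp_all [consCancel, plusCount, minusCount] <;> omega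

/-! ### String lengths -/

/-- A statistic that drops by one under `g`, and vanishes exactly where `g` is zero, is the string
length. -/
theorem isStringLength_of_drop {X : Type*} {g : X → Option X} {B : Set X} (ν : X → ℕ)
    (h0 : ∀ b ∈ B, g b = none ↔ ν b = 0)
    (h1 : ∀ b ∈ B, ∀ c, g b = some c → c ∈ B ∧ ν b = ν c + 1) {b : X} (hb : b ∈ B) :
    IsStringLength g b (ν b) := by
  have key : ∀ k, (k ≤ ν b → ∃ c ∈ B, opIter g k b = some c ∧ ν c + k = ν b) ∧
      (ν b < k → opIter g k b = none) := by
    intro k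
    induction k with
    | zero => exact ⟨fun _ => ⟨b, hb, rfl, rfl⟩, fun h => absurd h (Nat.not_lt_zero _)⟩
    | succ k ih =>
      constructor
      · intro hk
        obtain ⟨c, hc, e, hν⟩ := ih.1 (by omega)
        cases hg : g c with
        | none => have := (h0 c hc).1 hg; omega
        | some d =>
          obtain ⟨hd, hd'⟩ := h1 c hc d hg
          exact ⟨d, hd, by simp [opIter, e, hg], by omega⟩
      · intro hk
        rcases (Nat.lt_succ_iff.1 hk).eq_or_lt with h | h
        · obtain ⟨c, hc, e, hν⟩ := ih.1 h.ge
          simp [opIter, e, (h0 c hc).2 (by omega)]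
        · simp [opIter, ih.2 h]
  constructor
  · obtain ⟨c, -, e, -⟩ := (key (ν b)).1 le_rfl
    simp [e]
  · intro k hk
    by_contra h
    exact hk ((key k).2 (not_le.1 h))

/-! ### Fillings of a fixed skew shape by two letters -/

/-- `D` is a finite skew shape, i.e. a bounded order-convex set of boxes. -/
structure IsSkewShape (D : ℕ → ℕ → Prop) : Prop where
  convex : ∀ {r c r' c' x y}, D r c → D r' c' → r ≤ x → x ≤ r' → c ≤ y → y ≤ c' → D x y
  bounded : ∃ M, ∀ r c, D r c → r < M

/-- `S` fills the boxes of `D` with nonempty subsets of `{a, a+1}`, weakly increasing down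
columns. -/
structure IsTwoFilling (a : ℕ) (D : ℕ → ℕ → Prop) (S : Filling) : Prop where
  shape : ∀ r c, (S r c).Nonempty ↔ D r c
  letters : ∀ r c, S r c ⊆ {a, a + 1}
  col : ∀ {r r' c}, r < r' → a + 1 ∈ S r c → a ∉ S r' c

/-- A weakly increasing bi-infinite column with letters `a, a+1`. -/
structure IsProfile (a : ℕ) (φ : ℕ → Finset ℕ) : Prop where
  nonempty : ∀ r, (φ r).Nonempty
  letters : ∀ r, φ r ⊆ {a, a + 1}
  mono : ∀ {r r'}, r < r' → a + 1 ∈ φ r → a ∉ φ r'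

section TwoLetters

variable {a : ℕ} {D : ℕ → ℕ → Prop} {S U U' : Filling} {φ : ℕ → Finset ℕ}

theorem eq_low_of_subset {E : Finset ℕ} (h : E ⊆ {a, a + 1}) (hne : E.Nonempty)
    (hx : a + 1 ∉ E) : E = {a} := by
  refine Finset.eq_singleton_iff_nonempty_unique_mem.2 ⟨hne, fun y hy => ?_⟩
  have := h hy
  simp only [Finset.mem_insert, Finset.mem_singleton] at this
  rcases this with h | rfl
  exacts [h, absurd hy hx]

theorem eq_high_of_subset {E : Finset ℕ} (h : E ⊆ {a, a + 1}) (hne : E.Nonempty)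
    (hx : a ∉ E) : E = {a + 1} := by
  refine Finset.eq_singleton_iff_nonempty_unique_mem.2 ⟨hne, fun y hy => ?_⟩
  have := h hy
  simp only [Finset.mem_insert, Finset.mem_singleton] at this
  rcases this with rfl | h
  exacts [absurd hy hx, h]

namespace IsTwoFilling

theorem eq_empty (h : IsTwoFilling a D S) {r c : ℕ} (hD : ¬ D r c) : S r c = ∅ := by
  rw [← h.shape] at hD
  exact Finset.not_nonempty_iff_eq_empty.1 hD

theorem box (h : IsTwoFilling a D S) {r c x : ℕ} (hx : x ∈ S r c) : D r c :=
  (h.shape r c).1 ⟨x, hx⟩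

theorem colPure_iff (h : IsTwoFilling a D S) {x c : ℕ} :
    ColPure x S c ↔ (∃ r, D r c) ∧ ∀ r, D r c → S r c = {x} := by
  simp only [ColPure, ColNonempty, h.shape]

/-- A column is mixed exactly if both letters occur in it. -/
theorem colMixed_iff (h : IsTwoFilling a D S) {c : ℕ} :
    ColMixed a S c ↔ (∃ r, a ∈ S r c) ∧ ∃ r, a + 1 ∈ S r c := by
  unfold ColMixed
  rw [h.colPure_iff, h.colPure_iff]
  constructor
  · rintro ⟨⟨r, hr⟩, h1, h2⟩
    have hD := (h.shape r c).1 hr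
    constructor
    · by_contra hn
      push Not at hn
      exact h2 ⟨⟨r, hD⟩, fun s hs => eq_high_of_subset (h.letters s c) ((h.shape s c).2 hs) (hn s)⟩
    · by_contra hn
      push Not at hn
      exact h1 ⟨⟨r, hD⟩, fun s hs => eq_low_of_subset (h.letters s c) ((h.shape s c).2 hs) (hn s)⟩
  · rintro ⟨⟨r, hr⟩, s, hs⟩
    refine ⟨⟨r, a, hr⟩, fun hp => ?_, fun hp => ?_⟩
    · rw [hp.2 s (h.box hs)] at hs
      simp at hs
    · rw [hp.2 r (h.box hr)] at hr
      simp at hr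

theorem restrictTwo_eq (h : IsTwoFilling a D S) : restrictTwo a S = S := by
  funext r c
  exact Finset.inter_eq_left.2 (h.letters r c)

theorem colSign_eq_plus (h : IsTwoFilling a D S) {c : ℕ} (hp : ColPure a S c) :
    colSign a S c = some Sgn.plus := by
  rw [colSign, h.restrictTwo_eq, if_pos hp]

theorem colSign_eq_minus (h : IsTwoFilling a D S) {c : ℕ} (hp : ColPure (a + 1) S c) :
    colSign a S c = some Sgn.minus := by
  rw [colSign, h.restrictTwo_eq, if_neg, if_pos hp]
  intro hq
  obtain ⟨r, hr⟩ := hp.1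
  have := (hp.2 r hr).symm.trans (hq.2 r hr)
  simp at this

theorem colSign_eq_none (h : IsTwoFilling a D S) {c : ℕ} (hp : ColMixed a S c) :
    colSign a S c = none := by
  rw [colSign, h.restrictTwo_eq, if_neg hp.2.1, if_neg hp.2.2]

/-- Every column is the restriction of a profile. -/
theorem exists_profile (h : IsTwoFilling a D S) (c : ℕ) :
    ∃ φ, IsProfile a φ ∧ ∀ r, D r c → S r c = φ r := by
  classical
  refine ⟨fun r => if D r c then S r c else if ∃ r' > r, a ∈ S r' c then {a} else {a + 1},
    ⟨fun r => ?_, fun r => ?_, fun {r r'} hr hm hm' => ?_⟩, fun r hr => by simp [hr]⟩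
  · by_cases hD : D r c
    · simpa [hD] using (h.shape r c).2 hD
    · simp only [hD, if_false]
      split_ifs <;> simp
  · by_cases hD : D r c
    · simpa [hD] using h.letters r c
    · simp only [hD, if_false]
      split_ifs <;> simp
  · have h1 : ∀ s > r, a ∉ S s c := by
      intro s hs
      by_cases hD : D r c
      · simp only [hD, if_true] at hm
        exact h.col hs hm
      · simp only [hD, if_false] at hm
        split_ifs at hm with hex
        · simp at hm
        · push Not at hex
          exact hex s hs
    by_cases hD : D r' c
    · simp only [hD, if_true] at hm'
      exact h1 r' hr hm'
    · simp only [hD, if_false] at hm'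
      rw [if_neg] at hm'
      · simp at hm'
      · rintro ⟨s, hs, hs'⟩
        exact h1 s (lt_trans hr hs) hs'

/-- Refilling a column with one letter keeps a two-letter filling. -/
theorem fillPure (h : IsTwoFilling a D S) {x : ℕ} (hx : x = a ∨ x = a + 1) (c : ℕ) :
    IsTwoFilling a D (fillPure x c S) := by
  refine ⟨fun r j => ?_, fun r j => ?_, fun {r r' j} hr hm hm' => ?_⟩
  · rw [← h.shape]
    unfold _root_.fillPure
    split_ifs <;> simp
  · unfold _root_.fillPure
    split_ifs
    · intro y hy
      obtain ⟨-, -, rfl⟩ := Finset.mem_image.1 hy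
      simpa using hx
    · exact h.letters r j
  · unfold _root_.fillPure at hm hm'
    split_ifs at hm hm'
    · obtain ⟨-, -, h1⟩ := Finset.mem_image.1 hm
      obtain ⟨-, -, h2⟩ := Finset.mem_image.1 hm'
      omega
    · exact h.col hr hm hm'

theorem fillPure_self (h : IsTwoFilling a D S) (x : ℕ) {r c : ℕ} (hD : D r c) :
    _root_.fillPure x c S r c = {x} := by
  have := (h.shape r c).2 hD
  simp [_root_.fillPure, Finset.image_const this]

end IsTwoFilling

theorem fillPure_of_ne (x : ℕ) {c j : ℕ} (hj : j ≠ c) (r : ℕ) : fillPure x c S r j = S r j := by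
  simp [fillPure, hj]

theorem fillPure_fillPure (x y c : ℕ) : fillPure x c (fillPure y c S) = fillPure x c S := by
  funext r j
  unfold fillPure
  split_ifs with h
  · rw [Finset.image_image]; rfl
  · rfl

theorem fillPure_eq_self {x c : ℕ} (h : ∀ r, (S r c).Nonempty → S r c = {x}) :
    fillPure x c S = S := by
  funext r j
  unfold fillPure
  split_ifs with hj
  · subst hj
    rcases (S r j).eq_empty_or_nonempty with he | hne
    · simp [he]
    · rw [h r hne]; simp
  · rfl

/-! ### Moving a pure column through a mixed one -/

/-- Columns `k, k+1` of `U` are mixed and `a`-pure, those of `U'` are `a`-pure and mixed; the two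
mixed columns are restrictions of the same profile, and both letters of it occur in common rows of
the two columns. The other columns of `U` and `U'` agree. -/
structure Exchange (a : ℕ) (D : ℕ → ℕ → Prop) (k : ℕ) (U U' : Filling) : Prop where
  left : IsTwoFilling a D U
  right : IsTwoFilling a D U'
  other : ∀ r c, c ≠ k → c ≠ k + 1 → U r c = U' r c
  leftPure : ∀ r, D r (k + 1) → U r (k + 1) = {a}
  rightPure : ∀ r, D r k → U' r k = {a}
  profile : ∃ φ, IsProfile a φ ∧ (∀ r, D r k → U r k = φ r) ∧
    (∀ r, D r (k + 1) → U' r (k + 1) = φ r) ∧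
    ∃ x y, D x k ∧ D x (k + 1) ∧ D y k ∧ D y (k + 1) ∧ a ∈ φ x ∧ a + 1 ∈ φ y

open Classical in
/-- Refill column `c` with the restriction of `φ` to the shape `D`. -/
noncomputable def paint (D : ℕ → ℕ → Prop) (c : ℕ) (φ : ℕ → Finset ℕ) (S : Filling) : Filling :=
  fun r j => if j = c then (if D r j then φ r else ∅) else S r j

theorem isProfile_const {x : ℕ} (hx : x = a ∨ x = a + 1) : IsProfile a fun _ => {x} := by
  refine ⟨fun r => by simp, fun r => by simpa using hx, fun {r r'} _ h h' => ?_⟩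
  simp only [Finset.mem_singleton] at h h'
  omega

theorem IsTwoFilling.paint (h : IsTwoFilling a D S) (hφ : IsProfile a φ) (c : ℕ) :
    IsTwoFilling a D (paint D c φ S) := by
  refine ⟨fun r j => ?_, fun r j => ?_, fun {r r' j} hr hm hm' => ?_⟩
  · unfold _root_.paint
    split_ifs with h1 h2
    · simp [h2, hφ.nonempty r]
    · simp [h2]
    · exact h.shape r j
  · unfold _root_.paint
    split_ifs
    · exact hφ.letters r
    · simp
    · exact h.letters r j
  · unfold _root_.paint at hm hm'
    split_ifs at hm hm'
    · exact hφ.mono hr hm hm'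
    · simp at hm'
    · simp at hm
    · simp at hm
    · exact h.col hr hm hm'

theorem paint_self {c r : ℕ} (hD : D r c) : paint D c φ S r c = φ r := by simp [paint, hD]

theorem paint_of_ne {c j : ℕ} (hj : j ≠ c) (r : ℕ) : paint D c φ S r j = S r j := by
  simp [paint, hj]

theorem exists_exchange_of_left (hD : IsSkewShape D) (h : IsTwoFilling a D U) {k : ℕ}
    (hd : Descent a U k) (hm : ColMixed a U k) (hp : ColPure a U (k + 1)) :
    ∃ U', Exchange a D k U U' := by
  obtain ⟨φ, hφ, e⟩ := h.exists_profile k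
  refine ⟨paint D k (fun _ => {a}) (paint D (k + 1) φ U), h,
    (h.paint hφ _).paint (isProfile_const (Or.inl rfl)) _, fun r c h1 h2 => ?_,
    (h.colPure_iff.1 hp).2, fun r hr => paint_self hr, φ, hφ, e, fun r hr => ?_, ?_⟩
  · rw [paint_of_ne h1, paint_of_ne h2]
  · rw [paint_of_ne (by omega), paint_self hr]
  · obtain ⟨y, hy, hy'⟩ := hd
    obtain ⟨⟨x, hx⟩, -⟩ := h.colMixed_iff.1 hm
    have hxy : x ≤ y := by
      by_contra hlt
      exact h.col (not_le.1 hlt) hy hx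
    have d1 := h.box hx
    have d2 := h.box hy'
    refine ⟨x, y, d1, hD.convex d1 d2 le_rfl hxy (by omega) le_rfl, h.box hy, d2, ?_, ?_⟩
    · rw [← e x d1]; exact hx
    · rw [← e y (h.box hy)]; exact hy

theorem exists_exchange_of_right (hD : IsSkewShape D) (h : IsTwoFilling a D U') {k : ℕ}
    (hd : Descent a (fillPure (a + 1) k U') k) (hm : ColMixed a U' (k + 1))
    (hp : ColPure a U' k) : ∃ U, Exchange a D k U U' := by
  obtain ⟨φ, hφ, e⟩ := h.exists_profile (k + 1)
  refine ⟨paint D (k + 1) (fun _ => {a}) (paint D k φ U'),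
    (h.paint hφ _).paint (isProfile_const (Or.inl rfl)) _, h, fun r c h1 h2 => ?_,
    fun r hr => paint_self hr, (h.colPure_iff.1 hp).2, φ, hφ, fun r hr => ?_, e, ?_⟩
  · rw [paint_of_ne h2, paint_of_ne h1]
  · rw [paint_of_ne (by omega), paint_self hr]
  · obtain ⟨x, hx, hx'⟩ := hd
    rw [fillPure_of_ne _ (by omega)] at hx'
    obtain ⟨-, y, hy⟩ := h.colMixed_iff.1 hm
    have hxy : x ≤ y := by
      by_contra hlt
      exact h.col (not_le.1 hlt) hy hx'
    have d1 := (h.fillPure (Or.inr rfl) k).box hx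
    have d2 := h.box hy
    refine ⟨x, y, d1, h.box hx', hD.convex d1 d2 hxy le_rfl le_rfl (by omega), d2, ?_, ?_⟩
    · rw [← e x (h.box hx')]; exact hx'
    · rw [← e y d2]; exact hy

namespace Exchange

variable {k : ℕ}

theorem descent_left (h : Exchange a D k U U') : Descent a U k := by
  obtain ⟨φ, hφ, e, e', x, y, h1, h2, h3, h4, hx, hy⟩ := h.profile
  exact ⟨y, by rwa [e y h3], by rw [h.leftPure y h4]; simp⟩

theorem colMixed_left (h : Exchange a D k U U') : ColMixed a U k := by
  obtain ⟨φ, hφ, e, e', x, y, h1, h2, h3, h4, hx, hy⟩ := h.profile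
  exact h.left.colMixed_iff.2 ⟨⟨x, by rwa [e x h1]⟩, y, by rwa [e y h3]⟩

theorem colPure_left (h : Exchange a D k U U') : ColPure a U (k + 1) := by
  obtain ⟨φ, hφ, e, e', x, y, h1, h2, h3, h4, hx, hy⟩ := h.profile
  exact h.left.colPure_iff.2 ⟨⟨x, h2⟩, h.leftPure⟩

theorem colMixed_right (h : Exchange a D k U U') : ColMixed a U' (k + 1) := by
  obtain ⟨φ, hφ, e, e', x, y, h1, h2, h3, h4, hx, hy⟩ := h.profile
  exact h.right.colMixed_iff.2 ⟨⟨x, by rwa [e' x h2]⟩, y, by rwa [e' y h4]⟩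

theorem colPure_right (h : Exchange a D k U U') : ColPure a U' k := by
  obtain ⟨φ, hφ, e, e', x, y, h1, h2, h3, h4, hx, hy⟩ := h.profile
  exact h.right.colPure_iff.2 ⟨⟨x, h1⟩, h.rightPure⟩

theorem descent_right (h : Exchange a D k U U') : Descent a (fillPure (a + 1) k U') k := by
  obtain ⟨φ, hφ, e, e', x, y, h1, h2, h3, h4, hx, hy⟩ := h.profile
  refine ⟨x, by rw [h.right.fillPure_self _ h1]; simp, ?_⟩
  rw [fillPure_of_ne _ (by omega), e' x h2]
  exact hx

theorem colMixed_fillPure_right (h : Exchange a D k U U') :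
    ColMixed a (fillPure (a + 1) k U') (k + 1) := by
  have h1 := h.right.colMixed_iff.1 h.colMixed_right
  rw [(h.right.fillPure (Or.inr rfl) k).colMixed_iff]
  simpa [fillPure_of_ne] using h1

theorem colPure_fillPure_right (h : Exchange a D k U U') :
    ColPure (a + 1) (fillPure (a + 1) k U') k := by
  have h1 := h.right.colPure_iff.1 h.colPure_right
  exact (h.right.fillPure (Or.inr rfl) k).colPure_iff.2
    ⟨h1.1, fun r hr => h.right.fillPure_self _ hr⟩

/-- The rule (M1) performs the exchange from left to right. -/
theorem resM1_eq (hD : IsSkewShape D) (h : Exchange a D k U U') : resM1 a U k = U' := by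
  obtain ⟨φ, hφ, e, e', x, y, h1, h2, h3, h4, hx, hy⟩ := h.profile
  have ht : a + 1 ∈ U (firstHigh a U k) k :=
    Nat.sInf_mem (s := {r : ℕ | a + 1 ∈ U r k}) ⟨y, by simpa [e y h3] using hy⟩
  have hmin : ∀ r, a + 1 ∈ U r k → firstHigh a U k ≤ r := fun r hr =>
    Nat.sInf_le (s := {r : ℕ | a + 1 ∈ U r k}) hr
  unfold resM1
  generalize firstHigh a U k = t at ht hmin
  have hDt := h.left.box ht
  have hty : t ≤ y := hmin y (by rwa [e y h3])
  funext r c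
  by_cases hc : c = k
  · subst hc
    by_cases hr : D r c
    · have hne := (h.left.shape r c).2 hr
      rw [h.rightPure r hr]
      simp [fillPure, fillMixed, Finset.image_const hne]
    · rw [h.right.eq_empty hr]
      simp [fillPure, fillMixed, h.left.eq_empty hr]
  rw [fillPure_of_ne _ hc]
  by_cases hc' : c = k + 1
  · subst hc'
    by_cases hr : D r (k + 1)
    · have hne := (h.left.shape r (k + 1)).2 hr
      rw [e' r hr]
      simp only [fillMixed, hne, and_self, if_true]
      rcases lt_trichotomy r t with hlt | rfl | hlt
      · rw [if_pos hlt]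
        refine (eq_low_of_subset (hφ.letters r) (hφ.nonempty r) fun hm => ?_).symm
        have hxr : x ≤ r := by
          by_contra hh
          exact hφ.mono (not_le.1 hh) hm hx
        have hrk : D r k := hD.convex h1 h4 hxr (by omega) le_rfl (by omega)
        have := hmin r (by rwa [e r hrk])
        omega
      · simp [e r hDt]
      · rw [if_neg (by omega), if_neg (by omega)]
        rw [e t hDt] at ht
        exact (eq_high_of_subset (hφ.letters r) (hφ.nonempty r) (hφ.mono hlt ht)).symm
    · rw [h.right.eq_empty hr]
      simp [fillMixed, h.left.eq_empty hr]
  · rw [← h.other r c hc hc']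
    simp [fillMixed, hc']

/-- The rule (2M) performs the exchange from right to left. -/
theorem res2M_eq (hD : IsSkewShape D) (h : Exchange a D k U U') :
    res2M a (fillPure (a + 1) k U') k = fillPure (a + 1) (k + 1) U := by
  obtain ⟨φ, hφ, e, e', x, y, h1, h2, h3, h4, hx, hy⟩ := h.profile
  obtain ⟨M, hM⟩ := hD.bounded
  have hV := h.right.fillPure (Or.inr rfl) k
  have eV : ∀ r, D r (k + 1) → fillPure (a + 1) k U' r (k + 1) = φ r := fun r hr => by
    rw [fillPure_of_ne _ (by omega), e' r hr]
  have oV : ∀ r c, c ≠ k → c ≠ k + 1 → U r c = fillPure (a + 1) k U' r c := fun r c hc hc' => by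
    rw [fillPure_of_ne _ hc, h.other r c hc hc']
  generalize fillPure (a + 1) k U' = V at hV eV oV
  have hbdd : BddAbove {r : ℕ | a ∈ V r (k + 1)} :=
    ⟨M, fun r hr => (hM r _ (hV.box hr)).le⟩
  have ht : a ∈ V (lastLow a V (k + 1)) (k + 1) :=
    Nat.sSup_mem (s := {r : ℕ | a ∈ V r (k + 1)}) ⟨x, by simpa [eV x h2] using hx⟩ hbdd
  have hmax : ∀ r, a ∈ V r (k + 1) → r ≤ lastLow a V (k + 1) := fun r hr =>
    le_csSup hbdd hr
  unfold res2M
  generalize lastLow a V (k + 1) = t at ht hmax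
  have hDt := hV.box ht
  have hxt : x ≤ t := hmax x (by rwa [eV x h2])
  funext r c
  by_cases hc : c = k + 1
  · subst hc
    by_cases hr : D r (k + 1)
    · have hne := (hV.shape r (k + 1)).2 hr
      rw [h.left.fillPure_self _ hr]
      simp [fillPure, fillMixed, Finset.image_const hne]
    · rw [(h.left.fillPure (Or.inr rfl) _).eq_empty hr]
      simp [fillPure, fillMixed, hV.eq_empty hr]
  rw [fillPure_of_ne _ hc, fillPure_of_ne _ hc]
  by_cases hc' : c = k
  · subst hc'
    by_cases hr : D r c
    · have hne := (hV.shape r c).2 hr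
      rw [e r hr]
      simp only [fillMixed, hne, and_self, if_true]
      rw [eV t hDt] at ht
      rcases lt_trichotomy r t with hlt | rfl | hlt
      · rw [if_pos hlt]
        exact (eq_low_of_subset (hφ.letters r) (hφ.nonempty r)
          fun hm => hφ.mono hlt hm ht).symm
      · simp [eV r hDt]
      · rw [if_neg (by omega), if_neg (by omega)]
        refine (eq_high_of_subset (hφ.letters r) (hφ.nonempty r) fun hm => ?_).symm
        have hry : r ≤ y := by
          by_contra hh
          exact hφ.mono (not_le.1 hh) hy hm
        have hrk : D r (c + 1) := hD.convex h1 h4 (by omega) hry (by omega) le_rfl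
        have := hmax r (by rwa [eV r hrk])
        omega
    · rw [h.left.eq_empty hr]
      simp [fillMixed, hV.eq_empty hr]
  · rw [oV r c hc' hc]
    simp [fillMixed, hc']

theorem resStep_left (hD : IsSkewShape D) (h : Exchange a D k U U') : ResStep a U U' := by
  rw [← h.resM1_eq hD]
  exact ResStep.m1 k h.descent_left h.colMixed_left h.colPure_left

theorem resStep_right (hD : IsSkewShape D) (h : Exchange a D k U U') :
    ResStep a (fillPure (a + 1) k U') (fillPure (a + 1) (k + 1) U) := by
  rw [← h.res2M_eq hD]
  exact ResStep.twoM k h.descent_right h.colPure_fillPure_right h.colMixed_fillPure_right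

/-- An exchange does not change the set of columns containing `a`. -/
theorem exists_low_iff (h : Exchange a D k U U') (c : ℕ) :
    (∃ r, a ∈ U r c) ↔ ∃ r, a ∈ U' r c := by
  have mL := h.left.colMixed_iff.1 h.colMixed_left
  have mR := h.right.colMixed_iff.1 h.colMixed_right
  have pL := h.left.colPure_iff.1 h.colPure_left
  have pR := h.right.colPure_iff.1 h.colPure_right
  by_cases hc : c = k
  · subst hc
    obtain ⟨r, hr⟩ := pR.1
    exact iff_of_true mL.1 ⟨r, by simp [pR.2 r hr]⟩
  by_cases hc' : c = k + 1
  · subst hc'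
    obtain ⟨r, hr⟩ := pL.1
    exact iff_of_true ⟨r, by simp [pL.2 r hr]⟩ mR.1
  simp only [h.other _ c hc hc']

/-- An exchange does not change the set of columns containing `a + 1`, apart from the column that
is `a`-pure. -/
theorem exists_high_iff (h : Exchange a D k U U') (c : ℕ) :
    ((∃ r, a + 1 ∈ U r c) ∨ c = k + 1) ↔ ((∃ r, a + 1 ∈ U' r c) ∨ c = k) := by
  have mL := h.left.colMixed_iff.1 h.colMixed_left
  have mR := h.right.colMixed_iff.1 h.colMixed_right
  by_cases hc : c = k
  · subst hc
    exact iff_of_true (Or.inl mL.2) (Or.inr rfl)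
  by_cases hc' : c = k + 1
  · subst hc'
    exact iff_of_true (Or.inr rfl) (Or.inl mR.2)
  simp only [h.other _ c hc hc', hc, hc', or_false]

end Exchange

end TwoLetters

/-! ### The run of the descent-resolution algorithm -/

/-- The signature read off the columns in the list `l`. -/
noncomputable def signatureOn (a : ℕ) (S : Filling) (l : List ℕ) : List (Sgn × ℕ) :=
  l.filterMap fun c => (colSign a S c).map fun s => (s, c)

theorem signatureOn_append (a : ℕ) (S : Filling) (l l' : List ℕ) :
    signatureOn a S (l ++ l') = signatureOn a S l ++ signatureOn a S l' :=
  List.filterMap_append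

theorem signatureOn_cons_some {a c : ℕ} {S : Filling} {s : Sgn} (h : colSign a S c = some s)
    (l : List ℕ) : signatureOn a S (c :: l) = (s, c) :: signatureOn a S l := by
  simp [signatureOn, h]

theorem signatureOn_cons_none {a c : ℕ} {S : Filling} (h : colSign a S c = none)
    (l : List ℕ) : signatureOn a S (c :: l) = signatureOn a S l := by
  simp [signatureOn, h]

theorem colSign_congr {a c : ℕ} {S S' : Filling} (h : ∀ r, S r c = S' r c) :
    colSign a S c = colSign a S' c := by
  have key : ∀ x, ColPure x (restrictTwo a S) c ↔ ColPure x (restrictTwo a S') c := fun x => by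
    simp only [ColPure, ColNonempty, restrictTwo, h]
  classical
  exact if_congr (key a) rfl (if_congr (key (a + 1)) rfl rfl)

theorem signatureOn_congr {a : ℕ} {S S' : Filling} {l : List ℕ}
    (h : ∀ c ∈ l, ∀ r, S r c = S' r c) : signatureOn a S l = signatureOn a S' l := by
  refine List.filterMap_congr fun c hc => ?_
  rw [colSign_congr (h c hc)]

/-- The columns strictly between `j` and `m`. -/
def columnsAfter (m j : ℕ) : List ℕ := List.range' (j + 1) (m - (j + 1))

theorem columnsAfter_eq_cons {m j : ℕ} (h : j + 1 < m) :
    columnsAfter m j = (j + 1) :: columnsAfter m (j + 1) := by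
  unfold columnsAfter
  obtain ⟨d, hd⟩ : ∃ d, m - (j + 1) = d + 1 := ⟨m - (j + 1) - 1, by omega⟩
  rw [hd, List.range'_succ]
  congr 2
  omega

theorem range_eq_append {m j : ℕ} (h : j < m) :
    List.range m = List.range j ++ j :: columnsAfter m j := by
  have h1 : m = j + (1 + (m - (j + 1))) := by omega
  conv_lhs => rw [h1]
  rw [List.range_add, ← List.range'_eq_map_range, Nat.add_comm 1, List.range'_succ, columnsAfter]

theorem lt_of_mem_columnsAfter {m j c : ℕ} (h : c ∈ columnsAfter m j) : j < c := by
  simp only [columnsAfter, List.mem_range'_1] at h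
  omega

/-- Column `j` is `a`-pure, its sign is one at which `e` or `f` acts, and descents occur only
to the left of column `j`, or, after refilling this column with `a + 1`, to the right of it. -/
structure IsActive (a : ℕ) (D : ℕ → ℕ → Prop) (m j : ℕ) (U : Filling) : Prop where
  filling : IsTwoFilling a D U
  pure : ColPure a U j
  descent_left : ∀ k, Descent a U k → k + 1 = j
  descent_right : ∀ k, Descent a (fillPure (a + 1) j U) k → k = j
  skip : ∀ k r, k + 1 = j → a + 1 ∈ U r k → a ∉ U r (k + 2)
  allPlus : AllPlus (reduceWord (signatureOn a U (List.range j)))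
  allMinus : AllMinus (reduceWord (signatureOn a U (columnsAfter m j)))

section Run

variable {a m : ℕ} {D : ℕ → ℕ → Prop} {U U' : Filling} {j k : ℕ}

namespace Exchange

theorem isActive_right (hD : IsSkewShape D) (hm : ∀ r c, D r c → c < m)
    (h : Exchange a D k U U') (hU : IsActive a D m (k + 1) U) : IsActive a D m k U' := by
  obtain ⟨φ, hφ, e, e', x, y, h1, h2, h3, h4, hx, hy⟩ := h.profile
  have hkm : k + 1 < m := hm _ _ h2
  have next : ¬ ∃ r, a + 1 ∈ U' r (k + 1) ∧ a ∈ U r (k + 2) := by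
    rintro ⟨r, hr, hr'⟩
    have d1 := h.right.box hr
    rw [e' r d1] at hr
    have hxr : x ≤ r := by
      by_contra hlt
      exact hφ.mono (not_le.1 hlt) hr hx
    have d2 : D r k := hD.convex h1 d1 hxr le_rfl le_rfl (by omega)
    exact hU.skip k r rfl (by rwa [e r d2]) hr'
  refine ⟨h.right, h.colPure_right, ?_, ?_, ?_, ?_, ?_⟩
  · rintro i ⟨r, hr, hr'⟩
    by_contra hi
    by_cases i1 : i = k
    · subst i1
      rw [h.rightPure r (h.right.box hr)] at hr
      simp at hr
    by_cases i2 : i = k + 1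
    · subst i2
      rw [← h.other r (k + 1 + 1) (by omega) (by omega)] at hr'
      exact next ⟨r, hr, hr'⟩
    · rw [← h.other r _ (by omega) (by omega)] at hr hr'
      have := hU.descent_left i ⟨r, hr, hr'⟩
      omega
  · rintro i ⟨r, hr, hr'⟩
    by_contra hi
    rw [fillPure_of_ne _ hi] at hr
    by_cases i1 : i + 1 = k
    · subst i1
      rw [h.right.fillPure_self _ ((h.right.fillPure (Or.inr rfl) _).box hr')] at hr'
      simp at hr'
    rw [fillPure_of_ne _ i1] at hr'
    by_cases i2 : i = k + 1
    · subst i2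
      rw [← h.other r (k + 1 + 1) (by omega) (by omega)] at hr'
      exact next ⟨r, hr, hr'⟩
    · rw [← h.other r _ (by omega) (by omega)] at hr hr'
      have := hU.descent_left i ⟨r, hr, hr'⟩
      omega
  · rintro i r rfl hr hr'
    rw [← h.other r _ (by omega) (by omega)] at hr
    have d1 := h.right.box hr'
    have d2 : D r (i + 1) :=
      hD.convex (h.left.box hr) d1 le_rfl le_rfl (by omega) (by omega)
    rw [e' r d1, ← e r d2] at hr'
    have := hU.descent_left i ⟨r, hr, hr'⟩
    omega
  · have := hU.allPlus
    rw [List.range_succ, signatureOn_append,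
      signatureOn_cons_none (h.left.colSign_eq_none h.colMixed_left)] at this
    rw [signatureOn_congr (S' := U)]
    · simpa [signatureOn] using this
    · intro c hc r
      have := List.mem_range.1 hc
      exact (h.other r c (by omega) (by omega)).symm
  · have := hU.allMinus
    rw [columnsAfter_eq_cons hkm,
      signatureOn_cons_none (h.right.colSign_eq_none h.colMixed_right),
      signatureOn_congr (S' := U)]
    · exact this
    · intro c hc r
      have := lt_of_mem_columnsAfter hc
      exact (h.other r c (by omega) (by omega)).symm

theorem isActive_left (hD : IsSkewShape D) (hm : ∀ r c, D r c → c < m)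
    (h : Exchange a D k U U') (hU : IsActive a D m k U') : IsActive a D m (k + 1) U := by
  obtain ⟨φ, hφ, e, e', x, y, h1, h2, h3, h4, hx, hy⟩ := h.profile
  have hkm : k + 1 < m := hm _ _ h2
  have prev : ∀ i, i + 1 = k → ¬ ∃ r, a + 1 ∈ U' r i ∧ a ∈ U r (i + 1) := by
    rintro i rfl ⟨r, hr, hr'⟩
    have d1 := h.left.box hr'
    rw [e r d1] at hr'
    have hry : r ≤ y := by
      by_contra hlt
      exact hφ.mono (not_le.1 hlt) hy hr'
    have d2 : D r (i + 1 + 1) := hD.convex d1 h4 le_rfl hry (by omega) le_rfl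
    exact hU.skip i r rfl hr (by rwa [e' r d2])
  have far : ∀ i, i ≠ k → i ≠ k + 1 → i + 1 ≠ k → ¬ Descent a U i := by
    rintro i i1 i2 i3 ⟨r, hr, hr'⟩
    rw [h.other r _ (by omega) (by omega)] at hr hr'
    refine i1 (hU.descent_right i ⟨r, ?_, ?_⟩)
    · rwa [fillPure_of_ne _ i1]
    · rwa [fillPure_of_ne _ i3]
  refine ⟨h.left, h.colPure_left, ?_, ?_, ?_, ?_, ?_⟩
  · rintro i ⟨r, hr, hr'⟩
    by_contra hi
    by_cases i1 : i = k + 1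
    · subst i1
      rw [h.leftPure r (h.left.box hr)] at hr
      simp at hr
    by_cases i2 : i + 1 = k
    · rw [h.other r i (by omega) (by omega)] at hr
      exact prev i i2 ⟨r, hr, hr'⟩
    · exact far i (by omega) i1 i2 ⟨r, hr, hr'⟩
  · rintro i ⟨r, hr, hr'⟩
    by_contra hi
    rw [fillPure_of_ne _ hi] at hr
    by_cases i1 : i = k
    · subst i1
      rw [h.left.fillPure_self _ ((h.left.fillPure (Or.inr rfl) _).box hr')] at hr'
      simp at hr'
    rw [fillPure_of_ne _ (by omega)] at hr'
    by_cases i2 : i + 1 = k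
    · rw [h.other r i (by omega) (by omega)] at hr
      exact prev i i2 ⟨r, hr, hr'⟩
    · exact far i i1 hi i2 ⟨r, hr, hr'⟩
  · intro i r hi hr hr'
    obtain rfl : i = k := by omega
    rw [h.other r _ (by omega) (by omega)] at hr'
    have d1 := h.left.box hr
    have d2 : D r (i + 1) :=
      hD.convex d1 (h.right.box hr') le_rfl le_rfl (by omega) (by omega)
    rw [e r d1, ← e' r d2] at hr
    have := hU.descent_right (i + 1)
      ⟨r, by rwa [fillPure_of_ne _ (by omega)], by rwa [fillPure_of_ne _ (by omega)]⟩
    omega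
  · have := hU.allPlus
    rw [List.range_succ, signatureOn_append,
      signatureOn_cons_none (h.left.colSign_eq_none h.colMixed_left),
      signatureOn_congr (S' := U')]
    · simpa [signatureOn] using this
    · intro c hc r
      have := List.mem_range.1 hc
      exact h.other r c (by omega) (by omega)
  · have := hU.allMinus
    rw [columnsAfter_eq_cons hkm,
      signatureOn_cons_none (h.right.colSign_eq_none h.colMixed_right)] at this
    rw [signatureOn_congr (S' := U')]
    · exact this
    · intro c hc r
      have := lt_of_mem_columnsAfter hc
      exact h.other r c (by omega) (by omega)

end Exchange

/-- A column containing `a + 1` is mixed unless it is `(a+1)`-pure. -/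
theorem colMixed_of_high {r c : ℕ} (hr : a + 1 ∈ U r c)
    (hp : ¬ ColPure (a + 1) U c) : ColMixed a U c := by
  refine ⟨⟨r, _, hr⟩, fun hq => ?_, hp⟩
  rw [hq.2 r ⟨_, hr⟩] at hr
  simp at hr

/-- A column containing `a` is mixed unless it is `a`-pure. -/
theorem colMixed_of_low {r c : ℕ} (hr : a ∈ U r c)
    (hp : ¬ ColPure a U c) : ColMixed a U c := by
  refine ⟨⟨r, _, hr⟩, hp, fun hq => ?_⟩
  rw [hq.2 r ⟨_, hr⟩] at hr
  simp at hr

namespace IsActive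

theorem colMixed_left (h : IsActive a D m (k + 1) U) (hd : Descent a U k) : ColMixed a U k := by
  obtain ⟨r, hr, -⟩ := hd
  refine colMixed_of_high hr fun hp => ?_
  have := h.allPlus
  rw [List.range_succ, signatureOn_append,
    signatureOn_cons_some (h.filling.colSign_eq_minus hp)] at this
  exact not_allPlus_reduceWord_concat _ _ this

theorem colMixed_right (hm : ∀ r c, D r c → c < m) (h : IsActive a D m k U)
    (hd : Descent a (fillPure (a + 1) k U) k) : ColMixed a U (k + 1) := by
  obtain ⟨r, -, hr⟩ := hd
  rw [fillPure_of_ne _ (by omega)] at hr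
  refine colMixed_of_low hr fun hp => ?_
  have := h.allMinus
  rw [columnsAfter_eq_cons (hm _ _ (h.filling.box hr)),
    signatureOn_cons_some (h.filling.colSign_eq_plus hp)] at this
  exact not_allMinus_reduceWord_cons _ _ this

/-- The only possible resolution step of the `e`-algorithm is the exchange. -/
theorem resStep_unique (hD : IsSkewShape D) (h : IsActive a D m (k + 1) U)
    (hx : Exchange a D k U U') {N : Filling} (hN : ResStep a U N) : N = U' := by
  cases hN with
  | m1 i hd hm hp =>
    obtain rfl : i = k := by have := h.descent_left i hd; omega
    exact hx.resM1_eq hD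
  | twoM i hd hp hm =>
    obtain rfl : i = k := by have := h.descent_left i hd; omega
    exact absurd hp hx.colMixed_left.2.2
  | twoOne i hd hp hm =>
    obtain rfl : i = k := by have := h.descent_left i hd; omega
    exact absurd hp hx.colMixed_left.2.2

/-- The only possible resolution step of the `f`-algorithm is the exchange. -/
theorem resStep_unique_fillPure (hD : IsSkewShape D) (h : IsActive a D m k U')
    (hx : Exchange a D k U U') {N : Filling} (hN : ResStep a (fillPure (a + 1) k U') N) :
    N = fillPure (a + 1) (k + 1) U := by
  cases hN with
  | m1 i hd hm hp =>
    obtain rfl := h.descent_right i hd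
    exact absurd hx.colPure_fillPure_right hm.2.2
  | twoM i hd hp hm =>
    obtain rfl := h.descent_right i hd
    exact hx.res2M_eq hD
  | twoOne i hd hp hq =>
    obtain rfl := h.descent_right i hd
    exact absurd hq hx.colMixed_fillPure_right.2.1

end IsActive

/-- One exchange, as a relation between fillings with a marked `a`-pure column. -/
def ExchangeStep (a : ℕ) (D : ℕ → ℕ → Prop) (p q : ℕ × Filling) : Prop :=
  p.1 = q.1 + 1 ∧ Exchange a D q.1 p.2 q.2

/-- A sequence of exchanges moving the marked `a`-pure column to the left. -/
def ExchangeChain (a : ℕ) (D : ℕ → ℕ → Prop) : ℕ × Filling → ℕ × Filling → Prop :=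
  Relation.ReflTransGen (ExchangeStep a D)

theorem resStep_descent {S N : Filling} (h : ResStep a S N) : ∃ k, Descent a S k := by
  cases h with
  | m1 k hd _ _ => exact ⟨k, hd⟩
  | twoM k hd _ _ => exact ⟨k, hd⟩
  | twoOne k hd _ _ => exact ⟨k, hd⟩

/-- A filling without descents is its own only outcome. -/
theorem isNormOf_eq_of_no_descent {S N : Filling} (h : ∀ k, ¬ Descent a S k)
    (hN : IsNormOf a S N) : N = S := by
  rcases Relation.ReflTransGen.cases_head hN.1 with e | ⟨S', hs, -⟩
  · exact e.symm
  · obtain ⟨k, hk⟩ := resStep_descent hs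
    exact absurd hk (h k)

/-- The first step of the algorithm, if it is forced, determines the outcome. -/
theorem isNormOf_iff_of_unique_step {S S' : Filling} (hs : ResStep a S S')
    (hu : ∀ N, ResStep a S N → N = S') (N : Filling) : IsNormOf a S N ↔ IsNormOf a S' N := by
  refine ⟨fun hN => ⟨?_, hN.2⟩, fun hN => ⟨hN.1.head hs, hN.2⟩⟩
  rcases Relation.ReflTransGen.cases_head hN.1 with e | ⟨S'', hs', h⟩
  · obtain ⟨k, hk⟩ := resStep_descent hs
    exact absurd hk (e ▸ hN.2 k)
  · rwa [hu _ hs'] at h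

/-- The `e`-algorithm moves the marked column to the left by exchanges. -/
theorem IsActive.exists_run_left (hD : IsSkewShape D) (hm : ∀ r c, D r c → c < m)
    (h : IsActive a D m j U) : ∃ B N, ExchangeChain a D (j, U) (B, N) ∧ IsActive a D m B N ∧
      IsNormOf a U N ∧ ∀ N', IsNormOf a U N' → N' = N := by
  induction j generalizing U with
  | zero =>
    have hnd : ∀ k, ¬ Descent a U k := fun k hk => by have := h.descent_left k hk; omega
    exact ⟨0, U, .refl, h, ⟨.refl, hnd⟩, fun N' hN' => isNormOf_eq_of_no_descent hnd hN'⟩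
  | succ k ih =>
    by_cases hd : Descent a U k
    · obtain ⟨U', hx⟩ := exists_exchange_of_left hD h.filling hd (h.colMixed_left hd) h.pure
      obtain ⟨B, N, hc, hN, hn, hu⟩ := ih (hx.isActive_right hD hm h)
      have key := isNormOf_iff_of_unique_step (hx.resStep_left hD)
        fun N hN => h.resStep_unique hD hx hN
      exact ⟨B, N, hc.head ⟨rfl, hx⟩, hN, (key N).2 hn, fun N' hN' => hu N' ((key N').1 hN')⟩
    · have hnd : ∀ i, ¬ Descent a U i := fun i hi => by
        obtain rfl : i = k := by have := h.descent_left i hi; omega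
        exact hd hi
      exact ⟨k + 1, U, .refl, h, ⟨.refl, hnd⟩, fun N' hN' => isNormOf_eq_of_no_descent hnd hN'⟩

/-- The `f`-algorithm moves the marked column to the right by exchanges. -/
theorem IsActive.exists_run_right (hD : IsSkewShape D) (hm : ∀ r c, D r c → c < m)
    (h : IsActive a D m j U) : ∃ B N, ExchangeChain a D (B, N) (j, U) ∧ IsActive a D m B N ∧
      IsNormOf a (fillPure (a + 1) j U) (fillPure (a + 1) B N) ∧
      ∀ N', IsNormOf a (fillPure (a + 1) j U) N' → N' = fillPure (a + 1) B N := by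
  obtain ⟨d, hd⟩ : ∃ d, m ≤ j + d := ⟨m, by omega⟩
  induction d generalizing j U with
  | zero =>
    obtain ⟨r, hr⟩ := h.pure.1
    have := hm r j ((h.filling.shape r j).1 hr)
    omega
  | succ d ih =>
    by_cases hds : Descent a (fillPure (a + 1) j U) j
    · obtain ⟨U', hx⟩ :=
        exists_exchange_of_right hD h.filling hds (h.colMixed_right hm hds) h.pure
      obtain ⟨B, N, hc, hN, hn, hu⟩ := ih (hx.isActive_left hD hm h) (by omega)
      have key := isNormOf_iff_of_unique_step (hx.resStep_right hD)
        fun N hN => h.resStep_unique_fillPure hD hx hN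
      exact ⟨B, N, hc.tail ⟨rfl, hx⟩, hN, (key _).2 hn, fun N' hN' => hu N' ((key N').1 hN')⟩
    · have hnd : ∀ i, ¬ Descent a (fillPure (a + 1) j U) i := fun i hi => by
        obtain rfl := h.descent_right i hi
        exact hds hi
      exact ⟨j, U, .refl, h, ⟨.refl, hnd⟩, fun N' hN' => isNormOf_eq_of_no_descent hnd hN'⟩

namespace ExchangeChain

variable {p q : ℕ × Filling}

theorem reflTransGen_left (hD : IsSkewShape D) (h : ExchangeChain a D p q) :
    Relation.ReflTransGen (ResStep a) p.2 q.2 := by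
  induction h with
  | refl => exact .refl
  | tail _ hs ih => exact ih.tail (hs.2.resStep_left hD)

theorem reflTransGen_right (hD : IsSkewShape D) (h : ExchangeChain a D p q) :
    Relation.ReflTransGen (ResStep a) (fillPure (a + 1) q.1 q.2) (fillPure (a + 1) p.1 p.2) := by
  induction h with
  | refl => exact .refl
  | @tail b c _ hs ih =>
    refine ih.head ?_
    rw [hs.1]
    exact hs.2.resStep_right hD

theorem exists_low_iff (h : ExchangeChain a D p q) (c : ℕ) :
    (∃ r, a ∈ p.2 r c) ↔ ∃ r, a ∈ q.2 r c := by
  induction h with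
  | refl => rfl
  | tail _ hs ih => exact ih.trans (hs.2.exists_low_iff c)

theorem exists_high_iff (h : ExchangeChain a D p q) (c : ℕ) :
    ((∃ r, a + 1 ∈ p.2 r c) ∨ c = p.1) ↔ ((∃ r, a + 1 ∈ q.2 r c) ∨ c = q.1) := by
  induction h with
  | refl => rfl
  | tail _ hs ih =>
    refine ih.trans ?_
    rw [hs.1]
    exact hs.2.exists_high_iff c

/-- The reduced signatures before and after a chain of exchanges have the same signs. -/
theorem signs_eq (hD : IsSkewShape D) (hm : ∀ r c, D r c → c < m) (h : ExchangeChain a D p q)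
    (hp : IsActive a D m p.1 p.2) :
    signatureOn a p.2 (List.range p.1) = signatureOn a q.2 (List.range q.1) ∧
      signatureOn a p.2 (columnsAfter m p.1) = signatureOn a q.2 (columnsAfter m q.1) ∧
      IsActive a D m q.1 q.2 := by
  induction h with
  | refl => exact ⟨rfl, rfl, hp⟩
  | @tail b c _ hs ih =>
    obtain ⟨e1, e2, hb⟩ := ih
    obtain ⟨hbc, hx⟩ := hs
    rw [hbc] at e1 e2 hb
    refine ⟨e1.trans ?_, e2.trans ?_, hx.isActive_right hD hm hb⟩
    · rw [List.range_succ, signatureOn_append,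
        signatureOn_cons_none (hx.left.colSign_eq_none hx.colMixed_left)]
      simp only [signatureOn, List.filterMap_nil, List.append_nil]
      refine signatureOn_congr fun d hd r => ?_
      have := List.mem_range.1 hd
      exact hx.other r d (by omega) (by omega)
    · obtain ⟨r, hr⟩ := hb.pure.1
      have hlt := hm _ _ ((hb.filling.shape _ _).1 hr)
      rw [columnsAfter_eq_cons hlt,
        signatureOn_cons_none (hx.right.colSign_eq_none hx.colMixed_right)]
      refine signatureOn_congr fun d hd r => ?_
      have := lt_of_mem_columnsAfter hd
      exact hx.other r d (by omega) (by omega)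

end ExchangeChain

theorem norm12_eq_of_unique {S N : Filling} (hN : IsNormOf a S N)
    (hu : ∀ N', IsNormOf a S N' → N' = N) : norm12 a S = N := by
  have hex : ∃ N, IsNormOf a S N := ⟨N, hN⟩
  rw [norm12, dif_pos hex]
  exact hu _ hex.choose_spec

end Run

/-! ### Restricting a set-valued reverse plane partition to two letters -/

theorem inSkew_of_between {lam mu : YoungDiagram} {r c r' c' x y : ℕ} (h : InSkew lam mu r c)
    (h' : InSkew lam mu r' c') (h1 : r ≤ x) (h2 : x ≤ r') (h3 : c ≤ y) (h4 : y ≤ c') :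
    InSkew lam mu x y :=
  ⟨lam.up_left_mem h2 h4 h'.1, fun hm => h.2 (mu.up_left_mem h1 h3 hm)⟩

theorem restrictTwo_restrictTwo (i : ℕ) (T : Filling) :
    restrictTwo i (restrictTwo i T) = restrictTwo i T := by
  funext r c
  simp [restrictTwo]

theorem signature_eq_signatureOn (m i : ℕ) (T : Filling) :
    signature m i T = signatureOn i (restrictTwo i T) (List.range m) := by
  have key : ∀ c, colSign i T c = colSign i (restrictTwo i T) c := fun c => by
    unfold colSign
    rw [restrictTwo_restrictTwo]
  simp only [signature, signatureOn, key]

theorem exists_mem_restrictTwo_low {i : ℕ} {T : Filling} {c : ℕ} :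
    (∃ r, i ∈ restrictTwo i T r c) ↔ ∃ r, i ∈ T r c := by
  simp [restrictTwo]

theorem exists_mem_restrictTwo_high {i : ℕ} {T : Filling} {c : ℕ} :
    (∃ r, i + 1 ∈ restrictTwo i T r c) ↔ ∃ r, i + 1 ∈ T r c := by
  simp [restrictTwo]

/-- The boxes of `T^{(i)}`. -/
def twoShape (i : ℕ) (T : Filling) (r c : ℕ) : Prop := (restrictTwo i T r c).Nonempty

theorem twoShape_iff {i : ℕ} {T : Filling} {r c : ℕ} :
    twoShape i T r c ↔ i ∈ T r c ∨ i + 1 ∈ T r c := by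
  constructor
  · rintro ⟨x, hx⟩
    simp only [restrictTwo, Finset.mem_inter, Finset.mem_insert, Finset.mem_singleton] at hx
    rcases hx with ⟨hx, rfl | rfl⟩
    exacts [Or.inl hx, Or.inr hx]
  · rintro (h | h)
    exacts [⟨i, by simp [restrictTwo, h]⟩, ⟨i + 1, by simp [restrictTwo, h]⟩]

namespace IsSVRPP

variable {n : ℕ} {lam mu : YoungDiagram} {T : Filling} {i : ℕ}

theorem inSkew (h : IsSVRPP n lam mu T) {r c x : ℕ} (hx : x ∈ T r c) : InSkew lam mu r c := by
  by_contra hn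
  simp [h.outside r c hn] at hx

theorem le_of_row (h : IsSVRPP n lam mu T) {r c c' p q : ℕ} (hc : c < c') (hp : p ∈ T r c)
    (hq : q ∈ T r c') : p ≤ q := by
  induction c', hc using Nat.le_induction generalizing q with
  | base => exact h.row r c (h.inSkew hp) (h.inSkew hq) p hp q hq
  | succ d hd ih =>
    have hs := inSkew_of_between (h.inSkew hp) (h.inSkew hq) le_rfl le_rfl
      (show c ≤ d by omega) (Nat.le_succ d)
    obtain ⟨z, hz⟩ := h.nonempty _ _ hs
    exact (ih hz).trans (h.row r d hs (h.inSkew hq) z hz q hq)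

theorem le_of_col (h : IsSVRPP n lam mu T) {r r' c p q : ℕ} (hr : r < r') (hp : p ∈ T r c)
    (hq : q ∈ T r' c) : p ≤ q := by
  induction r', hr using Nat.le_induction generalizing q with
  | base => exact h.col r c (h.inSkew hp) (h.inSkew hq) p hp q hq
  | succ d hd ih =>
    have hs := inSkew_of_between (h.inSkew hp) (h.inSkew hq)
      (show r ≤ d by omega) (Nat.le_succ d) le_rfl le_rfl
    obtain ⟨z, hz⟩ := h.nonempty _ _ hs
    exact (ih hz).trans (h.col d c hs (h.inSkew hq) z hz q hq)

theorem le_of_le (h : IsSVRPP n lam mu T) {r c x y p q : ℕ} (hr : r ≤ x) (hc : c ≤ y)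
    (hne : ¬ (r = x ∧ c = y)) (hp : p ∈ T r c) (hq : q ∈ T x y) : p ≤ q := by
  rcases hr.eq_or_lt with rfl | hr
  · exact h.le_of_row (lt_of_le_of_ne hc fun e => hne ⟨rfl, e⟩) hp hq
  rcases hc.eq_or_lt with rfl | hc
  · exact h.le_of_col hr hp hq
  obtain ⟨z, hz⟩ := h.nonempty _ _ (inSkew_of_between (h.inSkew hp) (h.inSkew hq) hr.le le_rfl
    le_rfl hc.le)
  exact (h.le_of_col hr hp hz).trans (h.le_of_row hc hz hq)

theorem isSkewShape (h : IsSVRPP n lam mu T) (i : ℕ) : IsSkewShape (twoShape i T) := by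
  constructor
  · intro r c r' c' x y h1 h2 hr hr' hc hc'
    by_cases e1 : r = x ∧ c = y
    · obtain ⟨rfl, rfl⟩ := e1; exact h1
    by_cases e2 : x = r' ∧ y = c'
    · obtain ⟨rfl, rfl⟩ := e2; exact h2
    rw [twoShape_iff] at h1 h2 ⊢
    obtain ⟨p, hp, hpi⟩ : ∃ p ∈ T r c, i ≤ p := by
      rcases h1 with h1 | h1
      exacts [⟨_, h1, le_rfl⟩, ⟨_, h1, Nat.le_succ i⟩]
    obtain ⟨q, hq, hqi⟩ : ∃ q ∈ T r' c', q ≤ i + 1 := by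
      rcases h2 with h2 | h2
      exacts [⟨_, h2, Nat.le_succ i⟩, ⟨_, h2, le_rfl⟩]
    obtain ⟨z, hz⟩ := h.nonempty _ _
      (inSkew_of_between (h.inSkew hp) (h.inSkew hq) hr hr' hc hc')
    have h3 := h.le_of_le hr hc e1 hp hz
    have h4 := h.le_of_le hr' hc' e2 hz hq
    rcases (show z = i ∨ z = i + 1 by omega) with rfl | rfl
    exacts [Or.inl hz, Or.inr hz]
  · refine ⟨lam.colLen 0, fun r c hD => ?_⟩
    obtain ⟨x, hx⟩ := hD
    have hx' := (h.inSkew (Finset.mem_inter.1 hx).1).1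
    exact YoungDiagram.mem_iff_lt_colLen.1 (lam.up_left_mem le_rfl (Nat.zero_le c) hx')

theorem lt_rowLen (h : IsSVRPP n lam mu T) {r c x : ℕ} (hx : x ∈ T r c) : c < lam.rowLen 0 :=
  YoungDiagram.mem_iff_lt_rowLen.1 (lam.up_left_mem (Nat.zero_le r) le_rfl (h.inSkew hx).1)

theorem lt_rowLen_of_twoShape (h : IsSVRPP n lam mu T) (r c : ℕ) (hD : twoShape i T r c) :
    c < lam.rowLen 0 := by
  obtain ⟨x, hx⟩ := hD
  exact h.lt_rowLen (Finset.mem_inter.1 hx).1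

theorem isTwoFilling (h : IsSVRPP n lam mu T) (i : ℕ) :
    IsTwoFilling i (twoShape i T) (restrictTwo i T) := by
  refine ⟨fun r c => Iff.rfl, fun r c => Finset.inter_subset_right, fun {r r' c} hr h1 h2 => ?_⟩
  have := h.le_of_col hr (Finset.mem_inter.1 h1).1 (Finset.mem_inter.1 h2).1
  omega

theorem not_descent (h : IsSVRPP n lam mu T) (i k : ℕ) : ¬ Descent i (restrictTwo i T) k := by
  rintro ⟨r, h1, h2⟩
  have := h.le_of_row (Nat.lt_succ_self k) (Finset.mem_inter.1 h1).1 (Finset.mem_inter.1 h2).1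
  omega

/-- Replacing `T^{(i)}` by a filling of the same shape without descents gives a set-valued reverse
plane partition again. -/
theorem isSVRPP_replaceTwo (h : IsSVRPP n lam mu T) (h1 : 1 ≤ i) (h2 : i < n) {N : Filling}
    (hN : IsTwoFilling i (twoShape i T) N) (hd : ∀ k, ¬ Descent i N k) :
    IsSVRPP n lam mu (replaceTwo i T N) := by
  have mem : ∀ {r c x}, x ∈ replaceTwo i T N r c →
      (x ∈ T r c ∧ x ≠ i ∧ x ≠ i + 1) ∨ ((x = i ∨ x = i + 1) ∧ x ∈ N r c) := by
    intro r c x hx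
    simp only [replaceTwo, Finset.mem_union, Finset.mem_sdiff, Finset.mem_insert,
      Finset.mem_singleton, not_or] at hx
    rcases hx with hx | hx
    · exact Or.inl hx
    · exact Or.inr ⟨by simpa using hN.letters r c hx, hx⟩
  have box : ∀ {r c x}, x ∈ N r c → ∃ y ∈ T r c, y = i ∨ y = i + 1 := by
    intro r c x hx
    rcases twoShape_iff.1 (hN.box hx) with hy | hy
    exacts [⟨_, hy, Or.inl rfl⟩, ⟨_, hy, Or.inr rfl⟩]
  refine ⟨fun r c hs => ?_, fun r c hs => ?_, fun r c x hx => ?_, fun r c hs hs' p hp q hq => ?_,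
    fun r c hs hs' p hp q hq => ?_⟩
  · refine Finset.eq_empty_of_forall_notMem fun x hx => hs ?_
    rcases mem hx with hx | hx
    · exact h.inSkew hx.1
    · obtain ⟨y, hy, -⟩ := box hx.2
      exact h.inSkew hy
  · by_cases hD : twoShape i T r c
    · exact ((hN.shape r c).2 hD).mono Finset.subset_union_right
    · obtain ⟨x, hx⟩ := h.nonempty r c hs
      rw [twoShape_iff, not_or] at hD
      refine ⟨x, Finset.mem_union_left _ (Finset.mem_sdiff.2 ⟨hx, ?_⟩)⟩
      simp only [Finset.mem_insert, Finset.mem_singleton, not_or]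
      exact ⟨fun e => hD.1 (e ▸ hx), fun e => hD.2 (e ▸ hx)⟩
  · rcases mem hx with hx | hx
    · exact h.letters r c hx.1
    · rw [Finset.mem_Icc]; omega
  · rcases mem hp with hp | hp <;> rcases mem hq with hq | hq
    · exact h.row r c hs hs' p hp.1 q hq.1
    · obtain ⟨y, hy, hyi⟩ := box hq.2
      have := h.row r c hs hs' p hp.1 y hy
      omega
    · obtain ⟨y, hy, hyi⟩ := box hp.2
      have := h.row r c hs hs' y hy q hq.1
      omega
    · by_contra hlt
      obtain rfl : p = i + 1 := by omega
      obtain rfl : q = i := by omega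
      exact hd c ⟨r, hp.2, hq.2⟩
  · rcases mem hp with hp | hp <;> rcases mem hq with hq | hq
    · exact h.col r c hs hs' p hp.1 q hq.1
    · obtain ⟨y, hy, hyi⟩ := box hq.2
      have := h.col r c hs hs' p hp.1 y hy
      omega
    · obtain ⟨y, hy, hyi⟩ := box hp.2
      have := h.col r c hs hs' y hy q hq.1
      omega
    · by_contra hlt
      obtain rfl : p = i + 1 := by omega
      obtain rfl : q = i := by omega
      exact hN.col (Nat.lt_succ_self r) hp.2 hq.2

end IsSVRPP

theorem restrictTwo_replaceTwo {i : ℕ} {D : ℕ → ℕ → Prop} {N : Filling} (T : Filling)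
    (hN : IsTwoFilling i D N) : restrictTwo i (replaceTwo i T N) = N := by
  funext r c
  ext x
  have : x ∈ N r c → _ := fun hx => hN.letters r c hx
  simp only [restrictTwo, replaceTwo, Finset.mem_inter, Finset.mem_union, Finset.mem_sdiff,
    Finset.mem_insert, Finset.mem_singleton] at this ⊢
  tauto

theorem replaceTwo_sdiff {i : ℕ} {D : ℕ → ℕ → Prop} {N : Filling} (T : Filling)
    (hN : IsTwoFilling i D N) (r c : ℕ) :
    replaceTwo i T N r c \ {i, i + 1} = T r c \ {i, i + 1} := by
  ext x
  have : x ∈ N r c → _ := fun hx => hN.letters r c hx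
  simp only [replaceTwo, Finset.mem_union, Finset.mem_sdiff,
    Finset.mem_insert, Finset.mem_singleton] at this ⊢
  tauto

theorem replaceTwo_restrictTwo {i : ℕ} {T T' : Filling}
    (h : ∀ r c, T r c \ {i, i + 1} = T' r c \ {i, i + 1}) :
    replaceTwo i T (restrictTwo i T') = T' := by
  funext r c
  rw [replaceTwo, h, restrictTwo, Finset.sdiff_union_inter]

/-! ### The columns on which the operators act -/

theorem signatureOn_range_split {a m A : ℕ} {S : Filling} {s : Sgn} {u v : List (Sgn × ℕ)}
    (h : signatureOn a S (List.range m) = u ++ (s, A) :: v) :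
    colSign a S A = some s ∧ u = signatureOn a S (List.range A) ∧
      v = signatureOn a S (columnsAfter m A) := by
  obtain ⟨l₁, l₂, hl, hu, hv⟩ := List.filterMap_eq_append_iff.1 h
  obtain ⟨l₃, b, l₄, rfl, h3, hb, h4⟩ := List.filterMap_eq_cons_iff.1 hv
  obtain ⟨s', hs', e⟩ := Option.map_eq_some_iff.1 hb
  obtain ⟨rfl, rfl⟩ := Prod.mk.injEq .. ▸ e
  have hbm : b < m := List.mem_range.1 (by rw [hl]; simp)
  have hlen : (l₁ ++ l₃).length = b := by
    have h1 : (List.range m)[(l₁ ++ l₃).length]? = some b := by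
      rw [hl, ← List.append_assoc]
      simp only [List.getElem?_append_right le_rfl, Nat.sub_self, List.getElem?_cons_zero]
    have h2 := List.getElem?_eq_some_iff.1 h1
    obtain ⟨h3, h4⟩ := h2
    rwa [List.getElem_range] at h4
  rw [range_eq_append hbm, ← List.append_assoc] at hl
  obtain ⟨e1, e2⟩ := List.append_inj hl (by rw [hlen, List.length_range])
  refine ⟨hs', ?_, ?_⟩
  · rw [e1, signatureOn_append]
    have : signatureOn a S l₃ = [] := List.filterMap_eq_nil_iff.2 h3
    rw [this, List.append_nil]
    exact hu.symm
  · rw [(List.cons_eq_cons.1 e2).2]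
    exact h4.symm

section Operators

variable {n : ℕ} {lam mu : YoungDiagram} {T T' : Filling} {i A : ℕ}

theorem colPure_of_colSign_plus {a c : ℕ} {S : Filling} (h : colSign a S c = some Sgn.plus) :
    ColPure a (restrictTwo a S) c := by
  unfold colSign at h
  split_ifs at h with h1
  · exact h1
  · simp at h

theorem colPure_of_colSign_minus {a c : ℕ} {S : Filling} (h : colSign a S c = some Sgn.minus) :
    ColPure (a + 1) (restrictTwo a S) c := by
  unfold colSign at h
  split_ifs at h with h1 h2
  · simp at h
  · exact h2

theorem fillPure_eStart (hp : ColPure (i + 1) (restrictTwo i T) A) :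
    fillPure (i + 1) A (eStart i T A) = restrictTwo i T := by
  rw [eStart, fillPure_fillPure, fillPure_eq_self hp.2]

theorem IsSVRPP.isActive_eStart (h : IsSVRPP n lam mu T) (hA : eColumn lam i T = some A) :
    IsActive i (twoShape i T) (lam.rowLen 0) A (eStart i T A) ∧
      ColPure (i + 1) (restrictTwo i T) A := by
  obtain ⟨u, v, e, hu, hv⟩ := exists_split_of_leftmostMinus _ _ hA
  rw [signature_eq_signatureOn] at e
  obtain ⟨hs, rfl, rfl⟩ := signatureOn_range_split e
  have hp := colPure_of_colSign_minus hs
  rw [restrictTwo_restrictTwo] at hp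
  have hS := h.isTwoFilling i
  have hU := hS.fillPure (Or.inl rfl) A
  have hV := fillPure_eStart hp
  have hp' := hS.colPure_iff.1 hp
  refine ⟨⟨hU, hU.colPure_iff.2 ⟨hp'.1, fun r hr => hS.fillPure_self _ hr⟩, ?_, ?_, ?_, ?_, ?_⟩, hp⟩
  · rintro k ⟨r, hr, hr'⟩
    by_contra hk
    rw [eStart] at hr hr'
    rw [fillPure_of_ne _ hk] at hr'
    by_cases hkA : k = A
    · subst hkA
      rw [hS.fillPure_self _ (hU.box hr)] at hr
      simp at hr
    · rw [fillPure_of_ne _ hkA] at hr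
      exact h.not_descent i k ⟨r, hr, hr'⟩
  · intro k hk
    rw [hV] at hk
    exact absurd hk (h.not_descent i k)
  · rintro k r rfl hr hr'
    rw [eStart, fillPure_of_ne _ (by omega)] at hr hr'
    have := h.le_of_row (show k < k + 2 by omega) (Finset.mem_inter.1 hr).1
      (Finset.mem_inter.1 hr').1
    omega
  · rwa [signatureOn_congr (S' := restrictTwo i T)]
    intro c hc r
    exact fillPure_of_ne _ (List.mem_range.1 hc).ne r
  · rwa [signatureOn_congr (S' := restrictTwo i T)]
    intro c hc r
    exact fillPure_of_ne _ (lt_of_mem_columnsAfter hc).ne' r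

theorem IsSVRPP.isActive_restrictTwo (h : IsSVRPP n lam mu T) (hA : fColumn lam i T = some A) :
    IsActive i (twoShape i T) (lam.rowLen 0) A (restrictTwo i T) := by
  obtain ⟨u, v, e, hu, hv⟩ := exists_split_of_rightmostPlus _ _ hA
  rw [signature_eq_signatureOn] at e
  obtain ⟨hs, rfl, rfl⟩ := signatureOn_range_split e
  have hp := colPure_of_colSign_plus hs
  rw [restrictTwo_restrictTwo] at hp
  have hS := h.isTwoFilling i
  have hV := hS.fillPure (Or.inr rfl) A
  refine ⟨hS, hp, fun k hk => absurd hk (h.not_descent i k), ?_, ?_, hu, hv⟩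
  · rintro k ⟨r, hr, hr'⟩
    by_contra hk
    rw [fillPure_of_ne _ hk] at hr
    by_cases hkA : k + 1 = A
    · subst hkA
      rw [hS.fillPure_self _ (hV.box hr')] at hr'
      simp at hr'
    · rw [fillPure_of_ne _ hkA] at hr'
      exact h.not_descent i k ⟨r, hr, hr'⟩
  · rintro k r rfl hr hr'
    have := h.le_of_row (show k < k + 2 by omega) (Finset.mem_inter.1 hr).1
      (Finset.mem_inter.1 hr').1
    omega

/-- `T^{(i)}` and `T'^{(i)}` are the two ends of a run of the algorithm: flipping column `A` of
`T^{(i)}` to `i` leads by exchanges to `T'^{(i)}`, with marked column `B`. -/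
structure Linked (i m : ℕ) (T T' : Filling) (A B : ℕ) (U : Filling) : Prop where
  skew : IsSkewShape (twoShape i T)
  lt : ∀ r c, twoShape i T r c → c < m
  active : IsActive i (twoShape i T) m A U
  chain : ExchangeChain i (twoShape i T) (A, U) (B, restrictTwo i T')
  start : fillPure (i + 1) A U = restrictTwo i T
  sdiff : ∀ r c, T r c \ {i, i + 1} = T' r c \ {i, i + 1}
  not_descent : ∀ k, ¬ Descent i (restrictTwo i T) k
  not_descent' : ∀ k, ¬ Descent i (restrictTwo i T') k

namespace Linked

variable {m B : ℕ} {U : Filling}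

theorem signature_left (h : Linked i m T T' A B U) :
    signature m i T = signatureOn i U (List.range A) ++
      (Sgn.minus, A) :: signatureOn i U (columnsAfter m A) := by
  have hV := h.active.filling.fillPure (Or.inr rfl) A
  have hp := h.active.filling.colPure_iff.1 h.active.pure
  have hV' : ColPure (i + 1) (fillPure (i + 1) A U) A := hV.colPure_iff.2
    ⟨hp.1, fun r hr => h.active.filling.fillPure_self _ hr⟩
  obtain ⟨r, hr⟩ := hp.1
  rw [signature_eq_signatureOn, ← h.start, range_eq_append (h.lt r A hr), signatureOn_append,
    signatureOn_cons_some (hV.colSign_eq_minus hV')]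
  congr 1
  · refine signatureOn_congr fun c hc r => ?_
    exact fillPure_of_ne _ (List.mem_range.1 hc).ne r
  · congr 1
    refine signatureOn_congr fun c hc r => ?_
    exact fillPure_of_ne _ (lt_of_mem_columnsAfter hc).ne' r

theorem active' (h : Linked i m T T' A B U) :
    IsActive i (twoShape i T) m B (restrictTwo i T') :=
  (h.chain.signs_eq h.skew h.lt h.active).2.2

theorem signature_right (h : Linked i m T T' A B U) :
    signature m i T' = signatureOn i U (List.range A) ++
      (Sgn.plus, B) :: signatureOn i U (columnsAfter m A) := by
  obtain ⟨e1, e2, -⟩ := h.chain.signs_eq h.skew h.lt h.active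
  have hN := h.active'
  obtain ⟨r, hr⟩ := (hN.filling.colPure_iff.1 hN.pure).1
  rw [e1, e2, signature_eq_signatureOn, range_eq_append (h.lt r B hr), signatureOn_append,
    signatureOn_cons_some (hN.filling.colSign_eq_plus hN.pure)]

theorem reduce_left (h : Linked i m T T' A B U) :
    reduceWord (signature m i T) = reduceWord (signatureOn i U (List.range A)) ++
      (Sgn.minus, A) :: reduceWord (signatureOn i U (columnsAfter m A)) := by
  rw [h.signature_left, reduceWord_split _ h.active.allPlus h.active.allMinus]

theorem reduce_right (h : Linked i m T T' A B U) :
    reduceWord (signature m i T') = reduceWord (signatureOn i U (List.range A)) ++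
      (Sgn.plus, B) :: reduceWord (signatureOn i U (columnsAfter m A)) := by
  rw [h.signature_right, reduceWord_split _ h.active.allPlus h.active.allMinus]

theorem eOp_eq (h : Linked i (lam.rowLen 0) T T' A B U) : eOp lam i T = some T' := by
  have hc : eColumn lam i T = some A := by
    rw [eColumn, h.reduce_left]
    exact leftmostMinus_append h.active.allPlus _ _
  have hs : eStart i T A = U := by
    rw [eStart, ← h.start, fillPure_fillPure, fillPure_eq_self h.active.pure.2]
  obtain ⟨_, N, -, -, -, hu⟩ := h.active.exists_run_left h.skew h.lt
  have hn : IsNormOf i U (restrictTwo i T') :=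
    ⟨h.chain.reflTransGen_left h.skew, h.not_descent'⟩
  rw [eOp, hc, Option.map_some, hs,
    norm12_eq_of_unique hn fun N' hN' => (hu N' hN').trans (hu _ hn).symm,
    replaceTwo_restrictTwo h.sdiff]

theorem fOp_eq (h : Linked i (lam.rowLen 0) T T' A B U) : fOp lam i T' = some T := by
  have hc : fColumn lam i T' = some B := by
    rw [fColumn, h.reduce_right]
    exact rightmostPlus_append _ _ h.active.allMinus
  obtain ⟨_, N, -, -, -, hu⟩ := h.active'.exists_run_right h.skew h.lt
  have hn : IsNormOf i (fStart i T' B) (restrictTwo i T) := by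
    have := h.chain.reflTransGen_right h.skew
    rw [h.start] at this
    exact ⟨this, h.not_descent⟩
  rw [fOp, hc, Option.map_some,
    norm12_eq_of_unique hn fun N' hN' => (hu N' hN').trans (hu _ hn).symm,
    replaceTwo_restrictTwo fun r c => (h.sdiff r c).symm]

theorem minusCount_eq (h : Linked i m T T' A B U) :
    minusCount (reduceWord (signature m i T)) =
      minusCount (reduceWord (signature m i T')) + 1 := by
  rw [h.reduce_left, h.reduce_right, minusCount_append, minusCount_append]
  simp only [minusCount]
  omega

theorem plusCount_eq (h : Linked i m T T' A B U) :
    plusCount (reduceWord (signature m i T')) =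
      plusCount (reduceWord (signature m i T)) + 1 := by
  rw [h.reduce_left, h.reduce_right, plusCount_append, plusCount_append]
  simp only [plusCount]
  omega


end Linked

end Operators

/-! ### Weights -/

section Weights

variable {n : ℕ} {lam mu : YoungDiagram} {T T' : Filling} {i A m B : ℕ} {U : Filling}

namespace Linked

theorem exists_low_iff (h : Linked i m T T' A B U) (c : ℕ) :
    (∃ r, i ∈ T' r c) ↔ c = A ∨ ∃ r, i ∈ T r c := by
  rw [← exists_mem_restrictTwo_low (T := T'), ← exists_mem_restrictTwo_low (T := T), ← h.start]
  refine (h.chain.exists_low_iff c).symm.trans ?_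
  simp only
  by_cases hc : c = A
  · subst hc
    obtain ⟨r, hr⟩ := h.active.pure.1
    exact iff_of_true ⟨r, by simp [h.active.pure.2 r hr]⟩ (Or.inl rfl)
  · simp only [fillPure_of_ne _ hc, hc, false_or]

theorem not_exists_low (h : Linked i m T T' A B U) : ¬ ∃ r, i ∈ T r A := by
  rw [← exists_mem_restrictTwo_low, ← h.start]
  rintro ⟨r, hr⟩
  rw [h.active.filling.fillPure_self _ ((h.active.filling.fillPure (Or.inr rfl) A).box hr)] at hr
  simp at hr

theorem exists_high_iff (h : Linked i m T T' A B U) (c : ℕ) :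
    (∃ r, i + 1 ∈ T r c) ↔ c = B ∨ ∃ r, i + 1 ∈ T' r c := by
  have key := h.chain.exists_high_iff c
  simp only at key
  rw [← exists_mem_restrictTwo_high (T := T'), ← exists_mem_restrictTwo_high (T := T), or_comm,
    ← key, ← h.start]
  by_cases hc : c = A
  · subst hc
    obtain ⟨r, hr⟩ := (h.active.filling.colPure_iff.1 h.active.pure).1
    exact iff_of_true ⟨r, by simp [h.active.filling.fillPure_self _ hr]⟩ (Or.inr rfl)
  · simp only [fillPure_of_ne _ hc, hc, or_false]

theorem not_exists_high (h : Linked i m T T' A B U) : ¬ ∃ r, i + 1 ∈ T' r B := by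
  rw [← exists_mem_restrictTwo_high]
  rintro ⟨r, hr⟩
  rw [h.active'.pure.2 r ⟨_, hr⟩] at hr
  simp at hr

end Linked

theorem IsSVRPP.finite_columns (h : IsSVRPP n lam mu T) (x : ℕ) :
    {c : ℕ | ∃ r, x ∈ T r c}.Finite :=
  (Set.finite_Iio (lam.rowLen 0)).subset fun _ ⟨_, hr⟩ => h.lt_rowLen hr

theorem Linked.ircont_low (h : Linked i m T T' A B U) (hT : IsSVRPP n lam mu T) :
    ircont T' i = ircont T i + 1 := by
  have e : {c : ℕ | ∃ r, i ∈ T' r c} = insert A {c : ℕ | ∃ r, i ∈ T r c} :=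
    Set.ext h.exists_low_iff
  rw [ircont, e]
  exact Set.ncard_insert_of_notMem (s := {c : ℕ | ∃ r, i ∈ T r c}) h.not_exists_low
    (hT.finite_columns i)

theorem Linked.ircont_high (h : Linked i m T T' A B U) (hT' : IsSVRPP n lam mu T') :
    ircont T (i + 1) = ircont T' (i + 1) + 1 := by
  have e : {c : ℕ | ∃ r, i + 1 ∈ T r c} = insert B {c : ℕ | ∃ r, i + 1 ∈ T' r c} :=
    Set.ext h.exists_high_iff
  rw [ircont, e]
  exact Set.ncard_insert_of_notMem (s := {c : ℕ | ∃ r, i + 1 ∈ T' r c}) h.not_exists_high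
    (hT'.finite_columns _)

theorem Linked.ircont_other (h : Linked i m T T' A B U) {x : ℕ} (h1 : x ≠ i) (h2 : x ≠ i + 1) :
    ircont T' x = ircont T x := by
  have e : ∀ r c, x ∈ T' r c ↔ x ∈ T r c := fun r c => by
    have := Finset.ext_iff.1 (h.sdiff r c) x
    simpa [h1, h2] using this.symm
  simp only [ircont, e]

theorem Linked.wt_eq (h : Linked i m T T' A B U) (hT : IsSVRPP n lam mu T)
    (hT' : IsSVRPP n lam mu T') (p q : Set.Icc 1 n) (hp : p.1 = i) (hq : q.1 = i + 1) :
    wtSVRPP n T' = wtSVRPP n T + Pi.single p 1 - Pi.single q 1 := by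
  funext x
  simp only [Pi.add_apply, Pi.sub_apply, Pi.single_apply, Subtype.ext_iff, hp, hq, wtSVRPP]
  by_cases e1 : x.1 = i
  · have := h.ircont_low hT
    rw [if_pos e1, if_neg (by omega), e1]
    omega
  by_cases e2 : x.1 = i + 1
  · have := h.ircont_high hT'
    rw [if_neg e1, if_pos e2, e2]
    omega
  rw [if_neg e1, if_neg e2, h.ircont_other e1 e2]
  omega

open Classical in
/-- Pure columns account for the difference between the numbers of columns containing `a` and
`a + 1`. -/
theorem IsTwoFilling.plusCount_add_count {a : ℕ} {D : ℕ → ℕ → Prop} {S : Filling}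
    (h : IsTwoFilling a D S) (m : ℕ) :
    plusCount (signatureOn a S (List.range m)) + Nat.count (fun c => ∃ r, a + 1 ∈ S r c) m =
      minusCount (signatureOn a S (List.range m)) + Nat.count (fun c => ∃ r, a ∈ S r c) m := by
  induction m with
  | zero => simp [signatureOn, plusCount, minusCount]
  | succ m ih =>
    rw [List.range_succ, signatureOn_append, plusCount_append, minusCount_append, Nat.count_succ,
      Nat.count_succ]
    by_cases h1 : ColPure a S m
    · have hl : ∃ r, a ∈ S r m := by
        obtain ⟨r, hr⟩ := h1.1
        exact ⟨r, by simp [h1.2 r hr]⟩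
      have hh : ¬ ∃ r, a + 1 ∈ S r m := by
        rintro ⟨r, hr⟩
        rw [h1.2 r ⟨_, hr⟩] at hr
        simp at hr
      rw [signatureOn_cons_some (h.colSign_eq_plus h1), if_pos hl, if_neg hh]
      simp only [signatureOn, List.filterMap_nil, plusCount, minusCount] at ih ⊢
      omega
    by_cases h2 : ColPure (a + 1) S m
    · have hl : ∃ r, a + 1 ∈ S r m := by
        obtain ⟨r, hr⟩ := h2.1
        exact ⟨r, by simp [h2.2 r hr]⟩
      have hh : ¬ ∃ r, a ∈ S r m := by
        rintro ⟨r, hr⟩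
        rw [h2.2 r ⟨_, hr⟩] at hr
        simp at hr
      rw [signatureOn_cons_some (h.colSign_eq_minus h2), if_pos hl, if_neg hh]
      simp only [signatureOn, List.filterMap_nil, plusCount, minusCount] at ih ⊢
      omega
    have hiff : (∃ r, a ∈ S r m) ↔ ∃ r, a + 1 ∈ S r m := by
      by_cases h3 : ColNonempty S m
      · have := h.colMixed_iff.1 ⟨h3, h1, h2⟩
        exact iff_of_true this.1 this.2
      · exact iff_of_false (fun ⟨r, hr⟩ => h3 ⟨r, _, hr⟩) fun ⟨r, hr⟩ => h3 ⟨r, _, hr⟩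
    have hs : colSign a S m = none := by
      rw [colSign, h.restrictTwo_eq, if_neg h1, if_neg h2]
    rw [signatureOn_cons_none hs]
    simp only [hiff]
    simp only [signatureOn, List.filterMap_nil, plusCount, minusCount] at ih ⊢
    omega

open Classical in
theorem IsSVRPP.ircont_eq_count (h : IsSVRPP n lam mu T) (x : ℕ) :
    ircont T x = Nat.count (fun c => ∃ r, x ∈ T r c) (lam.rowLen 0) := by
  rw [Nat.count_eq_card_filter_range, ircont, ← Set.ncard_coe_finset]
  congr 1
  ext c
  simp only [Set.mem_ofPred_eq, Finset.coe_filter, Finset.mem_range]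
  exact ⟨fun hc => ⟨h.lt_rowLen hc.choose_spec, hc⟩, And.right⟩

theorem IsSVRPP.count_sub_eq (h : IsSVRPP n lam mu T) (i : ℕ) :
    (plusCount (reduceWord (signature (lam.rowLen 0) i T)) : ℤ) -
      minusCount (reduceWord (signature (lam.rowLen 0) i T)) = ircont T i - ircont T (i + 1) := by
  classical
  rw [plusCount_sub_minusCount_reduceWord, h.ircont_eq_count, h.ircont_eq_count]
  have key := (h.isTwoFilling i).plusCount_add_count (lam.rowLen 0)
  simp only [exists_mem_restrictTwo_low, exists_mem_restrictTwo_high] at key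
  rw [signature_eq_signatureOn]
  omega

end Weights

/-! ### The crystal structure -/

section Crystal

variable {n : ℕ} {lam mu : YoungDiagram} {T T' : Filling} {i A : ℕ}

/-- The outcome of the algorithm for `e_i` is unique, and it is linked to `T`. -/
theorem IsSVRPP.exists_linked_of_eColumn (h : IsSVRPP n lam mu T) (h1 : 1 ≤ i) (h2 : i < n)
    (hA : eColumn lam i T = some A) :
    (∃! N, IsNormOf i (eStart i T A) N) ∧ ∃ T' B U, IsSVRPP n lam mu T' ∧
      Linked i (lam.rowLen 0) T T' A B U := by
  obtain ⟨hact, hp⟩ := h.isActive_eStart hA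
  have hm := h.lt_rowLen_of_twoShape (i := i)
  obtain ⟨B, N, hc, hN, hn, hu⟩ := hact.exists_run_left (h.isSkewShape i) hm
  have e := restrictTwo_replaceTwo T hN.filling
  refine ⟨⟨N, hn, hu⟩, replaceTwo i T N, B, eStart i T A, h.isSVRPP_replaceTwo h1 h2 hN.filling hn.2,
    h.isSkewShape i, hm, hact, by rwa [e], fillPure_eStart hp,
    fun r c => (replaceTwo_sdiff T hN.filling r c).symm, h.not_descent i, by rw [e]; exact hn.2⟩

/-- The outcome of the algorithm for `f_i` is unique, and `T'` is linked to it. -/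
theorem IsSVRPP.exists_linked_of_fColumn {B : ℕ} (h : IsSVRPP n lam mu T') (h1 : 1 ≤ i)
    (h2 : i < n) (hB : fColumn lam i T' = some B) :
    (∃! N, IsNormOf i (fStart i T' B) N) ∧ ∃ T A U, IsSVRPP n lam mu T ∧
      Linked i (lam.rowLen 0) T T' A B U := by
  have hact := h.isActive_restrictTwo hB
  have hm := h.lt_rowLen_of_twoShape (i := i)
  obtain ⟨A, U, hc, hU, hn, hu⟩ := hact.exists_run_right (h.isSkewShape i) hm
  have hV := hU.filling.fillPure (Or.inr rfl) A
  have e := restrictTwo_replaceTwo T' hV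
  have hs : twoShape i (replaceTwo i T' (fillPure (i + 1) A U)) = twoShape i T' := by
    funext r c
    unfold twoShape
    rw [e]
    exact propext (hV.shape r c)
  refine ⟨⟨_, hn, hu⟩, replaceTwo i T' (fillPure (i + 1) A U), A, U,
    h.isSVRPP_replaceTwo h1 h2 hV hn.2, ?_, ?_, ?_, ?_, e.symm,
    replaceTwo_sdiff T' hV, by rw [e]; exact hn.2, h.not_descent i⟩
  · rw [hs]; exact h.isSkewShape i
  · rw [hs]; exact hm
  · rw [hs]; exact hU
  · rw [hs]; exact hc

theorem IsSVRPP.exists_linked_of_eOp (h : IsSVRPP n lam mu T) (h1 : 1 ≤ i) (h2 : i < n)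
    (he : eOp lam i T = some T') :
    IsSVRPP n lam mu T' ∧ ∃ A B U, Linked i (lam.rowLen 0) T T' A B U := by
  obtain ⟨A, hA, -⟩ := Option.map_eq_some_iff.1 he
  obtain ⟨-, T'', B, U, hT, hl⟩ := h.exists_linked_of_eColumn h1 h2 hA
  obtain rfl : T'' = T' := Option.some.inj (hl.eOp_eq.symm.trans he)
  exact ⟨hT, A, B, U, hl⟩

theorem IsSVRPP.exists_linked_of_fOp (h : IsSVRPP n lam mu T') (h1 : 1 ≤ i) (h2 : i < n)
    (hf : fOp lam i T' = some T) :
    IsSVRPP n lam mu T ∧ ∃ A B U, Linked i (lam.rowLen 0) T T' A B U := by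
  obtain ⟨B, hB, -⟩ := Option.map_eq_some_iff.1 hf
  obtain ⟨-, T'', A, U, hT, hl⟩ := h.exists_linked_of_fColumn h1 h2 hB
  obtain rfl : T'' = T := Option.some.inj (hl.fOp_eq.symm.trans hf)
  exact ⟨hT, A, B, U, hl⟩

theorem eOp_eq_none_iff :
    eOp lam i T = none ↔ minusCount (reduceWord (signature (lam.rowLen 0) i T)) = 0 := by
  rw [eOp, Option.map_eq_none_iff, eColumn, leftmostMinus_eq_none_iff]

theorem fOp_eq_none_iff :
    fOp lam i T = none ↔ plusCount (reduceWord (signature (lam.rowLen 0) i T)) = 0 := by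
  rw [fOp, Option.map_eq_none_iff, fColumn, rightmostPlus_eq_none_iff_plusCount]

end Crystal

/-- The descent-resolution algorithm used by `e_i` and `f_i` has exactly one outcome, so that these
operators are well defined, and with them `SVRPP^n(lam/mu)` is a seminormal `gl_n`-crystal. -/
theorem svrpp_seminormal (lam mu : YoungDiagram) (hsub : mu ≤ lam) (n : ℕ) (hn : 1 ≤ n) :
    (∀ T, IsSVRPP n lam mu T → ∀ i, 1 ≤ i → i < n →
      (∀ A, eColumn lam i T = some A → ∃! N, IsNormOf i (eStart i T A) N) ∧
      (∀ A, fColumn lam i T = some A → ∃! N, IsNormOf i (fStart i T A) N)) ∧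
    IsSeminormalGLCrystal n {T | IsSVRPP n lam mu T} (wtSVRPP n) (eOp lam) (fOp lam) := by
  refine ⟨fun T hT i h1 h2 => ⟨fun A hA => (hT.exists_linked_of_eColumn h1 h2 hA).1,
    fun A hA => (hT.exists_linked_of_fColumn h1 h2 hA).1⟩, ?_⟩
  refine { e_mem := ?_, f_mem := ?_, e_iff_f := ?_, wt_e := ?_, string := ?_ }
  · exact fun i h1 h2 T hT T' he => (IsSVRPP.exists_linked_of_eOp hT h1 h2 he).1
  · exact fun i h1 h2 T hT T' hf => (IsSVRPP.exists_linked_of_fOp hT h1 h2 hf).1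
  · intro i h1 h2 T hT T' hT'
    constructor
    · intro he
      obtain ⟨-, A, B, U, hl⟩ := IsSVRPP.exists_linked_of_eOp hT h1 h2 he
      exact hl.fOp_eq
    · intro hf
      obtain ⟨-, A, B, U, hl⟩ := IsSVRPP.exists_linked_of_fOp hT' h1 h2 hf
      exact hl.eOp_eq
  · intro i h1 h2 T hT T' hT' he
    obtain ⟨-, A, B, U, hl⟩ := IsSVRPP.exists_linked_of_eOp hT h1 h2 he
    exact hl.wt_eq hT hT' _ _ rfl rfl
  · intro i h1 h2 T hT
    refine ⟨_, _,
      isStringLength_of_drop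
        (fun T => minusCount (reduceWord (signature (lam.rowLen 0) i T)))
        (fun T _ => eOp_eq_none_iff) (fun T hT T' he => ?_) hT,
      isStringLength_of_drop
        (fun T => plusCount (reduceWord (signature (lam.rowLen 0) i T)))
        (fun T _ => fOp_eq_none_iff) (fun T hT T' hf => ?_) hT,
      IsSVRPP.count_sub_eq hT i⟩
    · obtain ⟨hT', A, B, U, hl⟩ := IsSVRPP.exists_linked_of_eOp hT h1 h2 he
      exact ⟨hT', hl.minusCount_eq⟩
    · obtain ⟨hT', A, B, U, hl⟩ := IsSVRPP.exists_linked_of_fOp hT h1 h2 hf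
      exact ⟨hT', hl.plusCount_eq⟩
end
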